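/- (Homogeneous radial Strichartz estimate for the wave equation.) Let n ≥ 2 and let f, g be spherically symmetric Schwartz functions on ℝⁿ with values in ℂ. Define the free wave u(t,x) = ∫_{ℝⁿ} e^{2πi x·ξ} ( cos(2π t |ξ|) f̂(ξ) + (sin(2π t |ξ|)/(2π|ξ|)) ĝ(ξ) ) dξ for t > 0, x ∈ ℝⁿ. Let (q, r) be a radially wave-admissible pair and let s be determined by the scaling condition 1/q + n/r = n/2 − s. Then there is a constant C = C(n, q, r), independent of f and g, such that ‖ t ↦ ‖u(t,·)‖_{L^r(ℝⁿ)} ‖_{L^q((0,∞))} ≤ C ( ‖ ξ ↦ |ξ|^s f̂(ξ) ‖_{L²(ℝⁿ)} + ‖ ξ ↦ |ξ|^{s−1} ĝ(ξ) ‖_{L²(ℝⁿ)} ), whenever the right-hand side is finite. -/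

import Mathlib

open MeasureTheory ENNReal Real
open scoped FourierTransform RealInnerProductSpace

/-- The mixed norm `‖G‖_{L^q((0,∞))}` of an `ℝ≥0∞`-valued function `G` on `ℝ`,
with the usual modification `essSup` when `q = ∞`. -/
noncomputable def timeNorm (q : ℝ≥0∞) (G : ℝ → ℝ≥0∞) : ℝ≥0∞ :=
  if q = ∞ then essSup G (volume.restrict (Set.Ioi (0 : ℝ)))
  else (∫⁻ t in Set.Ioi (0 : ℝ), G t ^ q.toReal) ^ (1 / q.toReal)

/-- A pair `(q, r)` with `2 ≤ q, r ≤ ∞` is radially wave-admissible in dimension `n` if either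
`(q, r) ≠ (∞, ∞)` and `1/q + (n-1)/r < (n-1)/2`, or `(q, r) = (∞, 2)`. -/
def RadWaveAdmissible (n : ℕ) (q r : ℝ≥0∞) : Prop :=
  2 ≤ q ∧ 2 ≤ r ∧
    ((¬(q = ∞ ∧ r = ∞) ∧ 1 / q + ((n : ℝ≥0∞) - 1) / r < ((n : ℝ≥0∞) - 1) / 2)
      ∨ (q = ∞ ∧ r = 2))

/-! The free wave is a sum of two half waves `exp (± it√(-Δ))` of radial data, and each of these
is cut into dyadic frequency pieces, which rescale to unit frequency.

A `T T*` argument with Gaussian cut-offs in time and space bounds the energy of a unit-frequency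
wave with weight `(1 + ‖x‖) ^ (-β)` in `L¹` of time for `β > 1`; interpolation with conservation
of energy puts its square root in `L^q` of time for `β > 2 / q`. For a radial wave of unit
frequency the bound `|u x|² (1 + ‖x‖) ^ (n - 1 - β) ≲` (weighted energy) holds pointwise, so the
same square root controls the `L^r` norm in space for `β ≤ (n - 1) (1 - 2 / r)`. Strict
admissibility is exactly the room needed to choose `β`. Away from the endpoints the pieces are
summed by Hölder's inequality between two neighbouring exponents, in space if `r < ∞` and in time
if `r = ∞`, which gains geometric decay in the separation of the frequencies.

The pair `(2, ∞)` leaves no room to vary the exponent in time. There one tests against a radial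
`g`: `∫ u(t, y) g(y) dy = ∫ u(t + y₁, 0) g(y) dy`, so `‖u(t, ·)‖_∞` is bounded by the maximal
function in time of the trace `τ ↦ u(τ, 0)`. The latter is a one-dimensional Fourier transform,
and the maximal theorem in `L²` together with Plancherel's theorem concludes.
-/

namespace RadialStrichartz

open Module (finrank)

section Gaussian

variable {E : Type*} [NormedAddCommGroup E]

/-- The Gaussian `exp (-A ‖x‖²)`, with values in `ℝ≥0∞` so that it can serve as a density. -/
noncomputable def gauss (A : ℝ) (x : E) : ℝ≥0∞ := ENNReal.ofReal (rexp (-A * ‖x‖ ^ 2))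

@[fun_prop]
lemma measurable_gauss [MeasurableSpace E] [OpensMeasurableSpace E] (A : ℝ) :
    Measurable (gauss A : E → ℝ≥0∞) := by
  unfold gauss
  fun_prop

lemma gauss_sub_comm (A : ℝ) (x y : E) : gauss A (x - y) = gauss A (y - x) := by
  rw [gauss, gauss, norm_sub_rev]

lemma gauss_le_one {A : ℝ} (hA : 0 ≤ A) (x : E) : gauss A x ≤ 1 :=
  ENNReal.ofReal_le_one.2 (Real.exp_le_one_iff.2 (by nlinarith [sq_nonneg ‖x‖]))

/-- Halving the exponent absorbs a displacement by `δ`. -/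
lemma ofReal_exp_mul_gauss_le {A δ : ℝ} (hA : 0 ≤ A) {x z : E} (hxz : ‖z - x‖ ≤ δ) :
    ENNReal.ofReal (rexp (-(A * δ ^ 2))) * gauss A x ≤ gauss (A / 2) z := by
  rw [gauss, gauss, ← ENNReal.ofReal_mul (exp_pos _).le, ← Real.exp_add]
  gcongr
  have hz : ‖z‖ ≤ ‖x‖ + δ := by linarith [norm_sub_norm_le z x]
  have hsq : ‖z‖ ^ 2 ≤ 2 * ‖x‖ ^ 2 + 2 * δ ^ 2 := by
    nlinarith [norm_nonneg z, sq_nonneg (‖x‖ - δ)]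
  nlinarith

lemma gauss_sub_le_mul {A : ℝ} (hA : 0 ≤ A) (x y : E) :
    gauss A (x - y) ≤ gauss (A / 2) (‖x‖ - ‖y‖) * gauss (A / 2) (x - y) := by
  rw [gauss, gauss, gauss, ← ENNReal.ofReal_mul (exp_pos _).le, ← Real.exp_add]
  gcongr
  have hnorm : ‖‖x‖ - ‖y‖‖ ^ 2 ≤ ‖x - y‖ ^ 2 := by
    gcongr
    exact abs_norm_sub_norm_le x y
  nlinarith

variable [InnerProductSpace ℝ E] [FiniteDimensional ℝ E] [MeasurableSpace E] [BorelSpace E]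

lemma lintegral_gauss_sub {A : ℝ} (hA : 0 < A) (y : E) :
    ∫⁻ x : E, gauss A (y - x) = ENNReal.ofReal ((π / A) ^ (finrank ℝ E / 2 : ℝ)) := by
  rw [lintegral_sub_left_eq_self (gauss A) y, ← GaussianFourier.integral_rexp_neg_mul_sq_norm hA,
    ofReal_integral_eq_lintegral_ofReal _ (.of_forall fun x => (exp_pos _).le)]
  · rfl
  refine (GaussianFourier.integrable_cexp_neg_mul_sq_norm_add
    (V := E) (b := A) (by simpa) 0 0).norm.congr (.of_forall fun x => ?_)
  simp [Complex.norm_exp, ← Complex.ofReal_pow]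

/-- The Fourier transform of `gauss b` is an approximate identity of mass one. -/
lemma ofReal_mul_lintegral_gauss_dual {b : ℝ} (hb : 0 < b) (y : E) :
    ENNReal.ofReal ((π / b) ^ (finrank ℝ E / 2 : ℝ)) * ∫⁻ x : E, gauss (π ^ 2 / b) (y - x) = 1 := by
  rw [lintegral_gauss_sub (by positivity), ← ENNReal.ofReal_mul (by positivity),
    ← Real.mul_rpow (by positivity) (by positivity),
    show π / b * (π / (π ^ 2 / b)) = 1 by field_simp, Real.one_rpow, ENNReal.ofReal_one]

end Gaussian

section Polar

variable {E : Type*} [NormedAddCommGroup E] [InnerProductSpace ℝ E] [FiniteDimensional ℝ E]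
  [MeasurableSpace E] [BorelSpace E] [Nontrivial E]

lemma lintegral_eq_lintegral_toSphere {f : E → ℝ≥0∞} (hf : Measurable f) :
    ∫⁻ x, f x = ∫⁻ ω, (∫⁻ ρ in Set.Ioi (0 : ℝ),
      ENNReal.ofReal (ρ ^ (finrank ℝ E - 1)) * f (ρ • (ω : E))) ∂(volume : Measure E).toSphere := by
  calc
    ∫⁻ x, f x = ∫⁻ x : ({(0)}ᶜ : Set E), f x.1 ∂((volume : Measure E).comap (↑)) := by
      rw [lintegral_subtype_comap (measurableSet_singleton _).compl f, restrict_compl_singleton]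
    _ = ∫⁻ p, f (p.2.1 • p.1.1) ∂((volume : Measure E).toSphere.prod
        (.volumeIoiPow (finrank ℝ E - 1))) := by
      rw [← (volume : Measure E).measurePreserving_homeomorphUnitSphereProd.lintegral_comp_emb
        (Homeomorph.measurableEmbedding _)]
      refine lintegral_congr fun x => ?_
      have hx : ‖x.1‖ ≠ 0 := norm_ne_zero_iff.2 x.2
      simp [smul_smul, mul_inv_cancel₀ hx]
    _ = _ := by
      rw [lintegral_prod _ (by fun_prop)]
      refine lintegral_congr fun ω => ?_
      rw [Measure.volumeIoiPow,
        lintegral_withDensity_eq_lintegral_mul _ (by fun_prop) (by fun_prop)]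
      exact lintegral_subtype_comap measurableSet_Ioi
        (fun ρ : ℝ => ENNReal.ofReal (ρ ^ (finrank ℝ E - 1)) * f (ρ • (ω : E)))

lemma lintegral_comp_norm_mul_eq {φ : ℝ → ℝ≥0∞} (hφ : Measurable φ) {f : E → ℝ≥0∞}
    (hf : Measurable f) :
    ∫⁻ x : E, φ ‖x‖ * f x = ∫⁻ ρ in Set.Ioi (0 : ℝ), ENNReal.ofReal (ρ ^ (finrank ℝ E - 1)) *
      φ ρ * ∫⁻ ω, f (ρ • (ω : E)) ∂(volume : Measure E).toSphere := by
  rw [lintegral_eq_lintegral_toSphere (by fun_prop), lintegral_lintegral_swap (by fun_prop)]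
  refine setLIntegral_congr_fun measurableSet_Ioi fun ρ (hρ : 0 < ρ) => ?_
  rw [← lintegral_const_mul _ (by fun_prop)]
  refine lintegral_congr fun ω => ?_
  rw [norm_smul, norm_eq_of_mem_sphere, mul_one, Real.norm_of_nonneg hρ.le, mul_assoc]

lemma lintegral_comp_norm_eq {φ : ℝ → ℝ≥0∞} (hφ : Measurable φ) :
    ∫⁻ x : E, φ ‖x‖ = (∫⁻ ρ in Set.Ioi (0 : ℝ), ENNReal.ofReal (ρ ^ (finrank ℝ E - 1)) * φ ρ) *
      (volume : Measure E).toSphere Set.univ := by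
  simpa [← lintegral_mul_const _ (by fun_prop : Measurable fun ρ : ℝ =>
    ENNReal.ofReal (ρ ^ (finrank ℝ E - 1)) * φ ρ)] using
    lintegral_comp_norm_mul_eq (E := E) hφ (f := 1) measurable_const

lemma toSphere_univ_ne_zero : (volume : Measure E).toSphere Set.univ ≠ 0 :=
  Measure.measure_univ_ne_zero.2 (Measure.toSphere_ne_zero _)

/-- Thickening the sphere by `A ^ (-1/2)` compares it with the Gaussian mass of the whole space. -/
lemma ofReal_pow_mul_lintegral_sphere_gauss_le {A : ℝ} (hA : 0 < A) (y : E) {ρ : ℝ} (hρ : 0 < ρ) :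
    ENNReal.ofReal (ρ ^ (finrank ℝ E - 1)) *
      ∫⁻ ω, gauss A (y - ρ • (ω : E)) ∂(volume : Measure E).toSphere ≤
    ENNReal.ofReal (rexp 1 * √A * (2 * π / A) ^ (finrank ℝ E / 2 : ℝ)) := by
  set d := finrank ℝ E - 1
  set δ := (√A)⁻¹ with hδ
  have hδ_pos : 0 < δ := by positivity
  have hAδ : A * δ ^ 2 = 1 := by rw [hδ, inv_pow, Real.sq_sqrt hA.le, mul_inv_cancel₀ hA.ne']
  have ray_le (ω : Metric.sphere (0 : E) 1) :
      ENNReal.ofReal (δ * rexp (-1)) * (ENNReal.ofReal (ρ ^ d) * gauss A (y - ρ • (ω : E))) ≤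
        ∫⁻ τ in Set.Ioi (0 : ℝ), ENNReal.ofReal (τ ^ d) * gauss (A / 2) (y - τ • (ω : E)) :=
    calc _ = ∫⁻ _ in Set.Ioo ρ (ρ + δ), ENNReal.ofReal (ρ ^ d) *
            (ENNReal.ofReal (rexp (-(A * δ ^ 2))) * gauss A (y - ρ • (ω : E))) := by
          rw [setLIntegral_const, Real.volume_Ioo, ENNReal.ofReal_mul hδ_pos.le, hAδ,
            add_sub_cancel_left]
          ring
      _ ≤ ∫⁻ τ in Set.Ioo ρ (ρ + δ), ENNReal.ofReal (τ ^ d) *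
            gauss (A / 2) (y - τ • (ω : E)) := by
          refine setLIntegral_mono' measurableSet_Ioo fun τ hτ => ?_
          gcongr
          · exact hτ.1.le
          refine ofReal_exp_mul_gauss_le hA.le ?_
          rw [show y - τ • (ω : E) - (y - ρ • (ω : E)) = (ρ - τ) • (ω : E) by module, norm_smul,
            norm_eq_of_mem_sphere, mul_one, Real.norm_eq_abs, abs_le]
          constructor <;> linarith [hτ.1, hτ.2]
      _ ≤ _ := lintegral_mono_set fun τ hτ => hρ.trans hτ.1
  have mass_le := lintegral_mono (μ := (volume : Measure E).toSphere) ray_le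
  rw [lintegral_const_mul _ (by fun_prop), lintegral_const_mul _ (by fun_prop),
    ← lintegral_eq_lintegral_toSphere (f := fun x => gauss (A / 2) (y - x)) (by fun_prop),
    lintegral_gauss_sub (by positivity), mul_comm, ← ENNReal.le_div_iff_mul_le
      (.inl (ENNReal.ofReal_pos.2 (by positivity)).ne') (.inl ENNReal.ofReal_ne_top)] at mass_le
  refine mass_le.trans_eq ?_
  rw [← ENNReal.ofReal_div_of_pos (by positivity), hδ, Real.exp_neg,
    show π / (A / 2) = 2 * π / A by field_simp]
  field_simp

lemma lintegral_comp_norm_mul_gauss_le {φ : ℝ → ℝ≥0∞} (hφ : Measurable φ) {A : ℝ} (hA : 0 < A)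
    (y : E) :
    ∫⁻ x : E, φ ‖x‖ * gauss A (y - x) ≤
      ENNReal.ofReal (rexp 1 * √A * (2 * π / A) ^ (finrank ℝ E / 2 : ℝ)) *
        ∫⁻ ρ in Set.Ioi (0 : ℝ), φ ρ := by
  rw [lintegral_comp_norm_mul_eq hφ (by fun_prop), ← lintegral_const_mul _ hφ]
  refine setLIntegral_mono' measurableSet_Ioi fun ρ hρ => ?_
  rw [mul_right_comm]
  gcongr
  exact ofReal_pow_mul_lintegral_sphere_gauss_le hA y hρ

end Polar

section Kernel

lemma mul_le_div_two (a b : ℝ≥0∞) : a * b ≤ (a ^ 2 + b ^ 2) / 2 := by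
  simpa [ENNReal.add_div] using ENNReal.young_inequality a b .two_two

variable {X Ω : Type*} [MeasurableSpace X] [MeasurableSpace Ω]

lemma lintegral_enorm_sq_eq {ν : Measure X} {U : X → ℂ} (hU : MemLp U 2 ν) :
    ∫⁻ x, ‖U x‖ₑ ^ 2 ∂ν = ‖∫ x, U x * starRingEnd ℂ (U x) ∂ν‖ₑ := by
  simp_rw [Complex.mul_conj, Complex.normSq_eq_norm_sq]
  rw [integral_complex_ofReal, ← ofReal_norm, Complex.norm_real,
    Real.norm_of_nonneg (integral_nonneg fun x => by positivity),
    ofReal_integral_eq_lintegral_ofReal (hU.integrable_norm_pow (by norm_num))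
      (.of_forall fun x => by positivity)]
  simp_rw [ENNReal.ofReal_pow (norm_nonneg _), ofReal_norm]

section TTStar

variable {ν : Measure X} {μ : Measure Ω} {Q : X → Ω → ℂ} {H : Ω → ℂ}

lemma memLp_integral_mul [IsFiniteMeasure ν] [SFinite μ] (hQ : Measurable (Function.uncurry Q))
    (hQ_le : ∀ x ω, ‖Q x ω‖ ≤ 1) (hH : Integrable H μ) (hHm : Measurable H) (p : ℝ≥0∞) :
    MemLp (fun x => ∫ ω, Q x ω * H ω ∂μ) p ν := by
  have hmeas : StronglyMeasurable (Function.uncurry fun x ω => Q x ω * H ω) :=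
    (hQ.mul (hHm.comp measurable_snd)).stronglyMeasurable
  refine .of_bound hmeas.integral_prod_right.aestronglyMeasurable (∫ ω, ‖H ω‖ ∂μ)
    (.of_forall fun x => norm_integral_le_of_norm_le hH.norm (.of_forall fun ω => ?_))
  rw [norm_mul]
  exact mul_le_of_le_one_left (norm_nonneg _) (hQ_le _ _)

lemma integral_mul_conj_integral [IsFiniteMeasure ν] [SFinite μ]
    (hQ : Measurable (Function.uncurry Q)) (hQ_le : ∀ x ω, ‖Q x ω‖ ≤ 1) (hH : Integrable H μ) :
    ∫ x, (∫ ω, Q x ω * H ω ∂μ) * starRingEnd ℂ (∫ ω, Q x ω * H ω ∂μ) ∂ν =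
      ∫ p, (∫ x, Q x p.1 * starRingEnd ℂ (Q x p.2) ∂ν) * (H p.1 * starRingEnd ℂ (H p.2))
        ∂(μ.prod μ) := by
  let Φ : X → Ω × Ω → ℂ := fun x p =>
    (Q x p.1 * starRingEnd ℂ (Q x p.2)) * (H p.1 * starRingEnd ℂ (H p.2))
  have hQ_fst : Measurable fun z : X × (Ω × Ω) => Q z.1 z.2.1 :=
    hQ.comp (f := fun z : X × (Ω × Ω) => (z.1, z.2.1)) (by fun_prop)
  have hQ_snd : Measurable fun z : X × (Ω × Ω) => Q z.1 z.2.2 :=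
    hQ.comp (f := fun z : X × (Ω × Ω) => (z.1, z.2.2)) (by fun_prop)
  have hHH : Integrable (fun p : Ω × Ω => H p.1 * starRingEnd ℂ (H p.2)) (μ.prod μ) :=
    hH.mul_prod (g := fun ω => starRingEnd ℂ (H ω))
      ((LinearIsometryEquiv.integrable_comp_iff Complex.conjLIE).2 hH)
  have hΦ : Integrable (Function.uncurry Φ) (ν.prod (μ.prod μ)) := by
    refine Integrable.bdd_mul (c := 1) (hHH.comp_snd ν)
      (hQ_fst.mul (Complex.continuous_conj.measurable.comp hQ_snd)).aestronglyMeasurable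
      (.of_forall fun z => ?_)
    rw [norm_mul, RCLike.norm_conj]
    exact mul_le_one₀ (hQ_le _ _) (norm_nonneg _) (hQ_le _ _)
  calc _ = ∫ x, ∫ p, Φ x p ∂(μ.prod μ) ∂ν := by
        refine integral_congr_ae (.of_forall fun x => ?_)
        simp only [Φ]
        rw [← integral_conj, ← integral_prod_mul]
        refine integral_congr_ae (.of_forall fun p => ?_)
        simp only [map_mul]
        ring
    _ = ∫ p, ∫ x, Φ x p ∂ν ∂(μ.prod μ) := integral_integral_swap hΦ
    _ = _ := by simp only [Φ, integral_mul_const]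

end TTStar

lemma lintegral_mul_mul_le_of_lintegral_le {μ : Measure Ω} [SFinite μ] {B : Ω → Ω → ℝ≥0∞}
    (hB : Measurable (Function.uncurry B)) (hB_symm : ∀ ω ω', B ω ω' = B ω' ω) {K : ℝ≥0∞}
    (hB_le : ∀ ω, ∫⁻ ω', B ω ω' ∂μ ≤ K) {h : Ω → ℝ≥0∞} (hh : Measurable h) :
    ∫⁻ p, B p.1 p.2 * (h p.1 * h p.2) ∂(μ.prod μ) ≤ K * ∫⁻ ω, h ω ^ 2 ∂μ := by
  have hB_row (ω : Ω) : Measurable (B ω) := hB.comp measurable_prodMk_left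
  have hmeas : Measurable fun p : Ω × Ω => h p.1 ^ 2 * B p.1 p.2 := (by fun_prop : Measurable
    fun p : Ω × Ω => h p.1 ^ 2).mul hB
  have half_le : ∫⁻ ω, ∫⁻ ω', h ω ^ 2 * B ω ω' ∂μ ∂μ ≤ K * ∫⁻ ω, h ω ^ 2 ∂μ := by
    rw [mul_comm, ← lintegral_mul_const _ (by fun_prop)]
    refine lintegral_mono fun ω => ?_
    rw [lintegral_const_mul _ (hB_row ω)]
    gcongr
    exact hB_le ω
  calc _ ≤ ∫⁻ p, (h p.1 ^ 2 * B p.1 p.2 + h p.2 ^ 2 * B p.2 p.1) * 2⁻¹ ∂(μ.prod μ) := by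
        refine lintegral_mono fun p => ?_
        rw [hB_symm p.2 p.1, ← add_mul, mul_right_comm, ← div_eq_mul_inv, mul_comm]
        gcongr
        exact mul_le_div_two _ _
    _ = (∫⁻ ω, ∫⁻ ω', h ω ^ 2 * B ω ω' ∂μ ∂μ + ∫⁻ ω, ∫⁻ ω', h ω ^ 2 * B ω ω' ∂μ ∂μ) * 2⁻¹ := by
        rw [lintegral_mul_const' _ _ (by simp), lintegral_add_left hmeas,
          lintegral_prod _ hmeas.aemeasurable,
          lintegral_prod_symm _ (by exact (hmeas.comp measurable_swap).aemeasurable)]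
    _ ≤ (K * ∫⁻ ω, h ω ^ 2 ∂μ + K * ∫⁻ ω, h ω ^ 2 ∂μ) * 2⁻¹ := by gcongr
    _ = _ := by rw [← two_mul, mul_comm, ← mul_assoc, ENNReal.inv_mul_cancel (by simp) (by simp),
        one_mul]

/-- Schur's test for `T T*`, where `T H = ∫ Q(·, ω) H(ω) dμ(ω)` and `κ` is the kernel of `T* T`. -/
lemma lintegral_enorm_sq_le_of_kernel (ν : Measure X) [IsFiniteMeasure ν] (μ : Measure Ω)
    [SFinite μ] {Q : X → Ω → ℂ} (hQ : Measurable (Function.uncurry Q))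
    (hQ_le : ∀ x ω, ‖Q x ω‖ ≤ 1) {H : Ω → ℂ} (hHm : Measurable H) (hH : Integrable H μ)
    {B : Ω → Ω → ℝ≥0∞} (hB : Measurable (Function.uncurry B)) (hB_symm : ∀ ω ω', B ω ω' = B ω' ω)
    (hκ : ∀ ω ω', ‖∫ x, Q x ω * starRingEnd ℂ (Q x ω') ∂ν‖ₑ ≤ B ω ω')
    {K : ℝ≥0∞} (hB_le : ∀ ω, ∫⁻ ω', B ω ω' ∂μ ≤ K) :
    ∫⁻ x, ‖∫ ω, Q x ω * H ω ∂μ‖ₑ ^ 2 ∂ν ≤ K * ∫⁻ ω, ‖H ω‖ₑ ^ 2 ∂μ := by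
  rw [lintegral_enorm_sq_eq (memLp_integral_mul hQ hQ_le hH hHm 2),
    integral_mul_conj_integral hQ hQ_le hH]
  refine (enorm_integral_le_lintegral_enorm _).trans
    ((lintegral_mono fun p => ?_).trans
      (lintegral_mul_mul_le_of_lintegral_le hB hB_symm hB_le hHm.enorm))
  rw [enorm_mul, enorm_mul, RCLike.enorm_conj]
  gcongr
  exact hκ _ _

end Kernel

section Phase

variable {E : Type*} [NormedAddCommGroup E] [InnerProductSpace ℝ E]

/-- The character `exp (2πi ⟪x, w⟫)`. -/
noncomputable def phase (x w : E) : ℂ := Complex.exp (((2 * π * ⟪x, w⟫ : ℝ) : ℂ) * Complex.I)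

@[simp] lemma norm_phase (x w : E) : ‖phase x w‖ = 1 := Complex.norm_exp_ofReal_mul_I _

lemma phase_mul_conj (x v w : E) : phase x v * starRingEnd ℂ (phase x w) = phase x (v - w) := by
  simp only [phase, ← Complex.exp_conj, ← Complex.exp_add, map_mul, Complex.conj_ofReal,
    Complex.conj_I, inner_sub_right]
  push_cast
  ring_nf

lemma phase_add_left (x z w : E) : phase (x + z) w = phase x w * phase z w := by
  simp only [phase, ← Complex.exp_add, inner_add_left]
  push_cast
  ring_nf

lemma phase_mul_conj_phase (t : ℝ) (x ξ η : E) :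
    phase x ξ * phase t ‖ξ‖ * starRingEnd ℂ (phase x η * phase t ‖η‖) =
      phase t (‖ξ‖ - ‖η‖) * phase x (ξ - η) := by
  rw [map_mul, ← phase_mul_conj, ← phase_mul_conj]
  ring

lemma measurable_uncurry_phase [SecondCountableTopology E] [MeasurableSpace E]
    [OpensMeasurableSpace E] : Measurable (Function.uncurry (phase : E → E → ℂ)) := by
  unfold phase Function.uncurry
  fun_prop

end Phase

section GaussMeasure

variable {E : Type*} [NormedAddCommGroup E] [MeasurableSpace E] {b : ℝ}

/-- The measure with density `gauss b`, used to truncate Lebesgue measure to a finite measure whose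
Fourier transform is explicit and nonnegative. -/
noncomputable def gaussMeasure (μ : Measure E) (b : ℝ) : Measure E := μ.withDensity (gauss b)

lemma lintegral_gaussMeasure [OpensMeasurableSpace E] (μ : Measure E) (b : ℝ) {F : E → ℝ≥0∞}
    (hF : Measurable F) : ∫⁻ x, F x ∂gaussMeasure μ b = ∫⁻ x, gauss b x * F x ∂μ :=
  lintegral_withDensity_eq_lintegral_mul _ (by fun_prop) hF

lemma lintegral_le_of_gaussMeasure [OpensMeasurableSpace E] {μ : Measure E} {F : E → ℝ≥0∞}
    (hF : Measurable F) {K : ℝ≥0∞} (hK : ∀ b : ℝ, 0 < b → ∫⁻ x, F x ∂gaussMeasure μ b ≤ K) :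
    ∫⁻ x, F x ∂μ ≤ K := by
  let b : ℕ → ℝ := fun k => 1 / ((k : ℝ) + 1)
  have tendsto_gauss (x : E) : Filter.Tendsto (fun k => gauss (b k) x) Filter.atTop (nhds 1) := by
    have hexp := (Real.continuous_exp.tendsto _).comp
      ((tendsto_one_div_add_atTop_nhds_zero_nat (𝕜 := ℝ)).neg.mul_const (‖x‖ ^ 2))
    simpa [gauss, Function.comp_def, b] using ENNReal.tendsto_ofReal hexp
  have tendsto_mul (x : E) :
      Filter.Tendsto (fun k => gauss (b k) x * F x) Filter.atTop (nhds (F x)) := by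
    simpa using ENNReal.Tendsto.mul_const (b := F x) (tendsto_gauss x) (Or.inl one_ne_zero)
  calc ∫⁻ x, F x ∂μ
      = ∫⁻ x, Filter.liminf (fun k => gauss (b k) x * F x) Filter.atTop ∂μ :=
        lintegral_congr fun x => (tendsto_mul x).liminf_eq.symm
    _ ≤ Filter.liminf (fun k => ∫⁻ x, gauss (b k) x * F x ∂μ) Filter.atTop :=
        lintegral_liminf_le fun k => by fun_prop
    _ ≤ Filter.liminf (fun _ : ℕ => K) Filter.atTop := by
        refine Filter.liminf_le_liminf (.of_forall fun k => ?_)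
        rw [← lintegral_gaussMeasure μ _ hF]
        exact hK _ (by positivity)
    _ = K := by simp

variable [InnerProductSpace ℝ E] [FiniteDimensional ℝ E] [BorelSpace E]

lemma isFiniteMeasure_gaussMeasure (hb : 0 < b) :
    IsFiniteMeasure (gaussMeasure (volume : Measure E) b) := by
  refine isFiniteMeasure_withDensity ?_
  simpa [gauss] using (lintegral_gauss_sub hb (0 : E)).trans_ne ofReal_ne_top

lemma integral_phase_gaussMeasure (hb : 0 < b) (w : E) :
    ∫ x, phase x w ∂gaussMeasure volume b =
      (((π / b) ^ (finrank ℝ E / 2 : ℝ) * rexp (-(π ^ 2 / b) * ‖w‖ ^ 2) : ℝ) : ℂ) := by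
  calc ∫ x, phase x w ∂gaussMeasure volume b
      = ∫ x, Complex.exp (-(b : ℂ) * ‖x‖ ^ 2 + (2 * π * Complex.I) * ⟪w, x⟫) := by
        rw [gaussMeasure, integral_withDensity_eq_integral_toReal_smul (measurable_gauss b)
          (.of_forall fun x => ofReal_lt_top)]
        refine integral_congr_ae (.of_forall fun x => ?_)
        simp only [gauss]
        rw [toReal_ofReal (exp_pos _).le, phase, Complex.real_smul, Complex.ofReal_exp,
          ← Complex.exp_add, real_inner_comm]
        push_cast
        ring_nf
    _ = _ := by
        rw [GaussianFourier.integral_cexp_neg_mul_sq_norm_add (by simpa), Complex.ofReal_mul,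
          Complex.ofReal_cpow (by positivity), Complex.ofReal_exp]
        push_cast
        congr 2
        rw [mul_pow, Complex.I_sq]
        field_simp
        ring

lemma enorm_integral_phase_gaussMeasure (hb : 0 < b) (w : E) :
    ‖∫ x, phase x w ∂gaussMeasure volume b‖ₑ =
      ENNReal.ofReal ((π / b) ^ (finrank ℝ E / 2 : ℝ)) * gauss (π ^ 2 / b) w := by
  rw [integral_phase_gaussMeasure hb, ← ofReal_norm, Complex.norm_real,
    norm_of_nonneg (by positivity), ENNReal.ofReal_mul (by positivity), gauss]

end GaussMeasure

section Wave

variable {E : Type*} [NormedAddCommGroup E] [InnerProductSpace ℝ E] [FiniteDimensional ℝ E]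
  [MeasurableSpace E] [BorelSpace E]

/-- The half-wave evolution `exp (it√(-Δ))` applied to the function with Fourier transform `h`. -/
noncomputable def wave (h : E → ℂ) (t : ℝ) (x : E) : ℂ :=
  ∫ ξ, (phase x ξ * phase t ‖ξ‖) * h ξ

lemma measurable_phase_mul_phase :
    Measurable (Function.uncurry fun (p : ℝ × E) (ξ : E) => phase p.2 ξ * phase p.1 ‖ξ‖) :=
  (measurable_uncurry_phase.comp
    (f := fun z : (ℝ × E) × E => (z.1.2, z.2)) (by fun_prop)).mul
  (measurable_uncurry_phase.comp (f := fun z : (ℝ × E) × E => (z.1.1, ‖z.2‖)) (by fun_prop))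

lemma measurable_wave {h : E → ℂ} (hm : Measurable h) :
    Measurable (Function.uncurry (wave h)) :=
  (measurable_phase_mul_phase.mul
    (hm.comp measurable_snd)).stronglyMeasurable.integral_prod_right.measurable

lemma measurable_wave_right {h : E → ℂ} (hm : Measurable h) (t : ℝ) : Measurable (wave h t) :=
  (measurable_wave hm).comp (g := Function.uncurry (wave h)) (f := fun x => (t, x)) (by fun_prop)

lemma integrable_phase_mul {h : E → ℂ} (hi : Integrable h) (t : ℝ) (x : E) :
    Integrable fun ξ => (phase x ξ * phase t ‖ξ‖) * h ξ := by
  have hphase : Measurable fun ξ : E => phase x ξ * phase t ‖ξ‖ :=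
    measurable_phase_mul_phase.comp (f := fun ξ => ((t, x), ξ)) (by fun_prop)
  exact hi.bdd_mul (c := 1) hphase.aestronglyMeasurable (.of_forall fun ξ => by simp)

lemma lintegral_wave_sq_le {h : E → ℂ} (hm : Measurable h) (hi : Integrable h) (t : ℝ) :
    ∫⁻ x, ‖wave h t x‖ₑ ^ 2 ≤ ∫⁻ ξ, ‖h ξ‖ₑ ^ 2 := by
  refine lintegral_le_of_gaussMeasure
    ((measurable_wave_right hm t).enorm.pow_const 2) fun b hb => ?_
  have := isFiniteMeasure_gaussMeasure (E := E) hb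
  refine (lintegral_enorm_sq_le_of_kernel (gaussMeasure volume b) volume (K := 1)
    (Q := fun x ξ => phase x ξ * phase t ‖ξ‖)
    (B := fun ξ η => ENNReal.ofReal ((π / b) ^ (finrank ℝ E / 2 : ℝ)) * gauss (π ^ 2 / b) (ξ - η))
    (measurable_phase_mul_phase.comp (f := fun z : E × E => ((t, z.1), z.2)) (by fun_prop))
    (by simp) hm hi (by unfold Function.uncurry; fun_prop)
    (fun ξ η => by rw [gauss_sub_comm]) (fun ξ η => ?_) fun ξ => ?_).trans_eq (one_mul _)
  · simp_rw [phase_mul_conj_phase]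
    rw [integral_const_mul, enorm_mul, enorm_integral_phase_gaussMeasure hb,
      ← ofReal_norm (phase t _), norm_phase, ENNReal.ofReal_one, one_mul]
  · rw [lintegral_const_mul _ (by fun_prop), ofReal_mul_lintegral_gauss_dual hb]

section LocalSmoothing

variable [Nontrivial E]

/-- The kernel of `T* T` for the evolution truncated by `gauss c` in time and `gauss b` in space. -/
noncomputable def smoothingKernel (c b : ℝ) (ξ η : E) : ℝ≥0∞ :=
  ENNReal.ofReal ((π / c) ^ (1 / 2 : ℝ)) * gauss (π ^ 2 / c) (‖ξ‖ - ‖η‖) *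
    (ENNReal.ofReal ((π / b) ^ (finrank ℝ E / 2 : ℝ)) * gauss (π ^ 2 / b) (ξ - η))

lemma lintegral_smoothingKernel_le {c b : ℝ} (hc : 0 < c) (hb : 0 < b) (ξ : E) :
    ∫⁻ η, smoothingKernel c b ξ η ≤
      ENNReal.ofReal (rexp 1 * π * 2 ^ (finrank ℝ E / 2 : ℝ) / √b) := by
  set d : ℝ := finrank ℝ E / 2
  let φ : ℝ → ℝ≥0∞ := fun ρ =>
    ENNReal.ofReal ((π / c) ^ (1 / 2 : ℝ)) * gauss (π ^ 2 / c) (‖ξ‖ - ρ)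
  have time_mass : ∫⁻ ρ in Set.Ioi (0 : ℝ), φ ρ ≤ 1 := by
    refine (setLIntegral_le_lintegral _ _).trans ?_
    rw [lintegral_const_mul _ (by fun_prop)]
    simpa using (ofReal_mul_lintegral_gauss_dual hc ‖ξ‖).le
  have hbπ : (π / b) ^ d * (b / π) ^ d = 1 := by
    rw [← Real.mul_rpow (by positivity) (by positivity),
      show π / b * (b / π) = 1 by field_simp, Real.one_rpow]
  calc ∫⁻ η, smoothingKernel c b ξ η
      = ENNReal.ofReal ((π / b) ^ d) * ∫⁻ η, φ ‖η‖ * gauss (π ^ 2 / b) (ξ - η) := by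
        rw [← lintegral_const_mul _ (by fun_prop)]
        refine lintegral_congr fun η => ?_
        simp only [smoothingKernel, φ]
        ring
    _ ≤ ENNReal.ofReal ((π / b) ^ d) *
        (ENNReal.ofReal (rexp 1 * √(π ^ 2 / b) * (2 * π / (π ^ 2 / b)) ^ d) * 1) := by
        gcongr
        exact (lintegral_comp_norm_mul_gauss_le (by fun_prop) (by positivity) ξ).trans (by gcongr)
    _ = ENNReal.ofReal ((rexp 1 * π * 2 ^ d / √b) * ((π / b) ^ d * (b / π) ^ d)) := by
        rw [mul_one, ← ENNReal.ofReal_mul (by positivity),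
          show 2 * π / (π ^ 2 / b) = 2 * (b / π) by field_simp,
          Real.mul_rpow (by norm_num) (by positivity), Real.sqrt_div (by positivity),
          Real.sqrt_sq pi_pos.le]
        ring_nf
    _ = _ := by rw [hbπ, mul_one]

lemma lintegral_gauss_mul_wave_sq_le {h : E → ℂ} (hm : Measurable h) (hi : Integrable h) {b : ℝ}
    (hb : 0 < b) :
    ∫⁻ t : ℝ, ∫⁻ x, gauss b x * ‖wave h t x‖ₑ ^ 2 ≤
      ENNReal.ofReal (rexp 1 * π * 2 ^ (finrank ℝ E / 2 : ℝ) / √b) * ∫⁻ ξ, ‖h ξ‖ₑ ^ 2 := by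
  have hwave : Measurable fun p : ℝ × E => ‖wave h p.1 p.2‖ₑ ^ 2 :=
    (measurable_wave hm).enorm.pow_const 2
  have := isFiniteMeasure_gaussMeasure (E := E) hb
  have hspace (t : ℝ) : ∫⁻ x, gauss b x * ‖wave h t x‖ₑ ^ 2 =
      ∫⁻ x, ‖wave h t x‖ₑ ^ 2 ∂gaussMeasure volume b :=
    (lintegral_gaussMeasure volume b ((measurable_wave_right hm t).enorm.pow_const 2)).symm
  simp_rw [hspace]
  have henergy : Measurable fun t : ℝ => ∫⁻ x, ‖wave h t x‖ₑ ^ 2 ∂gaussMeasure volume b :=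
    hwave.lintegral_prod_right'
  refine lintegral_le_of_gaussMeasure henergy fun c hc => ?_
  have := isFiniteMeasure_gaussMeasure (E := ℝ) hc
  rw [← lintegral_prod (fun p : ℝ × E => ‖wave h p.1 p.2‖ₑ ^ 2) hwave.aemeasurable]
  refine lintegral_enorm_sq_le_of_kernel ((gaussMeasure volume c).prod (gaussMeasure volume b))
    volume (H := h) (B := smoothingKernel c b)
    (Q := fun (p : ℝ × E) ξ => phase p.2 ξ * phase p.1 ‖ξ‖) measurable_phase_mul_phase (by simp)
    hm hi (by unfold smoothingKernel Function.uncurry; fun_prop)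
    (fun ξ η => by rw [smoothingKernel, gauss_sub_comm, gauss_sub_comm _ ξ, smoothingKernel])
    (fun ξ η => ?_) (lintegral_smoothingKernel_le hc hb)
  simp_rw [phase_mul_conj_phase]
  rw [integral_prod_mul (fun t : ℝ => phase t (‖ξ‖ - ‖η‖)) (fun x : E => phase x (ξ - η)),
    enorm_mul, enorm_integral_phase_gaussMeasure hb, enorm_integral_phase_gaussMeasure hc,
    smoothingKernel, Module.finrank_self, Nat.cast_one]

end LocalSmoothing

end Wave

section Weights

/-- The power weight `(1 + ρ) ^ a`, meant for `0 ≤ ρ`. -/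
noncomputable def wt (a ρ : ℝ) : ℝ≥0∞ := ENNReal.ofReal ((1 + ρ) ^ a)

@[fun_prop]
lemma measurable_wt (a : ℝ) : Measurable (wt a) := by
  unfold wt
  fun_prop

lemma wt_mul (a b : ℝ) {ρ : ℝ} (hρ : 0 ≤ ρ) : wt a ρ * wt b ρ = wt (a + b) ρ := by
  rw [wt, wt, wt, ← ENNReal.ofReal_mul (by positivity), Real.rpow_add (by positivity)]

lemma wt_le_wt {a b : ℝ} (hab : a ≤ b) {ρ : ℝ} (hρ : 0 ≤ ρ) : wt a ρ ≤ wt b ρ :=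
  ENNReal.ofReal_le_ofReal (Real.rpow_le_rpow_of_exponent_le (by linarith) hab)

lemma wt_zero (ρ : ℝ) : wt 0 ρ = 1 := by simp [wt]

lemma wt_rpow (a : ℝ) {p ρ : ℝ} (hp : 0 ≤ p) (hρ : 0 ≤ ρ) : wt a ρ ^ p = wt (a * p) ρ := by
  rw [wt, wt, ENNReal.ofReal_rpow_of_nonneg (by positivity) hp, ← Real.rpow_mul (by positivity)]

lemma wt_neg_le_tsum_gauss {γ : ℝ} (hγ : 0 ≤ γ) {E : Type*} [NormedAddCommGroup E] (x : E) :
    wt (-γ) ‖x‖ ≤ ∑' m : ℕ, ENNReal.ofReal (rexp 4 * 2 ^ (-(m * γ))) *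
      gauss (((2 : ℝ) ^ m)⁻¹ ^ 2) x := by
  obtain ⟨m, hm_le, hm_lt⟩ := exists_nat_pow_near (x := 1 + ‖x‖) (y := (2 : ℝ))
    (by linarith [norm_nonneg x]) (by norm_num)
  refine le_trans ?_ (ENNReal.le_tsum m)
  rw [gauss, ← ENNReal.ofReal_mul (by positivity)]
  refine ENNReal.ofReal_le_ofReal ?_
  have hwt : (1 + ‖x‖) ^ (-γ) ≤ 2 ^ (-(m * γ)) := by
    rw [← mul_neg, Real.rpow_mul (by norm_num), Real.rpow_natCast]
    exact Real.rpow_le_rpow_of_nonpos (by positivity) hm_le (by linarith)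
  have hgauss : 1 ≤ rexp 4 * rexp (-((2 : ℝ) ^ m)⁻¹ ^ 2 * ‖x‖ ^ 2) := by
    rw [← Real.exp_add]
    refine Real.one_le_exp ?_
    have hle : ((2 : ℝ) ^ m)⁻¹ * ‖x‖ ≤ 2 := by
      rw [inv_mul_le_iff₀ (by positivity)]
      rw [pow_succ] at hm_lt
      linarith
    have hnonneg : 0 ≤ ((2 : ℝ) ^ m)⁻¹ * ‖x‖ := by positivity
    nlinarith
  calc (1 + ‖x‖) ^ (-γ) ≤ 2 ^ (-(m * γ)) * 1 := by rwa [mul_one]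
    _ ≤ 2 ^ (-(m * γ)) * (rexp 4 * rexp (-((2 : ℝ) ^ m)⁻¹ ^ 2 * ‖x‖ ^ 2)) := by gcongr
    _ = _ := by ring

end Weights

section WeightedSmoothing

lemma tsum_ofReal_mul_geometric_ne_top {M : ℝ} (hM : 0 ≤ M) {γ : ℝ} (hγ : 1 < γ) :
    ∑' m : ℕ, ENNReal.ofReal (2 ^ (-(m * γ)) * (M * 2 ^ m)) ≠ ⊤ := by
  have hterm (m : ℕ) : 2 ^ (-(m * γ)) * (M * 2 ^ m) = M * ((2 : ℝ) ^ (1 - γ)) ^ m := by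
    rw [← Real.rpow_natCast (2 ^ (1 - γ)), ← Real.rpow_mul (by norm_num),
      show (1 - γ) * m = -(m * γ) + m by ring, Real.rpow_add (by norm_num), Real.rpow_natCast]
    ring
  simp_rw [hterm]
  rw [← ENNReal.ofReal_tsum_of_nonneg (fun m => by positivity)
    ((summable_geometric_of_lt_one (by positivity)
      (Real.rpow_lt_one_of_one_lt_of_neg (by norm_num) (by linarith))).mul_left _)]
  exact ofReal_ne_top

variable (E : Type*) [NormedAddCommGroup E] [InnerProductSpace ℝ E] [FiniteDimensional ℝ E]
  [MeasurableSpace E] [BorelSpace E] [Nontrivial E]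

lemma exists_lintegral_wt_mul_wave_sq_le {γ : ℝ} (hγ : 1 < γ) :
    ∃ K : ℝ≥0∞, K ≠ ⊤ ∧ ∀ h : E → ℂ, Measurable h → Integrable h →
      ∫⁻ t : ℝ, ∫⁻ x, wt (-γ) ‖x‖ * ‖wave h t x‖ₑ ^ 2 ≤ K * ∫⁻ ξ, ‖h ξ‖ₑ ^ 2 := by
  set M : ℝ := rexp 1 * π * 2 ^ (finrank ℝ E / 2 : ℝ)
  let c : ℕ → ℝ≥0∞ := fun m => ENNReal.ofReal (rexp 4 * 2 ^ (-(m * γ)))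
  refine ⟨∑' m, c m * ENNReal.ofReal (M * 2 ^ m), ?_, fun h hm hi => ?_⟩
  · convert tsum_ofReal_mul_geometric_ne_top (M := rexp 4 * M) (by positivity) hγ using 4 with m
    rw [← ENNReal.ofReal_mul (by positivity)]
    ring_nf
  have hwave : Measurable fun p : ℝ × E => ‖wave h p.1 p.2‖ₑ ^ 2 :=
    (measurable_wave hm).enorm.pow_const 2
  have hc (m : ℕ) : c m ≠ ⊤ := ofReal_ne_top
  let G : ℕ → ℝ × E → ℝ≥0∞ := fun m p => gauss (((2 : ℝ) ^ m)⁻¹ ^ 2) p.2 * ‖wave h p.1 p.2‖ₑ ^ 2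
  have hG (m : ℕ) : Measurable (G m) := by fun_prop
  calc ∫⁻ t : ℝ, ∫⁻ x, wt (-γ) ‖x‖ * ‖wave h t x‖ₑ ^ 2
      ≤ ∫⁻ t : ℝ, ∫⁻ x, ∑' m, c m * G m (t, x) := by
        gcongr with t x
        simp_rw [G, ← mul_assoc]
        rw [ENNReal.tsum_mul_right]
        gcongr
        exact wt_neg_le_tsum_gauss (by linarith) x
    _ = ∑' m, c m * ∫⁻ t : ℝ, ∫⁻ x, G m (t, x) := by
        simp_rw [← lintegral_const_mul' _ _ (hc _)]
        rw [← lintegral_tsum fun m => ((hG m).const_mul (c m)).lintegral_prod_right'.aemeasurable]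
        exact lintegral_congr fun t => lintegral_tsum fun m =>
          (((hG m).const_mul (c m)).comp measurable_prodMk_left).aemeasurable
    _ ≤ ∑' m, c m * (ENNReal.ofReal (M * 2 ^ m) * ∫⁻ ξ, ‖h ξ‖ₑ ^ 2) := by
        gcongr with m
        have smoothing := lintegral_gauss_mul_wave_sq_le hm hi (b := ((2 : ℝ) ^ m)⁻¹ ^ 2)
          (by positivity)
        rwa [Real.sqrt_sq (by positivity), div_inv_eq_mul] at smoothing
    _ = _ := by simp_rw [← mul_assoc, ENNReal.tsum_mul_right]

end WeightedSmoothing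

section Radial

variable {E F : Type*} [NormedAddCommGroup E]

/-- A function is radial if its values depend only on the norm of the argument. -/
def IsRadial (h : E → F) : Prop := ∀ x y, ‖x‖ = ‖y‖ → h x = h y

variable [InnerProductSpace ℝ E]

lemma IsRadial.eq_norm_smul {h : E → F} (hr : IsRadial h) {e : E} (he : ‖e‖ = 1) (x : E) :
    h x = h (‖x‖ • e) :=
  hr _ _ (by simp [norm_smul, he])

lemma exists_linearIsometryEquiv_apply_eq [FiniteDimensional ℝ E] {x y : E} (hxy : ‖x‖ = ‖y‖) :
    ∃ L : E ≃ₗᵢ[ℝ] E, L x = y :=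
  ⟨_, Submodule.reflection_sub hxy⟩

protected lemma IsRadial.wave [FiniteDimensional ℝ E] [MeasurableSpace E] [BorelSpace E]
    {h : E → ℂ} (hr : IsRadial h) (t : ℝ) : IsRadial (wave h t) := by
  intro x y hxy
  obtain ⟨L, rfl⟩ := exists_linearIsometryEquiv_apply_eq hxy
  unfold RadialStrichartz.wave
  rw [← L.measurePreserving.integral_comp L.toHomeomorph.measurableEmbedding
    (fun ξ => phase (L x) ξ * phase t ‖ξ‖ * h ξ)]
  refine integral_congr_ae (.of_forall fun ξ => ?_)
  simp only [phase, L.inner_map_map, L.norm_map, hr (L ξ) ξ (L.norm_map ξ)]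

end Radial

section RadialGauss

variable (E : Type*) [NormedAddCommGroup E] [InnerProductSpace ℝ E] [FiniteDimensional ℝ E]
  [Nontrivial E]

lemma natCast_finrank_sub_one : ((finrank ℝ E - 1 : ℕ) : ℝ) = (finrank ℝ E : ℝ) - 1 := by
  rw [Nat.cast_sub Module.finrank_pos, Nat.cast_one]

variable [MeasurableSpace E] [BorelSpace E]

lemma exists_lintegral_sphere_gauss_le {A : ℝ} (hA : 0 < A) :
    ∃ K : ℝ≥0∞, K ≠ ⊤ ∧ ∀ (y : E) (ρ : ℝ), 0 < ρ →
      ∫⁻ ω, gauss A (y - ρ • (ω : E)) ∂(volume : Measure E).toSphere ≤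
        K * wt (-(finrank ℝ E - 1 : ℝ)) ρ := by
  set d := finrank ℝ E - 1
  set σ := (volume : Measure E).toSphere
  let C := ENNReal.ofReal (rexp 1 * √A * (2 * π / A) ^ (finrank ℝ E / 2 : ℝ))
  refine ⟨ENNReal.ofReal (2 ^ (d - 1)) * (σ Set.univ + C), by finiteness, fun y ρ hρ => ?_⟩
  set I := ∫⁻ ω, gauss A (y - ρ • (ω : E)) ∂σ
  have hI : I ≤ σ Set.univ :=
    (lintegral_mono fun ω => gauss_le_one hA.le _).trans_eq (by rw [lintegral_const, one_mul])
  have hwt : wt d ρ ≤ ENNReal.ofReal (2 ^ (d - 1)) * (1 + ENNReal.ofReal (ρ ^ d)) := by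
    rw [wt, Real.rpow_natCast, ← ENNReal.ofReal_one, ← ENNReal.ofReal_add zero_le_one
      (by positivity), ← ENNReal.ofReal_mul (by positivity)]
    gcongr
    simpa using add_pow_le zero_le_one hρ.le d
  calc I = wt (-d) ρ * (wt d ρ * I) := by
        rw [← mul_assoc, wt_mul _ _ hρ.le, neg_add_cancel, wt_zero, one_mul]
    _ ≤ wt (-d) ρ * (ENNReal.ofReal (2 ^ (d - 1)) * (1 + ENNReal.ofReal (ρ ^ d)) * I) := by gcongr
    _ = ENNReal.ofReal (2 ^ (d - 1)) * (I + ENNReal.ofReal (ρ ^ d) * I) * wt (-d) ρ := by ring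
    _ ≤ ENNReal.ofReal (2 ^ (d - 1)) * (σ Set.univ + C) * wt (-d) ρ := by
        gcongr
        exact ofReal_pow_mul_lintegral_sphere_gauss_le hA y hρ
    _ = _ := by rw [natCast_finrank_sub_one]

lemma exists_lintegral_comp_norm_mul_gauss_le_wt {A : ℝ} (hA : 0 < A) :
    ∃ K : ℝ≥0∞, K ≠ ⊤ ∧ ∀ φ : ℝ → ℝ≥0∞, Measurable φ → ∀ y : E,
      ∫⁻ x : E, φ ‖x‖ * gauss A (y - x) ≤
        K * ∫⁻ x : E, φ ‖x‖ * wt (-(finrank ℝ E - 1 : ℝ)) ‖x‖ := by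
  obtain ⟨K, hK, hsphere⟩ := exists_lintegral_sphere_gauss_le E hA
  set σ := (volume : Measure E).toSphere
  have hσ : σ Set.univ ≠ 0 := toSphere_univ_ne_zero
  refine ⟨K * (σ Set.univ)⁻¹, by finiteness, fun φ hφ y => ?_⟩
  set W : ℝ → ℝ≥0∞ := wt (-(finrank ℝ E - 1 : ℝ))
  have hW : Measurable W := measurable_wt _
  calc ∫⁻ x : E, φ ‖x‖ * gauss A (y - x)
      = ∫⁻ ρ in Set.Ioi (0 : ℝ), ENNReal.ofReal (ρ ^ (finrank ℝ E - 1)) * φ ρ *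
          ∫⁻ ω, gauss A (y - ρ • (ω : E)) ∂σ := lintegral_comp_norm_mul_eq hφ (by fun_prop)
    _ ≤ ∫⁻ ρ in Set.Ioi (0 : ℝ), ENNReal.ofReal (ρ ^ (finrank ℝ E - 1)) * φ ρ * (K * W ρ) := by
        refine setLIntegral_mono' measurableSet_Ioi fun ρ hρ => ?_
        gcongr
        exact hsphere y ρ hρ
    _ = K * ∫⁻ ρ in Set.Ioi (0 : ℝ), ENNReal.ofReal (ρ ^ (finrank ℝ E - 1)) * (φ ρ * W ρ) := by
        rw [← lintegral_const_mul _ (by fun_prop)]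
        refine lintegral_congr fun ρ => ?_
        ring
    _ = K * (σ Set.univ)⁻¹ * ((∫⁻ ρ in Set.Ioi (0 : ℝ),
          ENNReal.ofReal (ρ ^ (finrank ℝ E - 1)) * (φ ρ * W ρ)) * σ Set.univ) := by
        rw [mul_comm _ (σ Set.univ), mul_assoc K, ← mul_assoc (σ Set.univ)⁻¹,
          ENNReal.inv_mul_cancel hσ (measure_ne_top _ _), one_mul]
    _ = _ := by rw [← lintegral_comp_norm_eq (φ := fun ρ => φ ρ * W ρ) (by fun_prop)]

end RadialGauss

section GaussLift

variable {E : Type*} [NormedAddCommGroup E]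

/-- Multiplication by `exp (π ‖ξ‖²)`, the inverse on the Fourier side of averaging against
`gauss π`. -/
noncomputable def gaussLift (H : E → ℂ) (ξ : E) : ℂ := (rexp (π * ‖ξ‖ ^ 2) : ℂ) * H ξ

/-- Radial integrable Fourier data. -/
structure IsData [MeasureSpace E] (H : E → ℂ) : Prop where
  measurable : Measurable H
  integrable : Integrable H
  radial : IsRadial H

/-- Radial integrable Fourier data supported in the ball of radius two. -/
structure IsUnitData [MeasureSpace E] (H : E → ℂ) : Prop extends IsData H where
  support : ∀ ξ, 2 < ‖ξ‖ → H ξ = 0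

namespace IsUnitData

variable [MeasureSpace E] {H : E → ℂ}

lemma norm_gaussLift_le (hH : IsUnitData H) (ξ : E) :
    ‖gaussLift H ξ‖ ≤ rexp (4 * π) * ‖H ξ‖ := by
  rw [gaussLift, norm_mul, Complex.norm_real, norm_of_nonneg (exp_pos _).le]
  by_cases hξ : 2 < ‖ξ‖
  · simp [hH.support ξ hξ]
  · have hsq : ‖ξ‖ ^ 2 ≤ 2 ^ 2 := pow_le_pow_left₀ (norm_nonneg _) (not_lt.1 hξ) 2
    have hexp : π * ‖ξ‖ ^ 2 ≤ 4 * π := by nlinarith [pi_pos]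
    exact mul_le_mul_of_nonneg_right (exp_le_exp.2 hexp) (norm_nonneg _)

protected lemma gaussLift [OpensMeasurableSpace E] (hH : IsUnitData H) :
    IsUnitData (gaussLift H) where
  measurable := (by fun_prop : Measurable fun ξ : E => (rexp (π * ‖ξ‖ ^ 2) : ℂ)).mul hH.measurable
  integrable := (hH.integrable.norm.const_mul (rexp (4 * π))).mono'
    ((by fun_prop : Measurable fun ξ : E => (rexp (π * ‖ξ‖ ^ 2) : ℂ)).mul
      hH.measurable).aestronglyMeasurable (.of_forall hH.norm_gaussLift_le)
  radial ξ η h := by simp only [RadialStrichartz.gaussLift, h, hH.radial ξ η h]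
  support ξ hξ := by rw [RadialStrichartz.gaussLift, hH.support ξ hξ, mul_zero]

lemma lintegral_gaussLift_sq_le (hH : IsUnitData H) :
    ∫⁻ ξ, ‖gaussLift H ξ‖ₑ ^ 2 ≤ ENNReal.ofReal (rexp (4 * π)) ^ 2 * ∫⁻ ξ, ‖H ξ‖ₑ ^ 2 := by
  rw [← lintegral_const_mul _ (hH.measurable.enorm.pow_const 2)]
  refine lintegral_mono fun ξ => ?_
  rw [← mul_pow, ← ofReal_norm, ← ofReal_norm, ← ENNReal.ofReal_mul (exp_pos _).le]
  gcongr
  exact hH.norm_gaussLift_le ξ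

end IsUnitData

end GaussLift

section Pointwise

lemma rpow_lintegral_le {X : Type*} [MeasurableSpace X] (μ : Measure X) {p : ℝ} (hp : 1 ≤ p)
    {f : X → ℝ≥0∞} (hf : AEMeasurable f μ) :
    (∫⁻ x, f x ∂μ) ^ p ≤ μ Set.univ ^ (p - 1) * ∫⁻ x, f x ^ p ∂μ := by
  have hp0 : 0 < p := by linarith
  have jensen := eLpNorm'_le_eLpNorm'_mul_rpow_measure_univ one_pos hp hf.aestronglyMeasurable
  simp only [eLpNorm'_eq_lintegral_enorm, enorm_eq_self, ENNReal.rpow_one, div_one] at jensen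
  calc _ ≤ ((∫⁻ x, f x ^ p ∂μ) ^ (1 / p) * μ Set.univ ^ (1 - 1 / p)) ^ p := by gcongr
    _ = _ := by
      rw [ENNReal.mul_rpow_of_nonneg _ _ hp0.le, ← ENNReal.rpow_mul, ← ENNReal.rpow_mul,
        one_div_mul_cancel hp0.ne', ENNReal.rpow_one, mul_comm, sub_mul, one_mul,
        one_div_mul_cancel hp0.ne']

lemma wt_mul_gauss_sub_le {a c : ℝ} (ha : 0 ≤ a) (hc : 1 ≤ c) {ρ τ : ℝ} (hρ : 0 ≤ ρ)
    (hτ : 0 ≤ τ) :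
    wt a ρ * gauss c (ρ - τ) ≤ ENNReal.ofReal (rexp (a ^ 2)) * wt a τ := by
  rw [wt, wt, gauss, ← ENNReal.ofReal_mul (by positivity), ← ENNReal.ofReal_mul (by positivity),
    Real.norm_eq_abs]
  refine ENNReal.ofReal_le_ofReal ?_
  have base_le : 1 + ρ ≤ (1 + τ) * rexp |ρ - τ| := by
    nlinarith [Real.add_one_le_exp |ρ - τ|, le_abs_self (ρ - τ), abs_nonneg (ρ - τ)]
  have rpow_le : (1 + ρ) ^ a ≤ (1 + τ) ^ a * rexp (a * |ρ - τ|) := by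
    calc (1 + ρ) ^ a ≤ ((1 + τ) * rexp |ρ - τ|) ^ a := by gcongr
      _ = _ := by
        rw [Real.mul_rpow (by positivity) (exp_pos _).le, ← Real.exp_mul, mul_comm a]
  calc _ ≤ (1 + τ) ^ a * rexp (a * |ρ - τ|) * rexp (-c * |ρ - τ| ^ 2) := by gcongr
    _ = rexp (a * |ρ - τ| + -c * |ρ - τ| ^ 2) * (1 + τ) ^ a := by
        rw [Real.exp_add]
        ring
    _ ≤ _ := by
        gcongr
        nlinarith [sq_nonneg (a - |ρ - τ| / 2), sq_nonneg |ρ - τ|, sq_nonneg a]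

variable {E : Type*} [NormedAddCommGroup E] [InnerProductSpace ℝ E] [FiniteDimensional ℝ E]
  [MeasurableSpace E] [BorelSpace E]

lemma gaussMeasure_pi_univ : gaussMeasure (volume : Measure E) π Set.univ = 1 := by
  rw [gaussMeasure, withDensity_apply _ MeasurableSet.univ, Measure.restrict_univ]
  simpa [gauss, pi_ne_zero] using lintegral_gauss_sub pi_pos (0 : E)

lemma wave_eq_integral_wave_gaussLift {H : E → ℂ} (hH : IsUnitData H) (t : ℝ) (x : E) :
    wave H t x = ∫ z, wave (gaussLift H) t (x + z) ∂gaussMeasure volume π := by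
  have := isFiniteMeasure_gaussMeasure (E := E) pi_pos
  unfold wave
  rw [integral_integral_swap]
  · refine integral_congr_ae (.of_forall fun ξ => ?_)
    have hphase (z : E) : phase (x + z) ξ * phase t ‖ξ‖ * gaussLift H ξ =
        phase z ξ * (phase x ξ * phase t ‖ξ‖ * gaussLift H ξ) := by
      rw [phase_add_left]
      ring
    simp_rw [hphase]
    rw [integral_mul_const, integral_phase_gaussMeasure pi_pos, gaussLift, div_self pi_ne_zero,
      Real.one_rpow, one_mul, show -(π ^ 2 / π) * ‖ξ‖ ^ 2 = -(π * ‖ξ‖ ^ 2) by field_simp,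
      Real.exp_neg]
    have hexp : ((rexp (π * ‖ξ‖ ^ 2) : ℝ) : ℂ) ≠ 0 := by exact_mod_cast (exp_pos _).ne'
    push_cast at hexp ⊢
    field_simp
  · have hphase : Measurable fun p : E × E => phase (x + p.1) p.2 * phase t ‖p.2‖ :=
      measurable_phase_mul_phase.comp (f := fun p : E × E => ((t, x + p.1), p.2)) (by fun_prop)
    exact (hH.gaussLift.integrable.comp_snd _).bdd_mul (c := 1) hphase.aestronglyMeasurable
      (.of_forall fun p => by simp)

lemma wave_sq_le_lintegral_mul_gauss {H : E → ℂ} (hH : IsUnitData H) (t : ℝ) (x : E) :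
    ‖wave H t x‖ₑ ^ 2 ≤ ∫⁻ y, ‖wave (gaussLift H) t y‖ₑ ^ 2 * gauss π (x - y) := by
  have hlift : Measurable (wave (gaussLift H) t) := measurable_wave_right hH.gaussLift.measurable t
  calc ‖wave H t x‖ₑ ^ 2
      ≤ (∫⁻ z, ‖wave (gaussLift H) t (x + z)‖ₑ ∂gaussMeasure volume π) ^ (2 : ℝ) := by
        rw [wave_eq_integral_wave_gaussLift hH, ENNReal.rpow_two]
        gcongr
        exact enorm_integral_le_lintegral_enorm _
    _ ≤ ∫⁻ z, ‖wave (gaussLift H) t (x + z)‖ₑ ^ 2 ∂gaussMeasure volume π := by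
        refine (rpow_lintegral_le _ one_le_two (by fun_prop)).trans_eq ?_
        simp only [gaussMeasure_pi_univ, ENNReal.one_rpow, one_mul, ENNReal.rpow_two]
    _ = ∫⁻ z, (fun y => ‖wave (gaussLift H) t y‖ₑ ^ 2 * gauss π (x - y)) (x + z) := by
        rw [lintegral_gaussMeasure _ _ (by fun_prop)]
        refine lintegral_congr fun z => ?_
        simp [gauss, mul_comm]
    _ = _ := lintegral_add_left_eq_self
        (fun y => ‖wave (gaussLift H) t y‖ₑ ^ 2 * gauss π (x - y)) x

variable (E) in
lemma exists_wt_mul_wave_sq_le [Nontrivial E] {β : ℝ} (hβ : β ≤ finrank ℝ E - 1) :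
    ∃ K : ℝ≥0∞, K ≠ ⊤ ∧ ∀ H : E → ℂ, IsUnitData H → ∀ (t : ℝ) (x : E),
      wt (finrank ℝ E - 1 - β) ‖x‖ * ‖wave H t x‖ₑ ^ 2 ≤
        K * ∫⁻ y, wt (-β) ‖y‖ * ‖wave (gaussLift H) t y‖ₑ ^ 2 := by
  obtain ⟨K, hK, hgauss⟩ := exists_lintegral_comp_norm_mul_gauss_le_wt E (half_pos pi_pos)
  set d : ℝ := finrank ℝ E - 1
  let D := ENNReal.ofReal (rexp ((d - β) ^ 2))
  refine ⟨K * D, by finiteness, fun H hH t x => ?_⟩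
  obtain ⟨e, he⟩ := exists_norm_eq E zero_le_one
  have hlift : Measurable (wave (gaussLift H) t) := measurable_wave_right hH.gaussLift.measurable t
  let φ : ℝ → ℝ≥0∞ := fun ρ => ‖wave (gaussLift H) t (ρ • e)‖ₑ ^ 2
  have hφ : Measurable φ := by fun_prop
  have wave_eq (y : E) : ‖wave (gaussLift H) t y‖ₑ ^ 2 = φ ‖y‖ := by
    simp only [φ]
    rw [(hH.gaussLift.radial.wave t).eq_norm_smul he y]
  have wave_sq_le : ‖wave H t x‖ₑ ^ 2 ≤
      K * ∫⁻ y : E, φ ‖y‖ * gauss (π / 2) (‖x‖ - ‖y‖) * wt (-d) ‖y‖ :=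
    calc ‖wave H t x‖ₑ ^ 2 ≤ ∫⁻ y : E, φ ‖y‖ * gauss π (x - y) := by
          simpa only [wave_eq] using wave_sq_le_lintegral_mul_gauss hH t x
      _ ≤ ∫⁻ y : E, φ ‖y‖ * gauss (π / 2) (‖x‖ - ‖y‖) * gauss (π / 2) (x - y) := by
          simp_rw [mul_assoc]
          gcongr with y
          exact gauss_sub_le_mul pi_pos.le x y
      _ ≤ _ := hgauss (fun ρ => φ ρ * gauss (π / 2) (‖x‖ - ρ)) (by fun_prop) x
  calc _ ≤ wt (d - β) ‖x‖ * (K * ∫⁻ y : E, φ ‖y‖ * gauss (π / 2) (‖x‖ - ‖y‖) * wt (-d) ‖y‖) := by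
        gcongr
    _ = K * ∫⁻ y : E, φ ‖y‖ * wt (-d) ‖y‖ * (wt (d - β) ‖x‖ * gauss (π / 2) (‖x‖ - ‖y‖)) := by
        rw [mul_left_comm, ← lintegral_const_mul _ (by fun_prop)]
        congr! 3 with y
        ring
    _ ≤ K * ∫⁻ y : E, φ ‖y‖ * wt (-d) ‖y‖ * (D * wt (d - β) ‖y‖) := by
        refine mul_le_mul_right (lintegral_mono fun y => mul_le_mul_right ?_ _) _
        exact wt_mul_gauss_sub_le (by linarith) (by linarith [pi_gt_three]) (norm_nonneg x)
          (norm_nonneg y)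
    _ = _ := by
        simp_rw [wave_eq, show -β = -d + (d - β) by ring, ← wt_mul _ _ (norm_nonneg _)]
        rw [mul_assoc, ← lintegral_const_mul D (by fun_prop)]
        congr! 3 with y
        ring

end Pointwise

lemma eLpNorm_two_eq {X F : Type*} [MeasurableSpace X] (μ : Measure X) [ENorm F] (H : X → F) :
    eLpNorm H 2 μ = (∫⁻ ξ, ‖H ξ‖ₑ ^ 2 ∂μ) ^ (1 / 2 : ℝ) := by
  rw [eLpNorm_eq_lintegral_rpow_enorm_toReal two_ne_zero ofNat_ne_top]
  simp

lemma eLpNorm_two_sq {X F : Type*} [MeasurableSpace X] (μ : Measure X) [ENorm F] (H : X → F) :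
    eLpNorm H 2 μ ^ 2 = ∫⁻ ξ, ‖H ξ‖ₑ ^ 2 ∂μ := by
  rw [eLpNorm_two_eq, ← ENNReal.rpow_two, ← ENNReal.rpow_mul, one_div,
    inv_mul_cancel₀ two_ne_zero, ENNReal.rpow_one]

lemma two_le_toReal {p : ℝ≥0∞} (hp : 2 ≤ p) (hp_top : p ≠ ⊤) : 2 ≤ p.toReal := by
  simpa using ENNReal.toReal_mono hp_top hp

lemma wt_neg_le_one {β ρ : ℝ} (hβ : 0 ≤ β) (hρ : 0 ≤ ρ) : wt (-β) ρ ≤ 1 :=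
  (wt_le_wt (neg_nonpos.2 hβ) hρ).trans_eq (wt_zero ρ)

section Energy

variable {E : Type*} [NormedAddCommGroup E] [InnerProductSpace ℝ E] [FiniteDimensional ℝ E]

lemma one_le_natCast_finrank [Nontrivial E] : (1 : ℝ) ≤ finrank ℝ E := by
  exact_mod_cast Module.finrank_pos (R := ℝ) (M := E)

variable [MeasurableSpace E] [BorelSpace E]

/-- The local energy of the waves with Fourier data `H` and `gaussLift H`; the second one controls
the first pointwise. -/
noncomputable def energyDensity (H : E → ℂ) (t : ℝ) (y : E) : ℝ≥0∞ :=
  ‖wave H t y‖ₑ ^ 2 + ‖wave (gaussLift H) t y‖ₑ ^ 2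

/-- The energy at time `t` with the weight `(1 + ‖y‖) ^ (-β)`. -/
noncomputable def locEnergy (β : ℝ) (H : E → ℂ) (t : ℝ) : ℝ≥0∞ :=
  ∫⁻ y, wt (-β) ‖y‖ * energyDensity H t y

namespace IsUnitData

variable {H : E → ℂ}

lemma measurable_energyDensity (hH : IsUnitData H) :
    Measurable (Function.uncurry (energyDensity H)) :=
  ((measurable_wave hH.measurable).enorm.pow_const 2).add
    ((measurable_wave hH.gaussLift.measurable).enorm.pow_const 2)

lemma measurable_energyDensity_right (hH : IsUnitData H) (t : ℝ) :
    Measurable (energyDensity H t) :=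
  hH.measurable_energyDensity.comp (f := fun y => (t, y)) (by fun_prop)

lemma measurable_locEnergy (hH : IsUnitData H) (β : ℝ) : Measurable (locEnergy β H) := by
  have hdensity : Measurable fun p : ℝ × E => wt (-β) ‖p.2‖ * energyDensity H p.1 p.2 :=
    Measurable.mul (by fun_prop) hH.measurable_energyDensity
  exact hdensity.lintegral_prod_right'

lemma lintegral_energyDensity_le (hH : IsUnitData H) (t : ℝ) :
    ∫⁻ y, energyDensity H t y ≤
      (1 + ENNReal.ofReal (rexp (4 * π)) ^ 2) * ∫⁻ ξ, ‖H ξ‖ₑ ^ 2 := by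
  have hwave := measurable_wave_right hH.measurable t
  unfold energyDensity
  rw [lintegral_add_left (by fun_prop), add_mul, one_mul]
  exact add_le_add (lintegral_wave_sq_le hH.measurable hH.integrable t)
    ((lintegral_wave_sq_le hH.gaussLift.measurable hH.gaussLift.integrable t).trans
      hH.lintegral_gaussLift_sq_le)

lemma locEnergy_rpow_le (hH : IsUnitData H) (β : ℝ) {p : ℝ} (hp : 1 ≤ p) (t : ℝ) :
    locEnergy β H t ^ p ≤ (∫⁻ y, energyDensity H t y) ^ (p - 1) * locEnergy (β * p) H t := by
  have hdensity := hH.measurable_energyDensity_right t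
  have jensen := rpow_lintegral_le (volume.withDensity (energyDensity H t)) hp
    (f := fun y => wt (-β) ‖y‖) (by fun_prop)
  rw [lintegral_withDensity_eq_lintegral_mul _ hdensity (by fun_prop),
    lintegral_withDensity_eq_lintegral_mul _ hdensity (by fun_prop),
    withDensity_apply _ MeasurableSet.univ, Measure.restrict_univ] at jensen
  simpa only [Pi.mul_apply, mul_comm (energyDensity H t _), wt_rpow _ (zero_le_one.trans hp)
    (norm_nonneg _), neg_mul] using! jensen

end IsUnitData

variable (E) in
lemma exists_lintegral_locEnergy_le [Nontrivial E] {γ : ℝ} (hγ : 1 < γ) :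
    ∃ K : ℝ≥0∞, K ≠ ⊤ ∧ ∀ H : E → ℂ, IsUnitData H →
      ∫⁻ t, locEnergy γ H t ≤ K * ∫⁻ ξ, ‖H ξ‖ₑ ^ 2 := by
  obtain ⟨K, hK, smoothing⟩ := exists_lintegral_wt_mul_wave_sq_le E hγ
  refine ⟨K * (1 + ENNReal.ofReal (rexp (4 * π)) ^ 2), by finiteness, fun H hH => ?_⟩
  have hwt (t : ℝ) : Measurable fun y => wt (-γ) ‖y‖ * ‖wave H t y‖ₑ ^ 2 := by
    have := measurable_wave_right hH.measurable t
    fun_prop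
  have hwt' : Measurable fun p : ℝ × E => wt (-γ) ‖p.2‖ * ‖wave H p.1 p.2‖ₑ ^ 2 :=
    Measurable.mul (by fun_prop) ((measurable_wave hH.measurable).enorm.pow_const 2)
  simp_rw [locEnergy, energyDensity, mul_add, lintegral_add_left (hwt _)]
  rw [lintegral_add_left hwt'.lintegral_prod_right']
  calc _ ≤ K * (∫⁻ ξ, ‖H ξ‖ₑ ^ 2) +
        K * (ENNReal.ofReal (rexp (4 * π)) ^ 2 * ∫⁻ ξ, ‖H ξ‖ₑ ^ 2) := by
        refine add_le_add (smoothing H hH.measurable hH.integrable)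
          ((smoothing _ hH.gaussLift.measurable hH.gaussLift.integrable).trans ?_)
        gcongr
        exact hH.lintegral_gaussLift_sq_le
    _ = _ := by ring

variable (E) in
lemma exists_lintegral_locEnergy_rpow_le [Nontrivial E] {β p : ℝ} (hp : 1 ≤ p) (hβ : 1 < β * p) :
    ∃ K : ℝ≥0∞, K ≠ ⊤ ∧ ∀ H : E → ℂ, IsUnitData H →
      ∫⁻ t, locEnergy β H t ^ p ≤ K * (∫⁻ ξ, ‖H ξ‖ₑ ^ 2) ^ p := by
  obtain ⟨K, hK, smoothing⟩ := exists_lintegral_locEnergy_le E hβ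
  have hp' : 0 ≤ p - 1 := sub_nonneg.2 hp
  set D : ℝ≥0∞ := 1 + ENNReal.ofReal (rexp (4 * π)) ^ 2
  have hD : D ≠ ⊤ := by finiteness
  refine ⟨D ^ (p - 1) * K, by finiteness, fun H hH => ?_⟩
  set S := ∫⁻ ξ, ‖H ξ‖ₑ ^ 2
  calc ∫⁻ t, locEnergy β H t ^ p ≤ ∫⁻ t, (D * S) ^ (p - 1) * locEnergy (β * p) H t := by
        gcongr with t
        refine (hH.locEnergy_rpow_le β hp t).trans ?_
        gcongr
        exact hH.lintegral_energyDensity_le t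
    _ ≤ (D * S) ^ (p - 1) * (K * S) := by
        rw [lintegral_const_mul _ (hH.measurable_locEnergy _)]
        gcongr
        exact smoothing H hH
    _ = D ^ (p - 1) * K * (S ^ (p - 1) * S ^ (1 : ℝ)) := by
        rw [ENNReal.mul_rpow_of_nonneg _ _ hp', ENNReal.rpow_one]
        ring
    _ = _ := by rw [← ENNReal.rpow_add_of_nonneg _ _ hp' zero_le_one, sub_add_cancel]

lemma IsUnitData.eLpNorm_top_locEnergy_le {H : E → ℂ} (hH : IsUnitData H) {β : ℝ} (hβ : 0 ≤ β) :
    eLpNorm (fun t => locEnergy β H t ^ (1 / 2 : ℝ)) ⊤ volume ≤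
      (1 + ENNReal.ofReal (rexp (4 * π)) ^ 2) ^ (1 / 2 : ℝ) * eLpNorm H 2 volume := by
  rw [eLpNorm_exponent_top, eLpNorm_two_eq]
  refine eLpNormEssSup_le_of_ae_enorm_bound (.of_forall fun t => ?_)
  rw [enorm_eq_self, ← ENNReal.mul_rpow_of_nonneg _ _ (by norm_num)]
  gcongr
  exact (lintegral_mono fun y => mul_le_of_le_one_left' (wt_neg_le_one hβ (norm_nonneg y))).trans
    (hH.lintegral_energyDensity_le t)

variable (E) in
lemma exists_eLpNorm_locEnergy_le [Nontrivial E] {β : ℝ} {q : ℝ≥0∞} (hq : 2 ≤ q)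
    (hβ : 2 / q.toReal < β) :
    ∃ K : ℝ≥0∞, K ≠ ⊤ ∧ ∀ H : E → ℂ, IsUnitData H →
      eLpNorm (fun t => locEnergy β H t ^ (1 / 2 : ℝ)) q volume ≤ K * eLpNorm H 2 volume := by
  rcases eq_or_ne q ⊤ with rfl | hq_top
  · exact ⟨_, by finiteness, fun H hH =>
      hH.eLpNorm_top_locEnergy_le (le_trans (by positivity) hβ.le)⟩
  have hq2 := two_le_toReal hq hq_top
  set κ := q.toReal
  have hβκ : 1 < β * (κ / 2) := by
    rw [div_lt_iff₀ (by linarith)] at hβ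
    linarith
  obtain ⟨K, hK, energy_le⟩ := exists_lintegral_locEnergy_rpow_le E (by linarith) hβκ
  refine ⟨K ^ (1 / κ), by finiteness, fun H hH => ?_⟩
  rw [eLpNorm_eq_lintegral_rpow_enorm_toReal (two_pos.trans_le hq).ne' hq_top, eLpNorm_two_eq]
  simp_rw [enorm_eq_self, ← ENNReal.rpow_mul]
  rw [one_div_mul_eq_div 2 κ]
  calc _ ≤ (K * (∫⁻ ξ, ‖H ξ‖ₑ ^ 2) ^ (κ / 2)) ^ (1 / κ) := by
        gcongr
        exact energy_le H hH
    _ = _ := by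
      rw [ENNReal.mul_rpow_of_nonneg _ _ (by positivity), ← ENNReal.rpow_mul,
        show κ / 2 * (1 / κ) = 1 / 2 by field_simp]

variable (E) in
lemma exists_wt_mul_wave_sq_le_locEnergy [Nontrivial E] {β : ℝ} (hβ : β ≤ finrank ℝ E - 1) :
    ∃ K : ℝ≥0∞, K ≠ ⊤ ∧ ∀ H : E → ℂ, IsUnitData H → ∀ (t : ℝ) (x : E),
      wt (finrank ℝ E - 1 - β) ‖x‖ * ‖wave H t x‖ₑ ^ 2 ≤ K * locEnergy β H t := by
  obtain ⟨K, hK, hwave⟩ := exists_wt_mul_wave_sq_le E hβ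
  refine ⟨K, hK, fun H hH t x => (hwave H hH t x).trans ?_⟩
  unfold locEnergy energyDensity
  gcongr with y
  exact le_add_self

variable (E) in
lemma exists_wave_rpow_le [Nontrivial E] {β ρ : ℝ} (hρ : 2 ≤ ρ)
    (hβ : β ≤ (finrank ℝ E - 1) * (1 - 2 / ρ)) :
    ∃ K : ℝ≥0∞, K ≠ ⊤ ∧ ∀ H : E → ℂ, IsUnitData H → ∀ (t : ℝ) (x : E),
      ‖wave H t x‖ₑ ^ ρ ≤
        (K * locEnergy β H t) ^ ((ρ - 2) / 2) * (wt (-β) ‖x‖ * ‖wave H t x‖ₑ ^ 2) := by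
  set d : ℝ := finrank ℝ E - 1
  have hd : 0 ≤ d := sub_nonneg.2 one_le_natCast_finrank
  have hβd : β ≤ d := hβ.trans (mul_le_of_le_one_right hd (sub_le_self 1 (by positivity)))
  obtain ⟨K, hK, hwave⟩ := exists_wt_mul_wave_sq_le_locEnergy E hβd
  refine ⟨K, hK, fun H hH t x => ?_⟩
  set θ := (ρ - 2) / 2 with hθ_def
  have hθ : 0 ≤ θ := by linarith
  have wave_sq_le : ‖wave H t x‖ₑ ^ 2 ≤ wt (-(d - β)) ‖x‖ * (K * locEnergy β H t) :=
    calc _ = wt (-(d - β)) ‖x‖ * (wt (d - β) ‖x‖ * ‖wave H t x‖ₑ ^ 2) := by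
          rw [← mul_assoc, wt_mul _ _ (norm_nonneg _), neg_add_cancel, wt_zero, one_mul]
      _ ≤ _ := mul_le_mul_right (hwave H hH t x) _
  have wt_rpow_le : wt (-(d - β)) ‖x‖ ^ θ ≤ wt (-β) ‖x‖ := by
    rw [wt_rpow _ hθ (norm_nonneg _)]
    refine wt_le_wt ?_ (norm_nonneg _)
    have hβρ := mul_le_mul_of_nonneg_right hβ (show 0 ≤ ρ by linarith)
    rw [mul_assoc, show (1 - 2 / ρ) * ρ = ρ - 2 by field_simp] at hβρ
    rw [hθ_def]
    nlinarith
  calc ‖wave H t x‖ₑ ^ ρ = (‖wave H t x‖ₑ ^ 2) ^ θ * ‖wave H t x‖ₑ ^ 2 := by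
        rw [← ENNReal.rpow_two, ← ENNReal.rpow_mul,
          ← ENNReal.rpow_add_of_nonneg _ _ (by positivity) (by positivity)]
        congr 1
        rw [hθ_def]
        ring
    _ ≤ (wt (-(d - β)) ‖x‖ * (K * locEnergy β H t)) ^ θ * ‖wave H t x‖ₑ ^ 2 := by gcongr
    _ ≤ wt (-β) ‖x‖ * (K * locEnergy β H t) ^ θ * ‖wave H t x‖ₑ ^ 2 := by
        rw [ENNReal.mul_rpow_of_nonneg _ _ hθ]
        gcongr
    _ = _ := by ring

variable (E) in
lemma exists_eLpNorm_wave_le [Nontrivial E] {β : ℝ} {r : ℝ≥0∞} (hr : 2 ≤ r)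
    (hβ : β ≤ (finrank ℝ E - 1) * (1 - 2 / r.toReal)) :
    ∃ K : ℝ≥0∞, K ≠ ⊤ ∧ ∀ H : E → ℂ, IsUnitData H → ∀ t : ℝ,
      eLpNorm (wave H t) r volume ≤ K * locEnergy β H t ^ (1 / 2 : ℝ) := by
  rcases eq_or_ne r ⊤ with rfl | hr_top
  · replace hβ : β ≤ finrank ℝ E - 1 := by simpa using hβ
    obtain ⟨K, hK, hwave⟩ := exists_wt_mul_wave_sq_le_locEnergy E hβ
    refine ⟨K ^ (1 / 2 : ℝ), by finiteness, fun H hH t => ?_⟩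
    rw [eLpNorm_exponent_top, ← ENNReal.mul_rpow_of_nonneg _ _ (by norm_num)]
    refine eLpNormEssSup_le_of_ae_enorm_bound (.of_forall fun x => ?_)
    rw [one_div, ENNReal.le_rpow_inv_iff (by norm_num), ENNReal.rpow_two]
    refine (le_mul_of_one_le_left' ?_).trans (hwave H hH t x)
    exact (wt_zero ‖x‖).symm.trans_le (wt_le_wt (sub_nonneg.2 hβ) (norm_nonneg _))
  have hr2 := two_le_toReal hr hr_top
  obtain ⟨K, hK, hwave⟩ := exists_wave_rpow_le E hr2 hβ
  set ρ := r.toReal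
  set θ : ℝ := (ρ - 2) / 2 with hθ_def
  have hθ : 0 ≤ θ := by linarith
  refine ⟨K ^ (θ / ρ), by finiteness, fun H hH t => ?_⟩
  have hm := measurable_wave_right hH.measurable t
  have lintegral_rpow_le : ∫⁻ x, ‖wave H t x‖ₑ ^ ρ ≤
      (K * locEnergy β H t) ^ θ * locEnergy β H t := by
    refine (lintegral_mono (hwave H hH t)).trans ?_
    rw [lintegral_const_mul _ (by fun_prop)]
    unfold locEnergy energyDensity
    gcongr with y
    exact le_self_add
  rw [eLpNorm_eq_lintegral_rpow_enorm_toReal (two_pos.trans_le hr).ne' hr_top]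
  calc _ ≤ ((K * locEnergy β H t) ^ θ * locEnergy β H t ^ (1 : ℝ)) ^ (1 / ρ) := by
        rw [ENNReal.rpow_one]
        gcongr
    _ = _ := by
      rw [ENNReal.mul_rpow_of_nonneg _ _ hθ, mul_assoc, ← ENNReal.rpow_add_of_nonneg _ _ hθ
        zero_le_one, ENNReal.mul_rpow_of_nonneg _ _ (by positivity), ← ENNReal.rpow_mul,
        ← ENNReal.rpow_mul, mul_one_div, show (θ + 1) * (1 / ρ) = 1 / 2 by rw [hθ_def]; field]

end Energy

section Summation

variable {X : Type*} [MeasurableSpace X] {μ : Measure X}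

lemma eLpNorm_tsum_le {ι : Type*} [Countable ι] {f : ι → X → ℝ≥0∞} (hf : ∀ i, Measurable (f i))
    {p : ℝ≥0∞} (hp : 1 ≤ p) :
    eLpNorm (fun x => ∑' i, f i x) p μ ≤ ∑' i, eLpNorm (f i) p μ := by
  rcases eq_or_ne p ⊤ with rfl | hp_top
  · simp only [eLpNorm_exponent_top, eLpNormEssSup_eq_essSup_enorm, enorm_eq_self]
    refine essSup_le_of_ae_le _ ?_
    filter_upwards [ae_all_iff.2 fun i => ENNReal.ae_le_essSup (μ := μ) (f i)] with x hx
    exact ENNReal.tsum_le_tsum hx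
  have hp0 : p ≠ 0 := (zero_lt_one.trans_le hp).ne'
  have hpos : 0 < p.toReal := toReal_pos hp0 hp_top
  have finset_le (s : Finset ι) :
      ∫⁻ x, (∑ i ∈ s, f i x) ^ p.toReal ∂μ ≤ (∑' i, eLpNorm (f i) p μ) ^ p.toReal := by
    have hsum := (eLpNorm_sum_le (p := p) (μ := μ) (s := s) (f := f)
      (fun i _ => (hf i).aestronglyMeasurable) hp).trans (ENNReal.sum_le_tsum s)
    rw [eLpNorm_eq_lintegral_rpow_enorm_toReal hp0 hp_top, one_div,
      ENNReal.rpow_inv_le_iff hpos] at hsum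
    simpa only [Finset.sum_apply, enorm_eq_self] using hsum
  have tsum_rpow (x : X) :
      ‖∑' i, f i x‖ₑ ^ p.toReal = ⨆ s : Finset ι, (∑ i ∈ s, f i x) ^ p.toReal := by
    rw [enorm_eq_self, ENNReal.tsum_eq_iSup_sum]
    exact (ENNReal.orderIsoRpow p.toReal hpos).map_iSup _
  rw [eLpNorm_eq_lintegral_rpow_enorm_toReal hp0 hp_top, one_div, ENNReal.rpow_inv_le_iff hpos]
  simp only [tsum_rpow]
  rw [lintegral_iSup_directed
    (fun s => ((Finset.measurable_sum s fun i _ => hf i).pow_const _).aemeasurable)]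
  · exact iSup_le finset_le
  · refine Monotone.directed_le fun s t hst x => ?_
    simp only
    gcongr

lemma eLpNorm_sq {f : X → ℝ≥0∞} {p : ℝ≥0∞} :
    eLpNorm (fun x => f x ^ 2) (p / 2) μ = eLpNorm f p μ ^ 2 := by
  have h := eLpNorm_enorm_rpow (μ := μ) (p := p / 2) f (q := 2) two_pos
  rw [ENNReal.ofReal_ofNat, ENNReal.div_mul_cancel two_ne_zero ofNat_ne_top] at h
  simpa [ENNReal.rpow_two] using h

lemma eLpNorm_mul_le {p q r : ℝ≥0∞} (hp : p ≠ 0) (hp_top : p ≠ ⊤) (hq : q ≠ 0) (hq_top : q ≠ ⊤)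
    (hpqr : 1 / r.toReal = 1 / p.toReal + 1 / q.toReal) {f g : X → ℝ≥0∞} (hf : Measurable f)
    (hg : Measurable g) :
    eLpNorm (fun x => f x * g x) r μ ≤ eLpNorm f p μ * eLpNorm g q μ := by
  have hp_pos := one_div_pos.2 (toReal_pos hp hp_top)
  have hq_pos := one_div_pos.2 (toReal_pos hq hq_top)
  have hr_pos : 0 < r.toReal := one_div_pos.1 (hpqr ▸ add_pos hp_pos hq_pos)
  obtain ⟨hr, hr_top⟩ := ENNReal.toReal_pos_iff.1 hr_pos
  rw [eLpNorm_eq_lintegral_rpow_enorm_toReal hr.ne' hr_top.ne,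
    eLpNorm_eq_lintegral_rpow_enorm_toReal hp hp_top,
    eLpNorm_eq_lintegral_rpow_enorm_toReal hq hq_top]
  have hrp : r.toReal < p.toReal :=
    lt_of_one_div_lt_one_div (toReal_pos hp hp_top) (hpqr ▸ lt_add_of_pos_right _ hq_pos)
  exact ENNReal.lintegral_Lp_mul_le_Lq_mul_Lr hr_pos hrp hpqr μ hf.aemeasurable hg.aemeasurable

lemma tsum_sq (f : ℤ → ℝ≥0∞) : (∑' j, f j) ^ 2 = ∑' m, ∑' j, f j * f (j + m) := by
  rw [ENNReal.tsum_comm, sq, ← ENNReal.tsum_mul_right]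
  refine tsum_congr fun j => ?_
  rw [← ENNReal.tsum_mul_left]
  exact ((Equiv.addLeft j).tsum_eq fun k => f j * f k).symm

lemma tsum_mul_add_le (c : ℤ → ℝ≥0∞) (m : ℤ) : ∑' j, c j * c (j + m) ≤ ∑' j, c j ^ 2 := by
  have tsum_shift : ∑' j, c (j + m) ^ 2 = ∑' j, c j ^ 2 :=
    (Equiv.addRight m).tsum_eq fun j => c j ^ 2
  calc ∑' j, c j * c (j + m) ≤ ∑' j, (c j ^ 2 + c (j + m) ^ 2) / 2 :=
        ENNReal.tsum_le_tsum fun j => mul_le_div_two _ _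
    _ = _ := by
        simp_rw [div_eq_mul_inv]
        rw [ENNReal.tsum_mul_right, ENNReal.tsum_add, tsum_shift, ← div_eq_mul_inv, ENNReal.add_div,
          ENNReal.add_halves]

lemma ofReal_two_rpow_mul (a b : ℝ) :
    ENNReal.ofReal (2 ^ a) * ENNReal.ofReal (2 ^ b) = ENNReal.ofReal (2 ^ (a + b)) := by
  rw [← ENNReal.ofReal_mul (by positivity), Real.rpow_add two_pos]

lemma tsum_two_rpow_neg_abs_ne_top {δ : ℝ} (hδ : 0 < δ) :
    ∑' m : ℤ, ENNReal.ofReal (2 ^ (-(δ * |(m : ℝ)|))) ≠ ⊤ := by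
  have geometric : Summable fun k : ℕ => ((2 : ℝ) ^ (-δ)) ^ k :=
    summable_geometric_of_lt_one (by positivity)
      (Real.rpow_lt_one_of_one_lt_of_neg one_lt_two (neg_neg_iff_pos.2 hδ))
  have summable : Summable fun m : ℤ => (2 : ℝ) ^ (-(δ * |(m : ℝ)|)) := by
    refine Summable.of_nat_of_neg ?_ ?_ <;>
    · refine geometric.congr fun k => ?_
      rw [← Real.rpow_natCast, ← Real.rpow_mul zero_le_two]
      simp
  rw [← ENNReal.ofReal_tsum_of_nonneg (fun _ => by positivity) summable]
  exact ofReal_ne_top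

lemma eLpNorm_mul_le_of_two_rpow {p p₀ p₁ : ℝ≥0∞} (h₀ : p₀ ≠ 0) (h₀_top : p₀ ≠ ⊤) (h₁ : p₁ ≠ 0)
    (h₁_top : p₁ ≠ ⊤) (hp : 2 / p.toReal = 1 / p₀.toReal + 1 / p₁.toReal) {δ : ℝ}
    {F : ℤ → X → ℝ≥0∞} {c : ℤ → ℝ≥0∞} (hF : ∀ j, Measurable (F j))
    (hF₀ : ∀ j, eLpNorm (F j) p₀ μ ≤ ENNReal.ofReal (2 ^ (j * δ)) * c j)
    (hF₁ : ∀ j, eLpNorm (F j) p₁ μ ≤ ENNReal.ofReal (2 ^ (-(j * δ))) * c j) (j m : ℤ) :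
    eLpNorm (fun x => F j x * F (j + m) x) (p / 2) μ ≤
      ENNReal.ofReal (2 ^ (-(δ * |(m : ℝ)|))) * (c j * c (j + m)) := by
  have hp' : 1 / (p / 2).toReal = 1 / p₀.toReal + 1 / p₁.toReal := by
    rw [ENNReal.toReal_div, ENNReal.toReal_ofNat, one_div_div, hp]
  rcases le_total 0 m with hm | hm
  · have hm' : (0 : ℝ) ≤ m := by exact_mod_cast hm
    refine (eLpNorm_mul_le h₀ h₀_top h₁ h₁_top hp' (hF _) (hF _)).trans
      ((mul_le_mul' (hF₀ j) (hF₁ (j + m))).trans_eq ?_)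
    rw [mul_mul_mul_comm, ofReal_two_rpow_mul, abs_of_nonneg hm']
    congr 3
    push_cast
    ring
  · have hm' : (m : ℝ) ≤ 0 := by exact_mod_cast hm
    refine (eLpNorm_mul_le h₁ h₁_top h₀ h₀_top (by rw [hp', add_comm]) (hF _) (hF _)).trans
      ((mul_le_mul' (hF₁ j) (hF₀ (j + m))).trans_eq ?_)
    rw [mul_mul_mul_comm, ofReal_two_rpow_mul, abs_of_nonpos hm']
    congr 3
    push_cast
    ring

-- Expanding the square of the sum, the products with index difference `m` gain `2 ^ (-δ |m|)` by
-- Hölder with one factor in each of the two neighbouring spaces.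
lemma eLpNorm_tsum_sq_le {p p₀ p₁ : ℝ≥0∞} (hp2 : 2 ≤ p) (h₀ : p₀ ≠ 0) (h₀_top : p₀ ≠ ⊤)
    (h₁ : p₁ ≠ 0) (h₁_top : p₁ ≠ ⊤) (hp : 2 / p.toReal = 1 / p₀.toReal + 1 / p₁.toReal) {δ : ℝ}
    {F : ℤ → X → ℝ≥0∞} {c : ℤ → ℝ≥0∞} (hF : ∀ j, Measurable (F j))
    (hF₀ : ∀ j, eLpNorm (F j) p₀ μ ≤ ENNReal.ofReal (2 ^ (j * δ)) * c j)
    (hF₁ : ∀ j, eLpNorm (F j) p₁ μ ≤ ENNReal.ofReal (2 ^ (-(j * δ))) * c j) :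
    eLpNorm (fun x => ∑' j, F j x) p μ ^ 2 ≤
      (∑' m : ℤ, ENNReal.ofReal (2 ^ (-(δ * |(m : ℝ)|)))) * ∑' j, c j ^ 2 := by
  have hp1 : 1 ≤ p / 2 := by
    rw [ENNReal.le_div_iff_mul_le (by simp) (by simp)]
    simpa using hp2
  rw [← eLpNorm_sq]
  simp only [tsum_sq]
  calc _ ≤ ∑' m : ℤ, eLpNorm (fun x => ∑' j, F j x * F (j + m) x) (p / 2) μ :=
        eLpNorm_tsum_le (fun m => Measurable.tsum fun j => (hF _).mul (hF _)) hp1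
    _ ≤ ∑' (m : ℤ) (j : ℤ), ENNReal.ofReal (2 ^ (-(δ * |(m : ℝ)|))) * (c j * c (j + m)) :=
        ENNReal.tsum_le_tsum fun m =>
          (eLpNorm_tsum_le (fun j => (hF _).mul (hF _)) hp1).trans <| ENNReal.tsum_le_tsum fun j =>
            eLpNorm_mul_le_of_two_rpow h₀ h₀_top h₁ h₁_top hp hF hF₀ hF₁ j m
    _ ≤ ∑' m : ℤ, ENNReal.ofReal (2 ^ (-(δ * |(m : ℝ)|))) * ∑' j, c j ^ 2 := by
        simp_rw [ENNReal.tsum_mul_left]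
        exact ENNReal.tsum_le_tsum fun m => mul_le_mul_right (tsum_mul_add_le c m) _
    _ = _ := ENNReal.tsum_mul_right

end Summation

section Shell

variable (E : Type*) [NormedAddCommGroup E]

/-- The dyadic shell `2 ^ j ≤ ‖ξ‖ < 2 ^ (j + 1)`. -/
def shell (j : ℤ) : Set E := norm ⁻¹' Set.Ico ((2 : ℝ) ^ (j : ℝ)) (2 ^ (j + 1 : ℝ))

lemma measurableSet_shell [MeasurableSpace E] [OpensMeasurableSpace E] (j : ℤ) :
    MeasurableSet (shell E j) :=
  measurable_norm measurableSet_Ico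

lemma pairwise_disjoint_shell : Pairwise (Function.onFun Disjoint (shell E)) := by
  have hmono : Monotone fun j : ℤ => (2 : ℝ) ^ (j : ℝ) := fun i j hij => by
    dsimp only
    gcongr
    exact one_le_two
  intro i j hij
  simpa [Function.onFun, shell] using
    (hmono.pairwise_disjoint_on_Ico_succ hij).preimage (norm : E → ℝ)

lemma iUnion_shell : ⋃ j, shell E j = {0}ᶜ := by
  ext ξ
  simp only [shell, Set.mem_iUnion, Set.mem_preimage, Set.mem_compl_singleton_iff]
  constructor
  · rintro ⟨j, hj⟩
    exact norm_pos_iff.1 (lt_of_lt_of_le (by positivity) hj.1)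
  · intro hξ
    obtain ⟨j, hj⟩ := exists_mem_Ico_zpow (norm_pos_iff.2 hξ) (one_lt_two (α := ℝ))
    exact ⟨j, by exact_mod_cast hj⟩

variable {E} [InnerProductSpace ℝ E] [FiniteDimensional ℝ E] [MeasurableSpace E] [BorelSpace E]
  [Nontrivial E]

lemma lintegral_eq_tsum_shell (φ : E → ℝ≥0∞) : ∫⁻ ξ, φ ξ = ∑' j, ∫⁻ ξ in shell E j, φ ξ := by
  rw [← lintegral_iUnion (measurableSet_shell E) (pairwise_disjoint_shell E), iUnion_shell,
    restrict_compl_singleton]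

lemma hasSum_integral_shell {F : Type*} [NormedAddCommGroup F] [NormedSpace ℝ F] {f : E → F}
    (hf : Integrable f) : HasSum (fun j => ∫ ξ in shell E j, f ξ) (∫ ξ, f ξ) := by
  have h := hasSum_integral_iUnion (measurableSet_shell E) (pairwise_disjoint_shell E)
    hf.integrableOn
  rwa [iUnion_shell, restrict_compl_singleton] at h

end Shell

section Pieces

variable {E : Type*} [NormedAddCommGroup E]

/-- The frequency piece of `h` in the `j`-th dyadic shell. -/
noncomputable def piece (h : E → ℂ) (j : ℤ) : E → ℂ := (shell E j).indicator h

variable [InnerProductSpace ℝ E]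

/-- The frequency piece rescaled to unit frequency. -/
noncomputable def unitPiece (h : E → ℂ) (j : ℤ) (η : E) : ℂ := piece h j ((2 : ℝ) ^ (j : ℝ) • η)

variable [FiniteDimensional ℝ E] [MeasurableSpace E] [BorelSpace E]

lemma eLpNorm_comp_smul {F : Type*} [TopologicalSpace F] [ContinuousENorm F] (f : E → F)
    (p : ℝ≥0∞) {a : ℝ} (ha : 0 < a) :
    eLpNorm (fun x => f (a • x)) p volume =
      ENNReal.ofReal (a ^ (-(finrank ℝ E / p.toReal))) * eLpNorm f p volume := by
  have hemb : MeasurableEmbedding fun x : E => a • x :=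
    (Homeomorph.smulOfNeZero a ha.ne').measurableEmbedding
  have hmap := hemb.eLpNorm_map_measure (g := f) (p := p) (μ := volume)
  have hpow : ENNReal.ofReal |(a ^ finrank ℝ E)⁻¹| ≠ 0 := by
    rw [abs_of_pos (by positivity)]
    simpa using by positivity
  rw [Measure.map_addHaar_smul volume ha.ne', eLpNorm_smul_measure_of_ne_zero hpow,
    smul_eq_mul] at hmap
  rw [show (fun x => f (a • x)) = f ∘ fun x => a • x from rfl, ← hmap, abs_of_pos (by positivity),
    ENNReal.ofReal_rpow_of_pos (by positivity), ← Real.rpow_natCast, ← Real.rpow_neg ha.le,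
    ← Real.rpow_mul ha.le, one_div, ENNReal.toReal_inv, div_eq_mul_inv, neg_mul]

protected lemma IsData.piece {h : E → ℂ} (hh : IsData h) (j : ℤ) : IsData (piece h j) where
  measurable := hh.measurable.indicator (measurableSet_shell E j)
  integrable := hh.integrable.indicator (measurableSet_shell E j)
  radial x y hxy := by
    simp only [RadialStrichartz.piece, Set.indicator, shell, Set.mem_preimage, hxy,
      hh.radial x y hxy]

protected lemma IsData.unitPiece {h : E → ℂ} (hh : IsData h) (j : ℤ) :
    IsUnitData (unitPiece h j) where
  measurable := (hh.piece j).measurable.comp (measurable_const_smul _)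
  integrable := (hh.piece j).integrable.comp_smul (by positivity)
  radial x y hxy := (hh.piece j).radial _ _ (by simp [norm_smul, hxy])
  support ξ hξ := by
    have ha : (0 : ℝ) < 2 ^ (j : ℝ) := by positivity
    refine Set.indicator_of_notMem (fun hmem => ?_) _
    have hlt := hmem.2
    rw [norm_smul, Real.norm_of_nonneg ha.le, Real.rpow_add two_pos, Real.rpow_one] at hlt
    nlinarith

lemma wave_piece (h : E → ℂ) (j : ℤ) (t : ℝ) (x : E) :
    wave (piece h j) t x = ((2 : ℝ) ^ (j * finrank ℝ E : ℝ)) •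
      wave (unitPiece h j) ((2 : ℝ) ^ (j : ℝ) * t) ((2 : ℝ) ^ (j : ℝ) • x) := by
  have ha : (0 : ℝ) < 2 ^ (j : ℝ) := by positivity
  have ha_norm := Real.norm_of_nonneg ha.le
  rw [Real.rpow_mul zero_le_two, Real.rpow_natCast]
  unfold wave unitPiece
  set a : ℝ := 2 ^ (j : ℝ)
  have hphase_space (ξ : E) : phase (a • x) ξ = phase x (a • ξ) := by
    simp only [phase, real_inner_smul_left, real_inner_smul_right]
  have hphase_time (ξ : E) : phase (a * t) ‖ξ‖ = phase t ‖a • ξ‖ := by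
    simp only [phase, norm_smul, ha_norm, RCLike.inner_apply, conj_trivial]
    congr 4
    ring
  simp_rw [hphase_space, hphase_time]
  rw [Measure.integral_comp_smul volume (fun ξ => (phase x ξ * phase t ‖ξ‖) * piece h j ξ),
    smul_smul, abs_of_pos (by positivity), mul_inv_cancel₀ (by positivity), one_smul]

lemma wave_piece_eq_setIntegral (h : E → ℂ) (j : ℤ) (t : ℝ) (x : E) :
    wave (piece h j) t x = ∫ ξ in shell E j, (phase x ξ * phase t ‖ξ‖) * h ξ := by
  rw [← integral_indicator (measurableSet_shell E j)]
  simp only [wave, piece, Set.indicator_mul_right]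

lemma enorm_wave_le_tsum [Nontrivial E] {h : E → ℂ} (hi : Integrable h) (t : ℝ) (x : E) :
    ‖wave h t x‖ₑ ≤ ∑' j, ‖wave (piece h j) t x‖ₑ := by
  simp_rw [wave_piece_eq_setIntegral]
  rw [wave, ← (hasSum_integral_shell (integrable_phase_mul hi t x)).tsum_eq]
  exact enorm_tsum_le_tsum_enorm

end Pieces

section Sobolev

variable {E : Type*} [NormedAddCommGroup E] [InnerProductSpace ℝ E] [FiniteDimensional ℝ E]
  [MeasurableSpace E] [BorelSpace E]

/-- The homogeneous Sobolev norm of order `s`, in terms of the Fourier data. -/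
noncomputable def sobNorm (s : ℝ) (h : E → ℂ) : ℝ≥0∞ :=
  eLpNorm (fun ξ => (‖ξ‖ ^ s : ℝ) • h ξ) 2 volume

lemma sobNorm_sq (s : ℝ) (h : E → ℂ) :
    sobNorm s h ^ 2 = ∫⁻ ξ, ‖(‖ξ‖ ^ s : ℝ) • h ξ‖ₑ ^ 2 :=
  eLpNorm_two_sq _ _

lemma tsum_sobNorm_piece_sq [Nontrivial E] (s : ℝ) (h : E → ℂ) :
    ∑' j, sobNorm s (piece h j) ^ 2 = sobNorm s h ^ 2 := by
  simp only [sobNorm_sq]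
  rw [lintegral_eq_tsum_shell]
  refine tsum_congr fun j => ?_
  rw [← lintegral_indicator (measurableSet_shell E j)]
  refine lintegral_congr fun ξ => ?_
  by_cases hξ : ξ ∈ shell E j <;> simp [piece, hξ]

lemma rpow_neg_le_of_mem_Ico {a x : ℝ} (ha : 0 < a) (hx : x ∈ Set.Ico a (2 * a)) (s : ℝ) :
    1 ≤ 2 ^ |s| * a ^ (-s) * x ^ s := by
  have hx0 : 0 < x := ha.trans_le hx.1
  rw [Real.rpow_neg ha.le, ← Real.inv_rpow ha.le, mul_assoc,
    ← Real.mul_rpow (by positivity) (by positivity)]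
  have hratio : 1 ≤ a⁻¹ * x := by rw [← inv_mul_cancel₀ ha.ne']; gcongr; exact hx.1
  have hratio' : a⁻¹ * x ≤ 2 := by rw [inv_mul_le_iff₀ ha, mul_comm]; exact hx.2.le
  rcases le_total 0 s with hs | hs
  · exact one_le_mul_of_one_le_of_one_le (Real.one_le_rpow one_le_two (abs_nonneg s))
      (Real.one_le_rpow hratio hs)
  · calc (1 : ℝ) = 2 ^ |s| * 2 ^ s := by
          rw [abs_of_nonpos hs, ← Real.rpow_add two_pos, neg_add_cancel, Real.rpow_zero]
      _ ≤ _ := mul_le_mul_of_nonneg_left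
          (Real.rpow_le_rpow_of_nonpos (by positivity) hratio' hs) (by positivity)

lemma eLpNorm_piece_le (s : ℝ) (h : E → ℂ) (j : ℤ) :
    eLpNorm (piece h j) 2 volume ≤
      ENNReal.ofReal (2 ^ |s| * 2 ^ (j * -s : ℝ)) * sobNorm s (piece h j) := by
  rw [sobNorm, ← Real.enorm_eq_ofReal (by positivity), ← eLpNorm_const_smul]
  refine eLpNorm_mono_enorm fun ξ => ?_
  by_cases hξ : ξ ∈ shell E j
  · rw [Pi.smul_apply, smul_smul, enorm_smul]
    refine le_mul_of_one_le_left' ?_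
    have hmem := hξ
    rw [shell, Set.mem_preimage, Real.rpow_add_one two_ne_zero, mul_comm] at hmem
    rw [Real.enorm_eq_ofReal (by positivity), ENNReal.one_le_ofReal, Real.rpow_mul zero_le_two]
    exact rpow_neg_le_of_mem_Ico (by positivity) hmem s
  · simp [piece, hξ]

lemma eLpNorm_unitPiece_le (s : ℝ) (h : E → ℂ) (j : ℤ) :
    eLpNorm (unitPiece h j) 2 volume ≤ ENNReal.ofReal (2 ^ |s|) *
      (ENNReal.ofReal (2 ^ (j * (-s - finrank ℝ E / 2 : ℝ))) * sobNorm s (piece h j)) := by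
  unfold unitPiece
  rw [eLpNorm_comp_smul _ _ (by positivity)]
  refine (mul_le_mul_right (eLpNorm_piece_le s h j) _).trans_eq ?_
  rw [← Real.rpow_mul zero_le_two, ENNReal.ofReal_mul (by positivity),
    show (j * (-s - finrank ℝ E / 2) : ℝ) =
      j * -((finrank ℝ E : ℝ) / (2 : ℝ≥0∞).toReal) + j * -s by rw [ENNReal.toReal_ofNat]; ring,
    ← ofReal_two_rpow_mul]
  ring

end Sobolev

section PieceEnergy

variable {E : Type*} [NormedAddCommGroup E] [InnerProductSpace ℝ E] [FiniteDimensional ℝ E]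
  [MeasurableSpace E] [BorelSpace E]

/-- The square root of the local energy of the rescaled `j`-th frequency piece, which majorizes the
spatial norms of that piece up to powers of `2 ^ j`. -/
noncomputable def pieceEnergy (β : ℝ) (h : E → ℂ) (j : ℤ) (t : ℝ) : ℝ≥0∞ :=
  locEnergy β (unitPiece h j) ((2 : ℝ) ^ (j : ℝ) * t) ^ (1 / 2 : ℝ)

lemma IsData.measurable_pieceEnergy {h : E → ℂ} (hh : IsData h) (β : ℝ) (j : ℤ) :
    Measurable (pieceEnergy β h j) :=
  (((hh.unitPiece j).measurable_locEnergy β).comp (measurable_const_mul _)).pow_const _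

variable [Nontrivial E]

variable (E) in
lemma exists_eLpNorm_wave_piece_le {β : ℝ} {r : ℝ≥0∞} (hr : 2 ≤ r)
    (hβ : β ≤ (finrank ℝ E - 1) * (1 - 2 / r.toReal)) :
    ∃ K : ℝ≥0∞, K ≠ ⊤ ∧ ∀ h : E → ℂ, IsData h → ∀ j t, eLpNorm (wave (piece h j) t) r volume ≤
      K * (ENNReal.ofReal (2 ^ (j * (finrank ℝ E - finrank ℝ E / r.toReal) : ℝ)) *
        pieceEnergy β h j t) := by
  obtain ⟨K, hK, hwave⟩ := exists_eLpNorm_wave_le E hr hβ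
  refine ⟨K, hK, fun h hh j t => ?_⟩
  have wave_eq : wave (piece h j) t = ((2 : ℝ) ^ (j * finrank ℝ E : ℝ)) •
      fun x => wave (unitPiece h j) ((2 : ℝ) ^ (j : ℝ) * t) ((2 : ℝ) ^ (j : ℝ) • x) :=
    funext fun x => wave_piece h j t x
  rw [wave_eq, eLpNorm_const_smul, eLpNorm_comp_smul _ _ (by positivity),
    Real.enorm_eq_ofReal (by positivity), ← Real.rpow_mul zero_le_two, ← mul_assoc,
    ofReal_two_rpow_mul]
  refine (mul_le_mul_right (hwave _ (hh.unitPiece j) _) _).trans_eq ?_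
  rw [mul_left_comm, pieceEnergy]
  congr 5
  ring

variable (E) in
lemma exists_eLpNorm_pieceEnergy_le {β : ℝ} {q : ℝ≥0∞} (s : ℝ) (hq : 2 ≤ q)
    (hβ : 2 / q.toReal < β) :
    ∃ K : ℝ≥0∞, K ≠ ⊤ ∧ ∀ h : E → ℂ, IsData h → ∀ j, eLpNorm (pieceEnergy β h j) q volume ≤
      K * (ENNReal.ofReal (2 ^ (j * (-(1 / q.toReal) - s - finrank ℝ E / 2) : ℝ)) *
        sobNorm s (piece h j)) := by
  obtain ⟨K, hK, henergy⟩ := exists_eLpNorm_locEnergy_le E hq hβ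
  refine ⟨K * ENNReal.ofReal (2 ^ |s|), by finiteness, fun h hh j => ?_⟩
  unfold pieceEnergy
  have hscale := eLpNorm_comp_smul (fun t : ℝ => locEnergy β (unitPiece h j) t ^ (1 / 2 : ℝ)) q
    (show (0 : ℝ) < 2 ^ (j : ℝ) by positivity)
  simp only [smul_eq_mul, Module.finrank_self, Nat.cast_one] at hscale
  rw [hscale, ← Real.rpow_mul zero_le_two]
  have hunit := (henergy _ (hh.unitPiece j)).trans (mul_le_mul_right (eLpNorm_unitPiece_le s h j) K)
  refine (mul_le_mul_right hunit _).trans_eq ?_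
  rw [show (j * (-(1 / q.toReal) - s - finrank ℝ E / 2) : ℝ) =
    j * -(1 / q.toReal) + j * (-s - finrank ℝ E / 2) by ring, ← ofReal_two_rpow_mul]
  ring

end PieceEnergy

section NeighbouringExponents

lemma exists_one_div_toReal_eq {a : ℝ} (ha : 0 < a) (ha' : a < 1 / 2) :
    ∃ p : ℝ≥0∞, 2 ≤ p ∧ p ≠ ⊤ ∧ 1 / p.toReal = a := by
  refine ⟨ENNReal.ofReal a⁻¹, ?_, ofReal_ne_top, ?_⟩
  · rw [← ENNReal.ofReal_ofNat 2]
    refine ENNReal.ofReal_le_ofReal ?_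
    rw [le_inv_comm₀ two_pos ha, ← one_div]
    exact ha'.le
  · rw [ENNReal.toReal_ofReal (by positivity), one_div, inv_inv]

lemma exists_neighbouring_exponents {p : ℝ≥0∞} (hp : 2 < p) (hp_top : p ≠ ⊤) {P : ℝ → Prop}
    (hP : ∀ᶠ a in nhds (1 / p.toReal), P a) :
    ∃ ε > 0, ∃ p₀ p₁ : ℝ≥0∞, (2 ≤ p₀ ∧ p₀ ≠ ⊤ ∧ 1 / p₀.toReal = 1 / p.toReal - ε ∧
      P (1 / p₀.toReal)) ∧ 2 ≤ p₁ ∧ p₁ ≠ ⊤ ∧ 1 / p₁.toReal = 1 / p.toReal + ε ∧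
      P (1 / p₁.toReal) := by
  have hp2 : 2 < p.toReal := by
    simpa using (ENNReal.toReal_lt_toReal ofNat_ne_top hp_top).2 hp
  have hnhds : ∀ᶠ a in nhds (1 / p.toReal), (0 < a ∧ a < 1 / 2) ∧ P a :=
    ((lt_mem_nhds (by positivity)).and
      (gt_mem_nhds (one_div_lt_one_div_of_lt two_pos hp2))).and hP
  obtain ⟨d, hd, hball⟩ := Metric.eventually_nhds_iff.1 hnhds
  obtain ⟨⟨ha₀, ha₀'⟩, hP₀⟩ := @hball (1 / p.toReal - d / 2) (by
    rw [dist_self_sub_left, Real.norm_of_nonneg (by positivity)]; exact half_lt_self hd)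
  obtain ⟨⟨ha₁, ha₁'⟩, hP₁⟩ := @hball (1 / p.toReal + d / 2) (by
    rw [dist_self_add_left, Real.norm_of_nonneg (by positivity)]; exact half_lt_self hd)
  obtain ⟨p₀, hp₀, hp₀_top, hp₀_eq⟩ := exists_one_div_toReal_eq ha₀ ha₀'
  obtain ⟨p₁, hp₁, hp₁_top, hp₁_eq⟩ := exists_one_div_toReal_eq ha₁ ha₁'
  exact ⟨d / 2, half_pos hd, p₀, p₁, ⟨hp₀, hp₀_top, hp₀_eq, hp₀_eq ▸ hP₀⟩, hp₁, hp₁_top, hp₁_eq,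
    hp₁_eq ▸ hP₁⟩

end NeighbouringExponents

section HalfWaveBound

variable (E : Type*) [NormedAddCommGroup E] [InnerProductSpace ℝ E] [FiniteDimensional ℝ E]
  [MeasurableSpace E] [BorelSpace E]

/-- The radial Strichartz estimate for half waves, phrased with a measurable majorant of the
spatial norm, whose own measurability in time is thereby never needed. -/
def HalfWaveBound (q r : ℝ≥0∞) (s : ℝ) : Prop :=
  ∃ K : ℝ≥0∞, K ≠ ⊤ ∧ ∀ h : E → ℂ, IsData h → ∃ Z : ℝ → ℝ≥0∞, Measurable Z ∧
    (∀ t, eLpNorm (wave h t) r volume ≤ Z t) ∧ eLpNorm Z q volume ≤ K * sobNorm s h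

lemma halfWaveBound_infty_two : HalfWaveBound E ⊤ 2 0 := by
  refine ⟨1, one_ne_top, fun h hh => ⟨fun _ => sobNorm 0 h, measurable_const, fun t => ?_, ?_⟩⟩
  · have sobNorm_zero : sobNorm 0 h = eLpNorm h 2 volume := by simp [sobNorm]
    rw [sobNorm_zero, eLpNorm_two_eq, eLpNorm_two_eq]
    exact ENNReal.rpow_le_rpow (lintegral_wave_sq_le hh.measurable hh.integrable t) (by norm_num)
  · simp only [eLpNorm_exponent_top, eLpNormEssSup_eq_essSup_enorm, enorm_eq_self, one_mul]
    exact essSup_le_of_ae_le _ (ae_of_all _ fun _ => le_rfl)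

variable {E}

lemma eLpNorm_const_mul_le {X : Type*} [MeasurableSpace X] {μ : Measure X} {a : ℝ≥0∞} (ha : a ≠ ⊤)
    (f : X → ℝ≥0∞) (p : ℝ≥0∞) : eLpNorm (fun x => a * f x) p μ ≤ a * eLpNorm f p μ := by
  lift a to NNReal using ha
  exact eLpNorm_le_nnreal_smul_eLpNorm_of_ae_le_mul' (ae_of_all _ fun x => by simp) p

lemma eLpNorm_two_rpow_mul_le {X : Type*} [MeasurableSpace X] {μ : Measure X} {p K N : ℝ≥0∞}
    {f : X → ℝ≥0∞} {a b : ℝ} (hf : eLpNorm f p μ ≤ K * (ENNReal.ofReal (2 ^ b) * N)) :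
    eLpNorm (fun x => ENNReal.ofReal (2 ^ a) * f x) p μ ≤
      K * (ENNReal.ofReal (2 ^ (a + b)) * N) := by
  refine (eLpNorm_const_mul_le ofReal_ne_top _ _).trans ((mul_le_mul_right hf _).trans_eq ?_)
  rw [mul_left_comm, ← mul_assoc (ENNReal.ofReal _), ofReal_two_rpow_mul]

lemma eLpNorm_rpow_half_tsum_sq_le {X : Type*} [MeasurableSpace X] {μ : Measure X} {p K : ℝ≥0∞}
    (hp : 2 ≤ p) (hK : K ≠ ⊤) {c : ℤ → X → ℝ≥0∞} (hc : ∀ j, Measurable (c j)) :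
    eLpNorm (fun x => (K * ∑' j, c j x ^ 2) ^ (1 / 2 : ℝ)) p μ ^ 2 ≤
      K * ∑' j, eLpNorm (c j) p μ ^ 2 := by
  have hp1 : 1 ≤ p / 2 := by
    rw [ENNReal.le_div_iff_mul_le (by simp) (by simp)]
    simpa using hp
  have sq_sqrt (y : ℝ≥0∞) : (y ^ (1 / 2 : ℝ)) ^ 2 = y := by
    rw [← ENNReal.rpow_two, ← ENNReal.rpow_mul]
    norm_num
  calc eLpNorm (fun x => (K * ∑' j, c j x ^ 2) ^ (1 / 2 : ℝ)) p μ ^ 2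
      = eLpNorm (fun x => K * ∑' j, c j x ^ 2) (p / 2) μ := by
        rw [← eLpNorm_sq]
        exact congrArg (eLpNorm · (p / 2) μ) (funext fun x => sq_sqrt _)
    _ ≤ K * ∑' j, eLpNorm (fun x => c j x ^ 2) (p / 2) μ :=
        (eLpNorm_const_mul_le hK _ _).trans
          (mul_le_mul_right (eLpNorm_tsum_le (fun j => (hc j).pow_const 2) hp1) _)
    _ = _ := by rw [tsum_congr fun j => eLpNorm_sq (f := c j)]

lemma le_rpow_half_mul_of_sq_le {a b K : ℝ≥0∞} (h : a ^ 2 ≤ K * b ^ 2) :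
    a ≤ K ^ (1 / 2 : ℝ) * b := by
  rw [← (ENNReal.pow_right_strictMono two_ne_zero).le_iff_le, mul_pow,
    ← ENNReal.rpow_two (K ^ _), ← ENNReal.rpow_mul]
  simpa using h

lemma IsData.measurable_enorm_wave_piece {h : E → ℂ} (hh : IsData h) (j : ℤ) (t : ℝ) :
    Measurable fun x => ‖wave (piece h j) t x‖ₑ :=
  (measurable_wave_right (hh.piece j).measurable t).enorm

variable [Nontrivial E]

lemma tsum_const_mul_sobNorm_piece_sq (L : ℝ≥0∞) (s : ℝ) (h : E → ℂ) :
    ∑' j, (L * sobNorm s (piece h j)) ^ 2 = (L * sobNorm s h) ^ 2 := by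
  simp only [mul_pow, ENNReal.tsum_mul_left, tsum_sobNorm_piece_sq]

lemma eLpNorm_wave_le_tsum {h : E → ℂ} (hh : IsData h) (r : ℝ≥0∞) (t : ℝ) :
    eLpNorm (wave h t) r volume ≤ eLpNorm (fun x => ∑' j, ‖wave (piece h j) t x‖ₑ) r volume :=
  eLpNorm_mono_enorm fun x => by
    simpa only [enorm_eq_self] using enorm_wave_le_tsum hh.integrable t x

variable (E) in
lemma exists_eLpNorm_wave_sq_le_tsum {β : ℝ} {r : ℝ≥0∞} (hr : 2 < r) (hr_top : r ≠ ⊤)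
    (hβ : β < (finrank ℝ E - 1) * (1 - 2 / r.toReal)) :
    ∃ K : ℝ≥0∞, K ≠ ⊤ ∧ ∀ h : E → ℂ, IsData h → ∀ t, eLpNorm (wave h t) r volume ^ 2 ≤
      K * ∑' j : ℤ, (ENNReal.ofReal (2 ^ (j * (finrank ℝ E - finrank ℝ E / r.toReal) : ℝ)) *
        pieceEnergy β h j t) ^ 2 := by
  set n : ℝ := (finrank ℝ E : ℝ)
  have hnhds : ∀ᶠ a in nhds (1 / r.toReal), β < (n - 1) * (1 - 2 * a) := by
    refine ContinuousAt.eventually_lt (by fun_prop) (by fun_prop) ?_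
    rwa [mul_one_div]
  obtain ⟨ε, hε, r₀, r₁, ⟨hr₀, hr₀_top, hr₀_eq, hβ₀⟩, hr₁, hr₁_top, hr₁_eq, hβ₁⟩ :=
    exists_neighbouring_exponents hr hr_top hnhds
  rw [mul_one_div] at hβ₀ hβ₁
  obtain ⟨K₀, hK₀, hwave₀⟩ := exists_eLpNorm_wave_piece_le E hr₀ hβ₀.le
  obtain ⟨K₁, hK₁, hwave₁⟩ := exists_eLpNorm_wave_piece_le E hr₁ hβ₁.le
  have hn : 0 < n := Nat.cast_pos.2 Module.finrank_pos
  have hsum := tsum_two_rpow_neg_abs_ne_top (mul_pos hn hε)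
  refine ⟨(∑' m : ℤ, ENNReal.ofReal (2 ^ (-(n * ε * |(m : ℝ)|)))) * (K₀ + K₁) ^ 2, by finiteness,
    fun h hh t => ?_⟩
  have hpiece {p K : ℝ≥0∞} {e : ℝ} (hK : K ≤ K₀ + K₁) (he : n * (1 / r.toReal - 1 / p.toReal) = e)
      (hwave : ∀ h : E → ℂ, IsData h → ∀ j t, eLpNorm (wave (piece h j) t) p volume ≤
        K * (ENNReal.ofReal (2 ^ (j * (n - n / p.toReal) : ℝ)) * pieceEnergy β h j t)) (j : ℤ) :
      eLpNorm (fun x => ‖wave (piece h j) t x‖ₑ) p volume ≤ ENNReal.ofReal (2 ^ (j * e)) *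
        ((K₀ + K₁) * (ENNReal.ofReal (2 ^ (j * (n - n / r.toReal) : ℝ)) *
          pieceEnergy β h j t)) := by
    rw [eLpNorm_enorm, mul_left_comm, ← mul_assoc (ENNReal.ofReal _) (ENNReal.ofReal _),
      ofReal_two_rpow_mul, ← mul_add, ← he,
      show n * (1 / r.toReal - 1 / p.toReal) + (n - n / r.toReal) = n - n / p.toReal by ring]
    exact (hwave h hh j t).trans (mul_le_mul_left hK _)
  refine (pow_le_pow_left' (eLpNorm_wave_le_tsum hh r t) 2).trans
    ((eLpNorm_tsum_sq_le hr.le (two_pos.trans_le hr₀).ne' hr₀_top (two_pos.trans_le hr₁).ne'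
      hr₁_top (by rw [hr₀_eq, hr₁_eq]; ring) (hh.measurable_enorm_wave_piece · t)
      (hpiece (e := n * ε) le_self_add (by rw [hr₀_eq]; ring) hwave₀) fun j => ?_).trans_eq ?_)
  · exact mul_neg (j : ℝ) _ ▸ hpiece le_add_self (by rw [hr₁_eq]; ring) hwave₁ j
  · simp only [mul_pow _ (_ * _), ENNReal.tsum_mul_left, mul_assoc]

lemma halfWaveBound_of_ne_top {q r : ℝ≥0∞} {s : ℝ} (hq : 2 ≤ q) (hr : 2 < r) (hr_top : r ≠ ⊤)
    (hadm : 2 / q.toReal < (finrank ℝ E - 1) * (1 - 2 / r.toReal))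
    (hscal : 1 / q.toReal + finrank ℝ E / r.toReal = finrank ℝ E / 2 - s) :
    HalfWaveBound E q r s := by
  obtain ⟨β, hqβ, hβr⟩ := exists_between hadm
  obtain ⟨K, hK, hwave⟩ := exists_eLpNorm_wave_sq_le_tsum E hr hr_top hβr
  obtain ⟨L, hL, henergy⟩ := exists_eLpNorm_pieceEnergy_le E s hq hqβ
  set n : ℝ := (finrank ℝ E : ℝ)
  refine ⟨K ^ (1 / 2 : ℝ) * L, by finiteness, fun h hh => ⟨fun t => (K * ∑' j : ℤ,
    (ENNReal.ofReal (2 ^ (j * (n - n / r.toReal) : ℝ)) * pieceEnergy β h j t) ^ 2) ^ (1 / 2 : ℝ),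
    ?_, fun t => ?_, ?_⟩⟩
  · exact ((Measurable.tsum fun j =>
      ((hh.measurable_pieceEnergy β j).const_mul _).pow_const 2).const_mul _).pow_const _
  · rw [one_div, ENNReal.le_rpow_inv_iff two_pos, ENNReal.rpow_two]
    exact hwave h hh t
  · have scaled_energy (j : ℤ) :
        eLpNorm (fun t => ENNReal.ofReal (2 ^ (j * (n - n / r.toReal) : ℝ)) *
          pieceEnergy β h j t) q volume ≤ L * sobNorm s (piece h j) := by
      refine (eLpNorm_two_rpow_mul_le (henergy h hh j)).trans_eq ?_
      rw [← mul_add, show n - n / r.toReal + (-(1 / q.toReal) - s - n / 2) = 0 by linarith]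
      simp
    rw [mul_assoc]
    refine le_rpow_half_mul_of_sq_le ((eLpNorm_rpow_half_tsum_sq_le hq hK fun j =>
      (hh.measurable_pieceEnergy β j).const_mul _).trans ?_)
    rw [← tsum_const_mul_sobNorm_piece_sq]
    gcongr with j
    exact scaled_energy j

lemma halfWaveBound_of_top {q : ℝ≥0∞} {s : ℝ} (hq : 2 < q) (hq_top : q ≠ ⊤)
    (hadm : 2 / q.toReal < (finrank ℝ E - 1)) (hscal : 1 / q.toReal = finrank ℝ E / 2 - s) :
    HalfWaveBound E q ⊤ s := by
  obtain ⟨β, hqβ, hβn⟩ := exists_between hadm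
  set n : ℝ := (finrank ℝ E : ℝ)
  have hnhds : ∀ᶠ a in nhds (1 / q.toReal), 2 * a < β := by
    refine ContinuousAt.eventually_lt (by fun_prop) (by fun_prop) ?_
    rwa [mul_one_div]
  obtain ⟨ε, hε, q₀, q₁, ⟨hq₀, hq₀_top, hq₀_eq, hβ₀⟩, hq₁, hq₁_top, hq₁_eq, hβ₁⟩ :=
    exists_neighbouring_exponents hq hq_top hnhds
  rw [mul_one_div] at hβ₀ hβ₁
  obtain ⟨K, hK, hwave⟩ := exists_eLpNorm_wave_piece_le E (β := β) (le_top (a := (2 : ℝ≥0∞)))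
    (by simpa using hβn.le)
  obtain ⟨K₀, hK₀, henergy₀⟩ := exists_eLpNorm_pieceEnergy_le E s hq₀ hβ₀
  obtain ⟨K₁, hK₁, henergy₁⟩ := exists_eLpNorm_pieceEnergy_le E s hq₁ hβ₁
  simp only [ENNReal.toReal_top, _root_.div_zero, sub_zero] at hwave
  set F : (E → ℂ) → ℤ → ℝ → ℝ≥0∞ := fun h j t =>
    K * (ENNReal.ofReal (2 ^ (j * n)) * pieceEnergy β h j t)
  have hF {h : E → ℂ} (hh : IsData h) (j : ℤ) : Measurable (F h j) :=
    ((hh.measurable_pieceEnergy β j).const_mul _).const_mul _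
  have hpiece {h : E → ℂ} {p K' : ℝ≥0∞} {e : ℝ} {j : ℤ} (hK' : K' ≤ K₀ + K₁)
      (he : 1 / q.toReal - 1 / p.toReal = e) (henergy : eLpNorm (pieceEnergy β h j) p volume ≤
        K' * (ENNReal.ofReal (2 ^ (j * (-(1 / p.toReal) - s - n / 2) : ℝ)) *
          sobNorm s (piece h j))) :
      eLpNorm (F h j) p volume ≤
        ENNReal.ofReal (2 ^ (j * e)) * (K * (K₀ + K₁) * sobNorm s (piece h j)) := by
    have exponent_eq : n + (-(1 / p.toReal) - s - n / 2) = e := by rw [← he, hscal]; ring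
    refine (eLpNorm_const_mul_le hK _ _).trans ((mul_le_mul_right ((eLpNorm_two_rpow_mul_le
      henergy).trans (mul_le_mul_left hK' _)) _).trans_eq ?_)
    rw [← mul_add, exponent_eq]
    ring
  have hsum := tsum_two_rpow_neg_abs_ne_top hε
  refine ⟨(∑' m : ℤ, ENNReal.ofReal (2 ^ (-(ε * |(m : ℝ)|)))) ^ (1 / 2 : ℝ) * (K * (K₀ + K₁)),
    by finiteness, fun h hh => ⟨fun t => ∑' j, F h j t, Measurable.tsum (hF hh), fun t => ?_, ?_⟩⟩
  · refine (eLpNorm_wave_le_tsum hh ⊤ t).trans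
      ((eLpNorm_tsum_le (hh.measurable_enorm_wave_piece · t) le_top).trans ?_)
    simp only [eLpNorm_enorm]
    exact ENNReal.tsum_le_tsum fun j => hwave h hh j t
  · rw [mul_assoc]
    refine le_rpow_half_mul_of_sq_le ((eLpNorm_tsum_sq_le hq.le (two_pos.trans_le hq₀).ne' hq₀_top
      (two_pos.trans_le hq₁).ne' hq₁_top (by rw [hq₀_eq, hq₁_eq]; ring) (hF hh)
      (fun j => hpiece (e := ε) le_self_add (by rw [hq₀_eq]; ring) (henergy₀ h hh j))
      fun j => ?_).trans_eq (by rw [tsum_const_mul_sobNorm_piece_sq]))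
    exact mul_neg (j : ℝ) _ ▸ hpiece le_add_self (by rw [hq₁_eq]; ring) (henergy₁ h hh j)

end HalfWaveBound

section LayerCake

/-- The positive real levels below `a`. -/
def levelsBelow (a : ℝ≥0∞) : Set ℝ := {l | 0 < l ∧ ENNReal.ofReal l < a}

lemma levelsBelow_top : levelsBelow ⊤ = Set.Ioi 0 := by
  ext l
  simp [levelsBelow]

lemma levelsBelow_ofReal (b : ℝ) : levelsBelow (ENNReal.ofReal b) = Set.Ioo 0 b := by
  ext l
  simp only [levelsBelow, Set.mem_ofPred_eq, Set.mem_Ioo]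
  exact and_congr_right fun hl => ⟨fun h => (ofReal_lt_ofReal_iff'.1 h).1,
    fun h => (ENNReal.ofReal_lt_ofReal_iff (hl.trans h)).2 h⟩

lemma volume_levelsBelow (a : ℝ≥0∞) : volume (levelsBelow a) = a := by
  rcases eq_or_ne a ⊤ with rfl | ha
  · rw [levelsBelow_top, Real.volume_Ioi]
  · rw [← ENNReal.ofReal_toReal ha, levelsBelow_ofReal, Real.volume_Ioo, sub_zero]

lemma setLIntegral_levelsBelow (a : ℝ≥0∞) :
    ∫⁻ l in levelsBelow a, ENNReal.ofReal (2 * l) = a ^ 2 := by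
  rcases eq_or_ne a ⊤ with rfl | ha
  · rw [levelsBelow_top, ENNReal.top_pow two_ne_zero, eq_top_iff]
    calc ⊤ = ∫⁻ _ in Set.Ioi (1 : ℝ), 1 := by rw [setLIntegral_one, Real.volume_Ioi]
      _ ≤ ∫⁻ l in Set.Ioi (1 : ℝ), ENNReal.ofReal (2 * l) :=
          setLIntegral_mono' measurableSet_Ioi fun l hl =>
            ENNReal.one_le_ofReal.2 (by linarith [Set.mem_Ioi.1 hl])
      _ ≤ _ := lintegral_mono_set (Set.Ioi_subset_Ioi zero_le_one)
  · obtain ⟨b, hb, rfl⟩ : ∃ b, 0 ≤ b ∧ ENNReal.ofReal b = a :=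
      ⟨a.toReal, toReal_nonneg, ENNReal.ofReal_toReal ha⟩
    have hint : IntervalIntegrable (fun l : ℝ => 2 * l) volume 0 b :=
      Continuous.intervalIntegrable (by fun_prop) _ _
    rw [levelsBelow_ofReal, restrict_Ioo_eq_restrict_Ioc, ← ofReal_integral_eq_lintegral_ofReal
      hint.1 (ae_restrict_of_forall_mem measurableSet_Ioc fun l hl =>
        mul_nonneg zero_le_two hl.1.le), ← intervalIntegral.integral_of_le hb,
      intervalIntegral.integral_const_mul, integral_id, ← ENNReal.ofReal_pow hb]
    ring_nf

variable {X : Type*} [MeasurableSpace X] {μ : Measure X} [SFinite μ]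

lemma lintegral_setLIntegral_levelsBelow {g : X → ℝ≥0∞} (hg : Measurable g) {w : X → ℝ → ℝ≥0∞}
    (hw : Measurable (Function.uncurry w)) :
    ∫⁻ x, (∫⁻ l in levelsBelow (g x), w x l) ∂μ =
      ∫⁻ l in Set.Ioi (0 : ℝ), (∫⁻ x in {x | ENNReal.ofReal l < g x}, w x l ∂μ) := by
  set T : Set (X × ℝ) := {z | 0 < z.2 ∧ ENNReal.ofReal z.2 < g z.1}
  have hT : MeasurableSet T :=
    (measurableSet_lt measurable_const measurable_snd).inter
      (measurableSet_lt (ENNReal.measurable_ofReal.comp measurable_snd) (hg.comp measurable_fst))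
  have hlevels (x : X) : MeasurableSet (levelsBelow (g x)) := measurable_prodMk_left hT
  calc ∫⁻ x, (∫⁻ l in levelsBelow (g x), w x l) ∂μ
      = ∫⁻ x, (∫⁻ l, T.indicator (Function.uncurry w) (x, l)) ∂μ :=
        lintegral_congr fun x => (lintegral_indicator (hlevels x) _).symm
    _ = ∫⁻ l, (∫⁻ x, T.indicator (Function.uncurry w) (x, l) ∂μ) :=
        lintegral_lintegral_swap (hw.indicator hT).aemeasurable
    _ = _ := by
        rw [← lintegral_indicator measurableSet_Ioi]
        refine lintegral_congr fun l => ?_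
        by_cases hl : 0 < l
        · rw [Set.indicator_of_mem (Set.mem_Ioi.2 hl),
            ← lintegral_indicator (measurableSet_lt measurable_const hg)]
          refine lintegral_congr fun x => ?_
          simp [Set.indicator, T, hl]
        · simp [Set.indicator, T, hl]

-- Marcinkiewicz interpolation, started from the weak type bound for the truncation of `f`.
lemma lintegral_sq_le_of_weak_type {f g : X → ℝ≥0∞} (hf : Measurable f) (hg : Measurable g)
    {K c : ℝ≥0∞} (hK : K ≠ ⊤) (hweak : ∀ l : ℝ, 0 < l →
      ENNReal.ofReal l * μ {x | ENNReal.ofReal l < g x} ≤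
        K * ∫⁻ x in {x | ENNReal.ofReal l < c * f x}, f x ∂μ) :
    ∫⁻ x, g x ^ 2 ∂μ ≤ 2 * K * c * ∫⁻ x, f x ^ 2 ∂μ := by
  calc ∫⁻ x, g x ^ 2 ∂μ = ∫⁻ x, (∫⁻ l in levelsBelow (g x), ENNReal.ofReal (2 * l)) ∂μ := by
        simp_rw [setLIntegral_levelsBelow]
    _ = ∫⁻ l in Set.Ioi (0 : ℝ), ENNReal.ofReal (2 * l) * μ {x | ENNReal.ofReal l < g x} := by
        rw [lintegral_setLIntegral_levelsBelow hg (w := fun _ l => ENNReal.ofReal (2 * l))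
          (by fun_prop)]
        simp_rw [setLIntegral_const]
    _ ≤ ∫⁻ l in Set.Ioi (0 : ℝ), 2 * K * ∫⁻ x in {x | ENNReal.ofReal l < c * f x}, f x ∂μ := by
        refine setLIntegral_mono' measurableSet_Ioi fun l hl => ?_
        rw [ENNReal.ofReal_mul zero_le_two, ENNReal.ofReal_ofNat, mul_assoc, mul_assoc]
        exact mul_le_mul_right (hweak l hl) _
    _ = 2 * K * ∫⁻ x, f x * (c * f x) ∂μ := by
        rw [lintegral_const_mul' _ _ (by finiteness), ← lintegral_setLIntegral_levelsBelow
          (hf.const_mul c) (w := fun x _ => f x) (by fun_prop)]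
        simp_rw [setLIntegral_const, volume_levelsBelow]
    _ = _ := by
        simp_rw [mul_left_comm _ c, ← sq]
        rw [lintegral_const_mul _ (hf.pow_const 2), mul_assoc (2 * K)]

end LayerCake

section MaximalFunction

variable {E : Type*} [NormedAddCommGroup E] [MeasurableSpace E] {μ : Measure E}

/-- The Hardy–Littlewood maximal function over balls of dyadic radius. -/
noncomputable def maxFn (μ : Measure E) (φ : E → ℝ≥0∞) (x : E) : ℝ≥0∞ :=
  ⨆ k : ℤ, ⨍⁻ y in Metric.closedBall x (2 ^ k), φ y ∂μ

lemma exists_mul_measure_closedBall_le {φ : E → ℝ≥0∞} {x : E} {l : ℝ≥0∞} (hx : l < maxFn μ φ x) :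
    ∃ k : ℤ, l * μ (Metric.closedBall x (2 ^ k)) ≤
      ∫⁻ y in Metric.closedBall x (2 ^ k), φ y ∂μ := by
  obtain ⟨k, hk⟩ := lt_iSup_iff.1 hx
  refine ⟨k, ENNReal.mul_le_of_le_div ?_⟩
  rw [← setLAverage_eq]
  exact hk.le

variable [NormedSpace ℝ E] [FiniteDimensional ℝ E] [μ.IsAddHaarMeasure]

lemma maxFn_le_add {φ ψ : E → ℝ≥0∞} (hψ : Measurable ψ) {c : ℝ≥0∞} (h : ∀ y, φ y ≤ ψ y + c)
    (x : E) : maxFn μ φ x ≤ maxFn μ ψ x + c := by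
  refine iSup_le fun k => ?_
  have hball : μ (Metric.closedBall x (2 ^ k)) ≠ 0 :=
    (Metric.measure_closedBall_pos μ x (by positivity)).ne'
  calc ⨍⁻ y in Metric.closedBall x (2 ^ k), φ y ∂μ
      ≤ ⨍⁻ y in Metric.closedBall x (2 ^ k), (ψ y + c) ∂μ := lintegral_mono h
    _ = (⨍⁻ y in Metric.closedBall x (2 ^ k), ψ y ∂μ) + c := by
        rw [setLAverage_eq, lintegral_add_left hψ, setLIntegral_const, ENNReal.add_div,
          setLAverage_eq, ENNReal.mul_div_cancel_right hball measure_closedBall_lt_top.ne]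
    _ ≤ _ := add_le_add_left (le_iSup_iff.2 fun b hb => hb k) c

variable [BorelSpace E]

lemma measurable_maxFn {φ : E → ℝ≥0∞} (hφ : Measurable φ) : Measurable (maxFn μ φ) := by
  refine Measurable.iSup fun k => ?_
  simp_rw [setLAverage_eq, Measure.addHaar_closedBall_center μ]
  refine Measurable.div_const ?_ _
  simp_rw [← lintegral_indicator Metric.isClosed_closedBall.measurableSet]
  exact Measurable.lintegral_prod_right' (f :=
    {z : E × E | dist z.2 z.1 ≤ 2 ^ k}.indicator fun z => φ z.2)
    ((hφ.comp measurable_snd).indicator (measurableSet_le (by fun_prop) measurable_const))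

lemma setLIntegral_closedBall_le_maxFn (φ : E → ℝ≥0∞) (x : E) {R : ℝ} (hR : 0 < R) :
    ∫⁻ y in Metric.closedBall x R, φ y ∂μ ≤
      2 ^ finrank ℝ E * μ (Metric.closedBall x R) * maxFn μ φ x := by
  obtain ⟨k, hk_le, hk_lt⟩ := exists_mem_Ico_zpow hR (one_lt_two (α := ℝ))
  have hball : μ (Metric.closedBall x (2 ^ (k + 1))) ≠ 0 :=
    (Metric.measure_closedBall_pos μ x (by positivity)).ne'
  calc ∫⁻ y in Metric.closedBall x R, φ y ∂μ
      ≤ ∫⁻ y in Metric.closedBall x (2 ^ (k + 1)), φ y ∂μ :=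
        lintegral_mono_set (Metric.closedBall_subset_closedBall hk_lt.le)
    _ = μ (Metric.closedBall x (2 ^ (k + 1))) *
          ⨍⁻ y in Metric.closedBall x (2 ^ (k + 1)), φ y ∂μ := by
        rw [setLAverage_eq, ENNReal.mul_div_cancel hball measure_closedBall_lt_top.ne]
    _ ≤ μ (Metric.closedBall x (2 * R)) * maxFn μ φ x := by
        refine mul_le_mul' (measure_mono (Metric.closedBall_subset_closedBall ?_))
          (le_iSup_iff.2 fun b hb => hb (k + 1))
        rw [zpow_add_one₀ two_ne_zero, mul_comm]
        linarith
    _ = _ := by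
        rw [Measure.addHaar_closedBall_mul μ x two_pos.le hR.le,
          Measure.addHaar_closedBall_center μ x R, ENNReal.ofReal_pow two_pos.le,
          ENNReal.ofReal_ofNat]

variable [Nontrivial E]

lemma radius_le_of_mul_measure_closedBall_le {l A : ℝ≥0∞} (hl : l ≠ 0) (hA : A ≠ ⊤) {x : E} {R : ℝ}
    (hR : 0 ≤ R) (h : l * μ (Metric.closedBall x R) ≤ A) :
    R ≤ max 1 (A / (l * μ (Metric.closedBall 0 1))).toReal := by
  refine le_max_iff.2 ((le_total R 1).imp id fun hR1 => ?_)
  have hball : μ (Metric.closedBall (0 : E) 1) ≠ 0 :=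
    (Metric.measure_closedBall_pos μ 0 one_pos).ne'
  rw [← ENNReal.ofReal_le_iff_le_toReal (ENNReal.div_ne_top hA (mul_ne_zero hl hball))]
  refine ENNReal.le_div_iff_mul_le (.inl (mul_ne_zero hl hball)) (.inr hA) |>.2 (le_trans ?_ h)
  rw [Measure.addHaar_closedBall μ x hR, mul_left_comm,
    ← Measure.addHaar_closedBall_eq_addHaar_ball μ 0 1]
  gcongr
  exact le_self_pow₀ hR1 Module.finrank_pos.ne'

lemma mul_measure_lt_maxFn_le (φ : E → ℝ≥0∞) {l : ℝ≥0∞} (hl : l ≠ 0) :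
    l * μ {x | l < maxFn μ φ x} ≤ 4 ^ finrank ℝ E * ∫⁻ y, φ y ∂μ := by
  rcases eq_or_ne (∫⁻ y, φ y ∂μ) ⊤ with hφ | hφ
  · rw [hφ, ENNReal.mul_top (by positivity)]
    exact le_top
  choose! k hk using fun x (hx : l < maxFn μ φ x) => exists_mul_measure_closedBall_le hx
  obtain ⟨u, hu, hdisj, hcover⟩ :=
    Vitali.exists_disjoint_subfamily_covering_enlargement_closedBall {x | l < maxFn μ φ x} id
      (fun x => (2 : ℝ) ^ k x) _ (fun x hx => radius_le_of_mul_measure_closedBall_le hl hφ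
        (by positivity) ((hk x hx).trans (setLIntegral_le_lintegral _ _))) 4 (by norm_num)
  have countable_u : u.Countable := hdisj.countable_of_nonempty_interior fun x _ =>
    (Metric.nonempty_ball.2 (by positivity)).mono Metric.ball_subset_interior_closedBall
  have hsub : {x | l < maxFn μ φ x} ⊆ ⋃ x ∈ u, Metric.closedBall x (4 * 2 ^ k x) := fun x hx =>
    let ⟨y, hy, hxy⟩ := hcover x hx
    Set.mem_biUnion hy (hxy (Metric.mem_closedBall_self (by positivity)))
  calc l * μ {x | l < maxFn μ φ x}
      ≤ l * ∑' x : u, μ (Metric.closedBall (x : E) (4 * 2 ^ k x)) :=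
        mul_le_mul_right ((measure_mono hsub).trans (measure_biUnion_le _ countable_u _)) _
    _ = 4 ^ finrank ℝ E * ∑' x : u, l * μ (Metric.closedBall (x : E) (2 ^ k x)) := by
        rw [← ENNReal.tsum_mul_left, ← ENNReal.tsum_mul_left]
        refine tsum_congr fun x => ?_
        rw [Measure.addHaar_closedBall_mul μ (x : E) (by norm_num) (by positivity),
          Measure.addHaar_closedBall_center μ (x : E) (2 ^ k x), ENNReal.ofReal_pow (by norm_num),
          ENNReal.ofReal_ofNat, mul_left_comm]
    _ ≤ 4 ^ finrank ℝ E * ∑' x : u, ∫⁻ y in Metric.closedBall (x : E) (2 ^ k x), φ y ∂μ :=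
        mul_le_mul_right (ENNReal.tsum_le_tsum fun x : u => hk x (hu x.2)) _
    _ = 4 ^ finrank ℝ E * ∫⁻ y in ⋃ x ∈ u, Metric.closedBall x (2 ^ k x), φ y ∂μ :=
        congrArg _ (lintegral_biUnion countable_u
          (fun _ _ => Metric.isClosed_closedBall.measurableSet) hdisj _).symm
    _ ≤ _ := mul_le_mul_right (setLIntegral_le_lintegral _ _) _

lemma lintegral_maxFn_sq_le {φ : E → ℝ≥0∞} (hφ : Measurable φ) :
    ∫⁻ x, maxFn μ φ x ^ 2 ∂μ ≤ 8 * 4 ^ finrank ℝ E * ∫⁻ x, φ x ^ 2 ∂μ := by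
  refine (lintegral_sq_le_of_weak_type hφ (measurable_maxFn hφ) (K := 2 * 4 ^ finrank ℝ E) (c := 2)
    (by finiteness) fun l hl => ?_).trans_eq (by ring)
  set S := {x | ENNReal.ofReal l < 2 * φ x}
  have hS : MeasurableSet S := measurableSet_lt measurable_const (by fun_prop)
  have two_mul_half : 2 * ENNReal.ofReal (l / 2) = ENNReal.ofReal l := by
    rw [← ENNReal.ofReal_ofNat 2, ← ENNReal.ofReal_mul two_pos.le, mul_div_cancel₀ _ two_ne_zero]
  have truncation_error (x : E) : φ x ≤ S.indicator φ x + ENNReal.ofReal (l / 2) := by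
    by_cases hx : x ∈ S
    · simp [hx]
    · have hle : 2 * φ x ≤ 2 * ENNReal.ofReal (l / 2) := two_mul_half ▸ not_lt.1 hx
      exact le_add_left ((ENNReal.mul_le_mul_iff_right two_ne_zero ofNat_ne_top).1 hle)
  have hsub : {x | ENNReal.ofReal l < maxFn μ φ x} ⊆
      {x | ENNReal.ofReal (l / 2) < maxFn μ (S.indicator φ) x} := by
    intro x hx
    by_contra! hle
    refine (hx.trans_le (maxFn_le_add (hφ.indicator hS) truncation_error x)).not_ge ?_
    rw [← two_mul_half, two_mul]
    gcongr
    exact not_lt.1 hle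
  calc ENNReal.ofReal l * μ {x | ENNReal.ofReal l < maxFn μ φ x}
      ≤ 2 * (ENNReal.ofReal (l / 2) *
          μ {x | ENNReal.ofReal (l / 2) < maxFn μ (S.indicator φ) x}) := by
        rw [← mul_assoc, two_mul_half]
        gcongr
    _ ≤ 2 * (4 ^ finrank ℝ E * ∫⁻ x, S.indicator φ x ∂μ) := by
        exact mul_le_mul_right (mul_measure_lt_maxFn_le (S.indicator φ)
          (ENNReal.ofReal_pos.2 (half_pos hl)).ne') 2
    _ = _ := by rw [lintegral_indicator hS, mul_assoc]

end MaximalFunction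

section RadialDuality

variable {E : Type*} [NormedAddCommGroup E] [MeasurableSpace E] {μ : Measure E}

lemma IsRadial.measure_eq_zero_of_forall_radial {w : E → ℂ} (hw : Measurable w)
    (hrad : IsRadial w) {C : ℝ≥0∞} (hdual : ∀ g : E → ℂ, Measurable g → Integrable g μ →
      IsRadial g → ‖∫ x, w x * g x ∂μ‖ₑ ≤ C * ∫⁻ x, ‖g x‖ₑ ∂μ)
    {A : Set E} (hA : MeasurableSet A) (hA_rad : IsRadial (· ∈ A)) (hA_fin : μ A ≠ ⊤)
    {N : ℝ} (hwN : ∀ x ∈ A, ‖w x‖ ≤ N) (hCw : ∀ x ∈ A, C < ‖w x‖ₑ) : μ A = 0 := by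
  classical
  by_contra hpos
  have : IsFiniteMeasure (μ.restrict A) := ⟨by simpa using hA_fin.lt_top⟩
  have hmem {p : ℝ≥0∞} : MemLp w p (μ.restrict A) :=
    .of_bound hw.aestronglyMeasurable N ((ae_restrict_iff' hA).2 (.of_forall hwN))
  have hint : IntegrableOn w A μ := memLp_one_iff_integrable.1 hmem
  set g : E → ℂ := A.indicator fun x => starRingEnd ℂ (w x)
  have norm_g : ∫⁻ x, ‖g x‖ₑ ∂μ = ∫⁻ x in A, ‖w x‖ₑ ∂μ := by
    simp_rw [g, enorm_indicator_eq_indicator_enorm, RCLike.enorm_conj]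
    exact lintegral_indicator hA _
  have pairing : ‖∫ x, w x * g x ∂μ‖ₑ = ∫⁻ x in A, ‖w x‖ₑ ^ 2 ∂μ := by
    rw [lintegral_enorm_sq_eq hmem, ← integral_indicator hA]
    congr 2 with x
    simp only [g, Set.indicator_apply, mul_ite, mul_zero]
  have g_radial : IsRadial g := fun x y hxy => by
    have hmem_iff : (x ∈ A) = (y ∈ A) := hA_rad x y hxy
    simp only [g, Set.indicator_apply, hmem_iff, hrad x y hxy]
  have g_measurable : Measurable g := (RCLike.continuous_conj.measurable.comp hw).indicator hA
  have g_integrable : Integrable g μ := (integrable_indicator_iff hA).2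
    (hint.norm.mono' (RCLike.continuous_conj.measurable.comp hw).aestronglyMeasurable
      (.of_forall fun x => (RCLike.norm_conj _).le))
  have hle := hdual g g_measurable g_integrable g_radial
  rw [norm_g, pairing] at hle
  refine hle.not_gt ?_
  rw [← lintegral_const_mul _ hw.enorm]
  refine setLIntegral_strict_mono hA hpos (by fun_prop) ?_ (.of_forall fun x hx => ?_)
  · obtain ⟨x, hx⟩ := nonempty_of_measure_ne_zero hpos
    rw [lintegral_const_mul _ hw.enorm]
    exact ENNReal.mul_ne_top (hCw x hx).ne_top hint.2.ne
  · rw [sq]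
    exact (ENNReal.mul_lt_mul_iff_left (hCw x hx).ne_bot enorm_ne_top).2 (hCw x hx)

lemma IsRadial.eLpNorm_top_le_of_forall_radial [OpensMeasurableSpace E] [ProperSpace E]
    [IsFiniteMeasureOnCompacts μ] {w : E → ℂ} (hw : Measurable w) (hrad : IsRadial w) {C : ℝ≥0∞}
    (hdual : ∀ g : E → ℂ, Measurable g → Integrable g μ → IsRadial g →
      ‖∫ x, w x * g x ∂μ‖ₑ ≤ C * ∫⁻ x, ‖g x‖ₑ ∂μ) : eLpNorm w ⊤ μ ≤ C := by
  set A : ℕ → Set E := fun N => {x | C < ‖w x‖ₑ ∧ ‖w x‖ ≤ N ∧ ‖x‖ ≤ N}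
  have hA (N : ℕ) : MeasurableSet (A N) :=
    (measurableSet_lt measurable_const hw.enorm).inter
      ((measurableSet_le hw.norm measurable_const).inter
        (measurableSet_le measurable_norm measurable_const))
  have radial_A (N : ℕ) : IsRadial (· ∈ A N) := fun x y hxy => by
    simp only [A, Set.mem_ofPred_eq, hxy, hrad x y hxy]
  have finite_A (N : ℕ) : μ (A N) < ⊤ :=
    (measure_mono fun x hx => mem_closedBall_zero_iff.2 hx.2.2).trans_lt
      (measure_closedBall_lt_top (x := (0 : E)) (r := N))
  have null_A (N : ℕ) : μ (A N) = 0 :=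
    hrad.measure_eq_zero_of_forall_radial hw hdual (hA N) (radial_A N) (finite_A N).ne
      (fun x hx => hx.2.1) fun x hx => hx.1
  rw [eLpNorm_exponent_top]
  refine essSup_le_of_ae_le _ (measure_mono_null (fun x hx => ?_) (measure_iUnion_null null_A))
  obtain ⟨N, hN⟩ := exists_nat_ge (max ‖w x‖ ‖x‖)
  exact Set.mem_iUnion.2 ⟨N, not_le.1 hx, (le_max_left _ _).trans hN, (le_max_right _ _).trans hN⟩

end RadialDuality

section AxialAverages

lemma lintegral_euclidean_succ (m : ℕ) {f : ℝ → ℝ → ℝ≥0∞} (hf : Measurable (Function.uncurry f)) :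
    ∫⁻ y : EuclideanSpace ℝ (Fin (m + 1)), f (y 0) ‖y‖ =
      ∫⁻ u : ℝ, ∫⁻ z : EuclideanSpace ℝ (Fin m), f u √(u ^ 2 + ‖z‖ ^ 2) := by
  set g : ℝ × (Fin m → ℝ) → ℝ≥0∞ := fun p => f p.1 √(p.1 ^ 2 + ∑ i, p.2 i ^ 2)
  have hg : Measurable g :=
    hf.comp (f := fun p : ℝ × (Fin m → ℝ) => (p.1, √(p.1 ^ 2 + ∑ i, p.2 i ^ 2))) (by fun_prop)
  have slice (u : ℝ) : ∫⁻ z : EuclideanSpace ℝ (Fin m), f u √(u ^ 2 + ‖z‖ ^ 2) =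
      ∫⁻ w : Fin m → ℝ, g (u, w) := by
    rw [← (PiLp.volume_preserving_ofLp (Fin m)).lintegral_comp (f := fun w => g (u, w))
      (hg.comp measurable_prodMk_left)]
    simp only [g, EuclideanSpace.norm_sq_eq, Real.norm_eq_abs, sq_abs]
  simp only [slice]
  rw [← lintegral_prod _ hg.aemeasurable, ← Measure.volume_eq_prod,
    ← ((volume_preserving_piFinSuccAbove (fun _ : Fin (m + 1) => ℝ) 0).comp
      (PiLp.volume_preserving_ofLp (Fin (m + 1)))).lintegral_comp hg]
  refine lintegral_congr fun y => ?_
  rw [EuclideanSpace.norm_eq]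
  simp only [Real.norm_eq_abs, sq_abs, Fin.sum_univ_succ]
  rfl

lemma lintegral_pow_mul_comp_sqrt_le {k : ℕ} (ψ : ℝ → ℝ≥0∞) (u : ℝ) :
    ∫⁻ τ in Set.Ioi (0 : ℝ), ENNReal.ofReal (τ ^ (k + 1)) * ψ √(u ^ 2 + τ ^ 2) ≤
      ∫⁻ ρ in Set.Ioi |u|, ENNReal.ofReal (ρ ^ (k + 1)) * ψ ρ := by
  set Φ : ℝ → ℝ := fun τ => √(u ^ 2 + τ ^ 2)
  have hderiv (τ : ℝ) (hτ : τ ∈ Set.Ioi (0 : ℝ)) :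
      HasDerivWithinAt Φ (τ / Φ τ) (Set.Ioi 0) τ := by
    have hpos : u ^ 2 + τ ^ 2 ≠ 0 := by have : 0 < τ := hτ; positivity
    refine ((((hasDerivAt_pow 2 τ).const_add (u ^ 2)).sqrt hpos).congr_deriv ?_).hasDerivWithinAt
    simp only [Nat.cast_ofNat, Nat.add_one_sub_one, pow_one, Φ]
    exact mul_div_mul_left _ _ two_ne_zero
  have hinj : Set.InjOn Φ (Set.Ioi 0) := fun a ha b hb hab => by
    rw [Real.sqrt_inj (by positivity) (by positivity), _root_.add_right_inj] at hab
    exact (pow_left_inj₀ (le_of_lt ha) (le_of_lt hb) two_ne_zero).1 hab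
  have himage : Φ '' Set.Ioi 0 ⊆ Set.Ioi |u| := by
    rintro _ ⟨τ, hτ, rfl⟩
    exact Real.lt_sqrt_of_sq_lt (by rw [sq_abs]; exact lt_add_of_pos_right _ (pow_pos hτ 2))
  calc ∫⁻ τ in Set.Ioi (0 : ℝ), ENNReal.ofReal (τ ^ (k + 1)) * ψ (Φ τ)
      ≤ ∫⁻ τ in Set.Ioi (0 : ℝ), ENNReal.ofReal |τ / Φ τ| *
          (ENNReal.ofReal (Φ τ ^ (k + 1)) * ψ (Φ τ)) := by
        refine setLIntegral_mono' measurableSet_Ioi fun τ (hτ : 0 < τ) => ?_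
        have hle : τ ≤ Φ τ := Real.le_sqrt_of_sq_le (le_add_of_nonneg_left (sq_nonneg u))
        have hpos : 0 < Φ τ := hτ.trans_le hle
        rw [← mul_assoc, ← ENNReal.ofReal_mul (abs_nonneg _), abs_of_pos (div_pos hτ hpos)]
        gcongr
        calc τ ^ (k + 1) = τ * τ ^ k := pow_succ' τ k
          _ ≤ τ * Φ τ ^ k := by gcongr
          _ = τ / Φ τ * Φ τ ^ (k + 1) := by field_simp; ring
    _ = ∫⁻ ρ in Φ '' Set.Ioi 0, ENNReal.ofReal (ρ ^ (k + 1)) * ψ ρ :=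
        (lintegral_image_eq_lintegral_abs_deriv_mul measurableSet_Ioi hderiv hinj
          fun ρ => ENNReal.ofReal (ρ ^ (k + 1)) * ψ ρ).symm
    _ ≤ _ := lintegral_mono_set himage

lemma lintegral_mul_setLIntegral_Ioi_abs {a b : ℝ → ℝ≥0∞} (ha : Measurable a) (hb : Measurable b) :
    ∫⁻ u, a u * ∫⁻ ρ in Set.Ioi |u|, b ρ =
      ∫⁻ ρ in Set.Ioi (0 : ℝ), b ρ * ∫⁻ u in Metric.ball 0 ρ, a u := by
  have hS : MeasurableSet {p : ℝ × ℝ | |p.1| < p.2} := measurableSet_lt (by fun_prop) (by fun_prop)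
  calc ∫⁻ u, a u * ∫⁻ ρ in Set.Ioi |u|, b ρ
      = ∫⁻ u, ∫⁻ ρ in Set.Ioi (0 : ℝ),
          {p : ℝ × ℝ | |p.1| < p.2}.indicator (fun p => a p.1 * b p.2) (u, ρ) := by
        refine lintegral_congr fun u => ?_
        rw [← lintegral_const_mul _ hb, ← Set.inter_eq_left.2 (Set.Ioi_subset_Ioi (abs_nonneg u)),
          ← setLIntegral_indicator measurableSet_Ioi]
        rfl
    _ = ∫⁻ ρ in Set.Ioi (0 : ℝ), ∫⁻ u,
          {p : ℝ × ℝ | |p.1| < p.2}.indicator (fun p => a p.1 * b p.2) (u, ρ) :=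
        lintegral_lintegral_swap (Measurable.indicator (by fun_prop) hS).aemeasurable
    _ = _ := by
        refine lintegral_congr fun ρ => ?_
        rw [← lintegral_const_mul _ ha, ← lintegral_indicator Metric.isOpen_ball.measurableSet]
        refine lintegral_congr fun u => ?_
        classical
        have mem_iff : u ∈ Metric.ball 0 ρ ↔ |u| < ρ := mem_ball_zero_iff
        simp only [Set.indicator_apply, Set.mem_ofPred_eq, mem_iff, mul_comm]

/-- Four times the ratio of the sphere areas in dimensions `m` and `m + 1`: the constant in the
maximal function bound for averages of `y ↦ φ (y 0)` against radial weights. -/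
noncomputable def axialConst (m : ℕ) : ℝ≥0∞ :=
  4 * (volume : Measure (EuclideanSpace ℝ (Fin m))).toSphere Set.univ /
    (volume : Measure (EuclideanSpace ℝ (Fin (m + 1)))).toSphere Set.univ

lemma lintegral_ball_comp_add_le_maxFn (φ : ℝ → ℝ≥0∞) (t : ℝ) {ρ : ℝ} (hρ : 0 < ρ) :
    ∫⁻ u in Metric.ball 0 ρ, φ (t + u) ≤ 4 * ENNReal.ofReal ρ * maxFn volume φ t := by
  have hshift : ∫⁻ u in Metric.ball 0 ρ, φ (t + u) = ∫⁻ u in Metric.ball t ρ, φ u := by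
    have hball : (t + ·) ⁻¹' Metric.ball t ρ = Metric.ball 0 ρ := by simp
    rw [← hball, (measurePreserving_add_left volume t).setLIntegral_comp_preimage_emb
      (measurableEmbedding_addLeft t)]
  calc ∫⁻ u in Metric.ball 0 ρ, φ (t + u) ≤ ∫⁻ u in Metric.closedBall t ρ, φ u :=
        hshift.trans_le (lintegral_mono_set Metric.ball_subset_closedBall)
    _ ≤ 2 ^ finrank ℝ ℝ * volume (Metric.closedBall t ρ) * maxFn volume φ t :=
        setLIntegral_closedBall_le_maxFn φ t hρ
    _ = 4 * ENNReal.ofReal ρ * maxFn volume φ t := by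
        rw [Module.finrank_self, pow_one, Real.volume_closedBall, ENNReal.ofReal_mul two_pos.le,
          ENNReal.ofReal_ofNat, ← mul_assoc]
        norm_num

lemma lintegral_comp_coord_mul_comp_norm_le {k : ℕ} {φ ψ : ℝ → ℝ≥0∞} (hφ : Measurable φ)
    (hψ : Measurable ψ) :
    ∫⁻ y : EuclideanSpace ℝ (Fin (k + 3)), φ (y 0) * ψ ‖y‖ ≤
      (∫⁻ ρ in Set.Ioi (0 : ℝ), ENNReal.ofReal (ρ ^ (k + 1)) * ψ ρ *
        ∫⁻ u in Metric.ball 0 ρ, φ u) *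
      (volume : Measure (EuclideanSpace ℝ (Fin (k + 2)))).toSphere Set.univ := by
  set σ := (volume : Measure (EuclideanSpace ℝ (Fin (k + 2)))).toSphere Set.univ
  calc ∫⁻ y : EuclideanSpace ℝ (Fin (k + 3)), φ (y 0) * ψ ‖y‖
      = ∫⁻ u, φ u * ∫⁻ z : EuclideanSpace ℝ (Fin (k + 2)), ψ √(u ^ 2 + ‖z‖ ^ 2) := by
        rw [lintegral_euclidean_succ (k + 2) (f := fun u ρ => φ u * ψ ρ) (by fun_prop)]
        exact lintegral_congr fun u => lintegral_const_mul _ (by fun_prop)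
    _ = ∫⁻ u, φ u * (∫⁻ τ in Set.Ioi (0 : ℝ),
          ENNReal.ofReal (τ ^ (k + 1)) * ψ √(u ^ 2 + τ ^ 2)) * σ := by
        refine lintegral_congr fun u => ?_
        rw [lintegral_comp_norm_eq (φ := fun τ => ψ √(u ^ 2 + τ ^ 2)) (by fun_prop),
          finrank_euclideanSpace_fin, mul_assoc]
        rfl
    _ ≤ ∫⁻ u, φ u * (∫⁻ ρ in Set.Ioi |u|, ENNReal.ofReal (ρ ^ (k + 1)) * ψ ρ) * σ :=
        lintegral_mono fun u => mul_le_mul_left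
          (mul_le_mul_right (lintegral_pow_mul_comp_sqrt_le ψ u) _) _
    _ = _ := by
        rw [lintegral_mul_const' _ _ (measure_ne_top _ _),
          lintegral_mul_setLIntegral_Ioi_abs hφ (by fun_prop)]

lemma lintegral_comp_add_coord_mul_comp_norm_le {k : ℕ} {φ ψ : ℝ → ℝ≥0∞} (hφ : Measurable φ)
    (hψ : Measurable ψ) (t : ℝ) :
    ∫⁻ y : EuclideanSpace ℝ (Fin (k + 3)), φ (t + y 0) * ψ ‖y‖ ≤
      axialConst (k + 2) * maxFn volume φ t * ∫⁻ y : EuclideanSpace ℝ (Fin (k + 3)), ψ ‖y‖ := by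
  set σ := (volume : Measure (EuclideanSpace ℝ (Fin (k + 2)))).toSphere Set.univ
  set σ' := (volume : Measure (EuclideanSpace ℝ (Fin (k + 3)))).toSphere Set.univ
  have hσ' : σ'⁻¹ * σ' = 1 :=
    ENNReal.inv_mul_cancel toSphere_univ_ne_zero (measure_ne_top _ _)
  calc ∫⁻ y : EuclideanSpace ℝ (Fin (k + 3)), φ (t + y 0) * ψ ‖y‖
      ≤ (∫⁻ ρ in Set.Ioi (0 : ℝ), ENNReal.ofReal (ρ ^ (k + 1)) * ψ ρ *
          ∫⁻ u in Metric.ball 0 ρ, φ (t + u)) * σ :=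
        lintegral_comp_coord_mul_comp_norm_le (φ := fun u => φ (t + u)) (by fun_prop) hψ
    _ ≤ (∫⁻ ρ in Set.Ioi (0 : ℝ), 4 * maxFn volume φ t *
          (ENNReal.ofReal (ρ ^ (k + 2)) * ψ ρ)) * σ := by
        refine mul_le_mul_left (setLIntegral_mono' measurableSet_Ioi fun ρ (hρ : 0 < ρ) => ?_) σ
        refine (mul_le_mul_right (lintegral_ball_comp_add_le_maxFn φ t hρ) _).trans_eq ?_
        rw [pow_succ ρ (k + 1), ENNReal.ofReal_mul (by positivity)]
        ring
    _ = 4 * maxFn volume φ t * (∫⁻ ρ in Set.Ioi (0 : ℝ),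
          ENNReal.ofReal (ρ ^ (k + 2)) * ψ ρ) * σ * (σ'⁻¹ * σ') := by
        rw [lintegral_const_mul _ (by fun_prop), hσ', mul_one]
    _ = axialConst (k + 2) * maxFn volume φ t * ((∫⁻ ρ in Set.Ioi (0 : ℝ),
          ENNReal.ofReal (ρ ^ (k + 2)) * ψ ρ) * σ') := by
        rw [axialConst, div_eq_mul_inv]
        ring
    _ = _ := by
        rw [lintegral_comp_norm_eq hψ, finrank_euclideanSpace_fin]
        rfl

end AxialAverages

section RadialPairing

variable {E : Type*} [NormedAddCommGroup E] [InnerProductSpace ℝ E]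

lemma phase_comm (x w : E) : phase x w = phase w x := by rw [phase, phase, real_inner_comm]

@[simp] lemma phase_zero_left (w : E) : phase 0 w = 1 := by simp [phase]

lemma phase_smul_right (x e : E) (ρ : ℝ) : phase x (ρ • e) = phase ⟪x, e⟫ ρ := by
  rw [phase, phase, inner_smul_right, RCLike.inner_apply, conj_trivial]

lemma integral_mul_integral_swap {X Y : Type*} [MeasurableSpace X] [MeasurableSpace Y]
    {μ : Measure X} {ν : Measure Y} [SFinite μ] [SFinite ν] {g : X → ℂ} {h : Y → ℂ}
    (hg : Integrable g μ) (hh : Integrable h ν) {P : X → Y → ℂ}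
    (hP : Measurable (Function.uncurry P)) (hP_norm : ∀ x y, ‖P x y‖ = 1) :
    ∫ x, g x * (∫ y, P x y * h y ∂ν) ∂μ = ∫ y, (∫ x, g x * P x y ∂μ) * h y ∂ν := by
  simp_rw [← integral_const_mul, ← integral_mul_const, mul_assoc]
  refine integral_integral_swap (f := fun x y => g x * (P x y * h y)) ?_
  refine (Integrable.bdd_mul (c := 1) (hg.mul_prod hh) hP.aestronglyMeasurable
    (.of_forall fun z => (hP_norm z.1 z.2).le)).congr (.of_forall fun z => ?_)
  exact mul_left_comm _ _ _

variable [FiniteDimensional ℝ E] [MeasurableSpace E] [BorelSpace E]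

lemma IsRadial.integral_mul_phase {g : E → ℂ} (hg : IsRadial g) {e : E} (he : ‖e‖ = 1) (ξ : E) :
    ∫ y, g y * phase y ξ = ∫ y, g y * phase ⟪y, e⟫ ‖ξ‖ := by
  have eq_wave (ζ : E) : ∫ y, g y * phase y ζ = wave g 0 ζ := by
    simp only [wave, phase_zero_left, mul_one, phase_comm ζ, mul_comm (g _)]
  rw [eq_wave, (hg.wave 0).eq_norm_smul he, ← eq_wave]
  simp only [phase_smul_right]

lemma IsRadial.integral_mul_wave {g h : E → ℂ} (hg : IsRadial g) (hgi : Integrable g)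
    (hhi : Integrable h) {e : E} (he : ‖e‖ = 1) (t : ℝ) :
    ∫ y, g y * wave h t y = ∫ y, g y * wave h (t + ⟪y, e⟫) 0 := by
  have measurable_left : Measurable (Function.uncurry fun y ξ : E => phase y ξ * phase t ‖ξ‖) := by
    unfold Function.uncurry phase
    fun_prop
  have measurable_right : Measurable
      (Function.uncurry fun y ξ : E => phase (0 : E) ξ * phase (t + ⟪y, e⟫) ‖ξ‖) := by
    unfold Function.uncurry phase
    fun_prop
  unfold wave
  rw [integral_mul_integral_swap hgi hhi measurable_left (by simp),
    integral_mul_integral_swap hgi hhi measurable_right (by simp)]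
  refine integral_congr_ae (.of_forall fun ξ => ?_)
  simp only [phase_zero_left, one_mul, phase_add_left, ← mul_assoc, integral_mul_const,
    mul_right_comm _ (phase t ‖ξ‖), hg.integral_mul_phase he]

lemma measurable_wave_zero {h : E → ℂ} (hm : Measurable h) : Measurable fun τ => wave h τ 0 :=
  (measurable_wave hm).comp (g := Function.uncurry (wave h)) (f := fun τ => (τ, (0 : E)))
    (by fun_prop)

end RadialPairing

section TraceAtOrigin

variable {E : Type*} [NormedAddCommGroup E] [InnerProductSpace ℝ E]

/-- The density on `ℝ` that a radial function `h` with profile along the unit vector `e` acquires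
in polar coordinates: `ρ ^ (n - 1) * h (ρ • e)` for `ρ > 0`, and zero for `ρ ≤ 0`. -/
noncomputable def polarDensity (h : E → ℂ) (e : E) : ℝ → ℂ :=
  (Set.Ioi 0).indicator fun ρ => (ρ ^ (finrank ℝ E - 1) : ℝ) • h (ρ • e)

variable [MeasurableSpace E] [BorelSpace E] {h : E → ℂ} {e : E}

lemma measurable_polarDensity (hm : Measurable h) (e : E) : Measurable (polarDensity h e) :=
  Measurable.indicator (by fun_prop) measurableSet_Ioi

variable [FiniteDimensional ℝ E]

lemma integrable_polarDensity [Nontrivial E] (hh : IsData h) (he : ‖e‖ = 1) :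
    Integrable (polarDensity h e) :=
  (integrable_indicator_iff measurableSet_Ioi).2
    ((integrable_fun_norm_addHaar (volume : Measure E) (f := fun ρ => h (ρ • e))).1
      (hh.integrable.congr (.of_forall fun x => hh.radial.eq_norm_smul he x)))

lemma wave_zero_eq_smul_wave_polarDensity [Nontrivial E] (hr : IsRadial h) (he : ‖e‖ = 1) (τ : ℝ) :
    wave h τ 0 = (finrank ℝ E * volume.real (Metric.ball (0 : E) 1)) •
      wave (polarDensity h e) 0 τ := by
  have radial_integrand : wave h τ 0 = ∫ ξ : E, phase τ ‖ξ‖ * h (‖ξ‖ • e) := by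
    simp only [wave, phase_zero_left, one_mul, ← hr.eq_norm_smul he]
  rw [radial_integrand, integral_fun_norm_addHaar volume fun ρ => phase τ ρ * h (ρ • e), mul_smul,
    Nat.cast_smul_eq_nsmul, wave, ← integral_indicator measurableSet_Ioi]
  refine congrArg _ (congrArg _ (integral_congr_ae (.of_forall fun ρ => ?_)))
  by_cases hρ : ρ ∈ Set.Ioi (0 : ℝ)
  · simp [polarDensity, hρ]
    ring
  · simp [polarDensity, hρ]

lemma toSphere_mul_lintegral_polarDensity_sq [Nontrivial E] (hm : Measurable h) (hr : IsRadial h)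
    (he : ‖e‖ = 1) :
    (volume : Measure E).toSphere Set.univ * ∫⁻ ρ, ‖polarDensity h e ρ‖ₑ ^ 2 =
      sobNorm ((finrank ℝ E - 1 : ℝ) / 2) h ^ 2 := by
  set φ : ℝ → ℝ≥0∞ := fun ρ =>
    ‖(ρ ^ ((finrank ℝ E - 1 : ℝ) / 2) : ℝ) • h (ρ • e)‖ₑ ^ 2
  have hsob : sobNorm ((finrank ℝ E - 1 : ℝ) / 2) h ^ 2 = ∫⁻ ξ : E, φ ‖ξ‖ := by
    simp only [sobNorm_sq, φ, ← hr.eq_norm_smul he]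
  rw [hsob, lintegral_comp_norm_eq (by fun_prop), mul_comm, ← lintegral_indicator measurableSet_Ioi]
  refine congrArg (· * _) (lintegral_congr fun ρ => ?_)
  by_cases hρ : ρ ∈ Set.Ioi (0 : ℝ)
  · have hρ_pos : 0 < ρ := hρ
    have hexp : (ρ ^ (finrank ℝ E - 1)) ^ 2 =
        ρ ^ (finrank ℝ E - 1) * (ρ ^ ((finrank ℝ E - 1 : ℝ) / 2)) ^ 2 := by
      rw [sq (ρ ^ (finrank ℝ E - 1)), ← Real.rpow_mul_natCast hρ_pos.le, Nat.cast_ofNat,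
        div_mul_cancel₀ _ two_ne_zero, ← natCast_finrank_sub_one, Real.rpow_natCast]
    simp only [polarDensity, Set.indicator_of_mem hρ, φ, enorm_smul, mul_pow, ← mul_assoc]
    rw [Real.enorm_of_nonneg (by positivity), Real.enorm_of_nonneg (by positivity),
      ← ENNReal.ofReal_pow (by positivity), ← ENNReal.ofReal_pow (by positivity), hexp,
      ENNReal.ofReal_mul (by positivity)]
  · simp [polarDensity, hρ]

variable (E) in
lemma exists_lintegral_wave_zero_sq_le [Nontrivial E] :
    ∃ K : ℝ≥0∞, K ≠ ⊤ ∧ ∀ h : E → ℂ, IsData h →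
      ∫⁻ τ, ‖wave h τ 0‖ₑ ^ 2 ≤ K * sobNorm ((finrank ℝ E - 1 : ℝ) / 2) h ^ 2 := by
  set S := (volume : Measure E).toSphere Set.univ
  set c : ℝ := finrank ℝ E * volume.real (Metric.ball (0 : E) 1)
  have hS : S ≠ 0 := toSphere_univ_ne_zero
  obtain ⟨e, he⟩ := exists_norm_eq E zero_le_one
  refine ⟨‖c‖ₑ ^ 2 * S⁻¹, by finiteness, fun h hh => ?_⟩
  have hm := measurable_polarDensity hh.measurable e
  calc ∫⁻ τ, ‖wave h τ 0‖ₑ ^ 2 = ‖c‖ₑ ^ 2 * ∫⁻ τ, ‖wave (polarDensity h e) 0 τ‖ₑ ^ 2 := by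
        rw [← lintegral_const_mul _ ((measurable_wave_right hm 0).enorm.pow_const 2)]
        simp only [wave_zero_eq_smul_wave_polarDensity hh.radial he, enorm_smul, mul_pow, c]
    _ ≤ ‖c‖ₑ ^ 2 * ∫⁻ ρ, ‖polarDensity h e ρ‖ₑ ^ 2 :=
        mul_le_mul_right (lintegral_wave_sq_le hm (integrable_polarDensity hh he) 0) _
    _ = ‖c‖ₑ ^ 2 * S⁻¹ * (S * ∫⁻ ρ, ‖polarDensity h e ρ‖ₑ ^ 2) := by
        rw [mul_assoc, ENNReal.inv_mul_cancel_left hS (measure_ne_top _ _)]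
    _ = _ := by rw [toSphere_mul_lintegral_polarDensity_sq hh.measurable hh.radial he]

end TraceAtOrigin

section Endpoint

variable {k : ℕ} {h : EuclideanSpace ℝ (Fin (k + 3)) → ℂ}

lemma enorm_integral_wave_mul_le_maxFn (hh : IsData h) (t : ℝ)
    {g : EuclideanSpace ℝ (Fin (k + 3)) → ℂ} (hg : IsRadial g) (hgm : Measurable g)
    (hgi : Integrable g) :
    ‖∫ y, wave h t y * g y‖ₑ ≤
      axialConst (k + 2) * maxFn volume (fun τ => ‖wave h τ 0‖ₑ) t * ∫⁻ y, ‖g y‖ₑ := by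
  obtain ⟨e, he, inner_e⟩ : ∃ e : EuclideanSpace ℝ (Fin (k + 3)), ‖e‖ = 1 ∧ ∀ y, ⟪y, e⟫ = y 0 :=
    ⟨EuclideanSpace.single 0 1, by simp, by simp [EuclideanSpace.inner_single_right]⟩
  have hpair : ∫ y, wave h t y * g y = ∫ y, g y * wave h (t + y 0) 0 := by
    simp_rw [mul_comm (wave h t _), hg.integral_mul_wave hgi hh.integrable he, inner_e]
  have htrace := (measurable_wave_zero hh.measurable).enorm
  have hprofile : Measurable fun ρ : ℝ => ‖g (ρ • e)‖ₑ := by fun_prop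
  calc ‖∫ y, wave h t y * g y‖ₑ
      ≤ ∫⁻ y : EuclideanSpace ℝ (Fin (k + 3)), ‖wave h (t + y 0) 0‖ₑ * ‖g (‖y‖ • e)‖ₑ := by
        rw [hpair]
        refine (enorm_integral_le_lintegral_enorm _).trans_eq (lintegral_congr fun y => ?_)
        rw [enorm_mul, mul_comm, ← hg.eq_norm_smul he]
    _ ≤ axialConst (k + 2) * maxFn volume (fun τ => ‖wave h τ 0‖ₑ) t *
          ∫⁻ y : EuclideanSpace ℝ (Fin (k + 3)), ‖g (‖y‖ • e)‖ₑ :=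
        lintegral_comp_add_coord_mul_comp_norm_le htrace hprofile t
    _ = _ := by simp_rw [← hg.eq_norm_smul he]

lemma eLpNorm_wave_top_le_maxFn (hh : IsData h) (t : ℝ) :
    eLpNorm (wave h t) ⊤ ≤ axialConst (k + 2) * maxFn volume (fun τ => ‖wave h τ 0‖ₑ) t :=
  (hh.radial.wave t).eLpNorm_top_le_of_forall_radial (measurable_wave_right hh.measurable t)
    fun _ hgm hgi hg => enorm_integral_wave_mul_le_maxFn hh t hg hgm hgi

lemma halfWaveBound_two_top (k : ℕ) :
    HalfWaveBound (EuclideanSpace ℝ (Fin (k + 3))) 2 ⊤ ((k + 2 : ℝ) / 2) := by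
  obtain ⟨K, hK, trace_le⟩ := exists_lintegral_wave_zero_sq_le (EuclideanSpace ℝ (Fin (k + 3)))
  have ha : axialConst (k + 2) ≠ ⊤ :=
    ENNReal.div_ne_top (by finiteness) toSphere_univ_ne_zero
  have hs : ((finrank ℝ (EuclideanSpace ℝ (Fin (k + 3))) : ℝ) - 1) / 2 = (k + 2 : ℝ) / 2 := by
    rw [finrank_euclideanSpace_fin]
    push_cast
    ring
  rw [hs] at trace_le
  refine ⟨axialConst (k + 2) * (32 * K) ^ (1 / 2 : ℝ), by finiteness, fun h hh =>
    ⟨_, ?_, eLpNorm_wave_top_le_maxFn hh, ?_⟩⟩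
  · exact (measurable_maxFn (measurable_wave_zero hh.measurable).enorm).const_mul _
  have trace_meas := (measurable_wave_zero hh.measurable).enorm
  refine (eLpNorm_const_mul_le ha _ _).trans ?_
  rw [mul_assoc]
  refine mul_le_mul_right (le_rpow_half_mul_of_sq_le ?_) _
  calc eLpNorm (maxFn volume fun τ => ‖wave h τ 0‖ₑ) 2 volume ^ 2
      = ∫⁻ t, maxFn volume (fun τ => ‖wave h τ 0‖ₑ) t ^ 2 := by
        simp only [eLpNorm_two_sq, enorm_eq_self]
    _ ≤ 8 * 4 ^ finrank ℝ ℝ * ∫⁻ τ, ‖wave h τ 0‖ₑ ^ 2 := lintegral_maxFn_sq_le trace_meas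
    _ ≤ 8 * 4 ^ finrank ℝ ℝ * (K * sobNorm ((k + 2 : ℝ) / 2) h ^ 2) :=
        mul_le_mul_right (trace_le h hh) _
    _ = 32 * K * sobNorm ((k + 2 : ℝ) / 2) h ^ 2 := by
        rw [Module.finrank_self, ← mul_assoc]
        norm_num

end Endpoint

section Admissible

lemma toReal_lt_of_strict_admissible {n : ℕ} (hn : 1 ≤ n) {q r : ℝ≥0∞} (hq : q ≠ 0) (hr : r ≠ 0)
    (hlt : 1 / q + ((n : ℝ≥0∞) - 1) / r < ((n : ℝ≥0∞) - 1) / 2) :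
    1 / q.toReal + (n - 1 : ℝ) / r.toReal < (n - 1 : ℝ) / 2 := by
  have natCast_sub_one : ((n : ℝ≥0∞) - 1).toReal = (n - 1 : ℝ) := by
    rw [ENNReal.toReal_sub_of_le (by exact_mod_cast hn) (by finiteness), ENNReal.toReal_natCast,
      ENNReal.toReal_one]
  have hsub : (n : ℝ≥0∞) - 1 ≠ ⊤ := by finiteness
  have hreal := ENNReal.toReal_strict_mono (ENNReal.div_ne_top hsub two_ne_zero) hlt
  rwa [ENNReal.toReal_add (ENNReal.div_ne_top one_ne_top hq) (ENNReal.div_ne_top hsub hr),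
    ENNReal.toReal_div, ENNReal.toReal_div, ENNReal.toReal_div, natCast_sub_one,
    ENNReal.toReal_one, ENNReal.toReal_ofNat] at hreal

lemma halfWaveBound_of_strict_admissible_of_ne_top {n : ℕ} (hn : 2 ≤ n) {q r : ℝ≥0∞} {s : ℝ}
    (hq : 2 ≤ q) (hr : 2 ≤ r) (hr_top : r ≠ ⊤)
    (hadm : 1 / q.toReal + (n - 1 : ℝ) / r.toReal < (n - 1 : ℝ) / 2)
    (hscal : 1 / q.toReal + (n : ℝ) / r.toReal = (n : ℝ) / 2 - s) :
    HalfWaveBound (EuclideanSpace ℝ (Fin n)) q r s := by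
  have : Nonempty (Fin n) := ⟨⟨0, by omega⟩⟩
  have hr_lt : 2 < r := by
    refine lt_of_le_of_ne hr ?_
    rintro rfl
    rw [ENNReal.toReal_ofNat] at hadm
    have : 0 ≤ 1 / q.toReal := by positivity
    linarith
  refine halfWaveBound_of_ne_top hq hr_lt hr_top ?_ ?_ <;> rw [finrank_euclideanSpace_fin]
  · calc 2 / q.toReal = 2 * (1 / q.toReal) := by ring
      _ < 2 * ((n - 1 : ℝ) / 2 - (n - 1 : ℝ) / r.toReal) := by linarith
      _ = (n - 1 : ℝ) * (1 - 2 / r.toReal) := by ring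
  · exact hscal

lemma halfWaveBound_of_strict_admissible_top {n : ℕ} (hn : 2 ≤ n) {q : ℝ≥0∞} {s : ℝ}
    (hq : 2 ≤ q) (hq_top : q ≠ ⊤) (hadm : 1 / q.toReal < (n - 1 : ℝ) / 2)
    (hscal : 1 / q.toReal = (n : ℝ) / 2 - s) :
    HalfWaveBound (EuclideanSpace ℝ (Fin n)) q ⊤ s := by
  rcases hq.eq_or_lt with rfl | hq_lt
  · rw [ENNReal.toReal_ofNat] at hadm hscal
    have hn3 : 3 ≤ n := by
      have : (2 : ℝ) < n := by linarith
      exact_mod_cast this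
    obtain ⟨k, rfl⟩ := Nat.exists_eq_add_of_le' hn3
    have hs : s = (k + 2 : ℝ) / 2 := by
      push_cast at hscal
      linarith
    exact hs ▸ halfWaveBound_two_top k
  · have : Nonempty (Fin n) := ⟨⟨0, by omega⟩⟩
    refine halfWaveBound_of_top hq_lt hq_top ?_ ?_ <;> rw [finrank_euclideanSpace_fin]
    · calc 2 / q.toReal = 2 * (1 / q.toReal) := by ring
        _ < n - 1 := by linarith
    · exact hscal

lemma halfWaveBound_of_radWaveAdmissible {n : ℕ} {q r : ℝ≥0∞} {s : ℝ}
    (hadm : RadWaveAdmissible n q r)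
    (hscal : 1 / q.toReal + (n : ℝ) / r.toReal = (n : ℝ) / 2 - s) :
    HalfWaveBound (EuclideanSpace ℝ (Fin n)) q r s := by
  obtain ⟨hq, hr, ⟨not_top, hlt⟩ | ⟨rfl, rfl⟩⟩ := hadm
  · have hn : 2 ≤ n := by
      by_contra! hn
      have : (n : ℝ≥0∞) - 1 = 0 := tsub_eq_zero_of_le (by exact_mod_cast Nat.le_of_lt_succ hn)
      simp [this] at hlt
    have hlt_real := toReal_lt_of_strict_admissible (by omega) (two_pos.trans_le hq).ne'
      (two_pos.trans_le hr).ne' hlt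
    rcases eq_or_ne r ⊤ with rfl | hr_top
    · rw [ENNReal.toReal_top, _root_.div_zero, add_zero] at hlt_real hscal
      exact halfWaveBound_of_strict_admissible_top hn hq (fun hq_top => not_top ⟨hq_top, rfl⟩)
        hlt_real hscal
    · exact halfWaveBound_of_strict_admissible_of_ne_top hn hq hr hr_top hlt_real hscal
  · have hs : s = 0 := by
      rw [ENNReal.toReal_top, ENNReal.toReal_ofNat, _root_.div_zero] at hscal
      linarith
    exact hs ▸ halfWaveBound_infty_two _

end Admissible

section FreeWave

variable {E : Type*} [NormedAddCommGroup E]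

/-- The Fourier side of the operator `|D|⁻¹`, in the normalization `|D| ↔ 2π‖ξ‖`. -/
noncomputable def divTwoPiNorm (G : E → ℂ) (ξ : E) : ℂ := ((1 / (2 * π * ‖ξ‖) : ℝ) : ℂ) * G ξ

variable [InnerProductSpace ℝ E] [FiniteDimensional ℝ E] [MeasurableSpace E] [BorelSpace E]

/-- The free wave with Fourier data `F` (position) and `G` (velocity). -/
noncomputable def freeWave (F G : E → ℂ) (t : ℝ) (x : E) : ℂ :=
  ∫ ξ, Complex.exp (2 * π * ⟪x, ξ⟫ * Complex.I) * ((Real.cos (2 * π * t * ‖ξ‖) : ℂ) * F ξ +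
    ((Real.sin (2 * π * t * ‖ξ‖) / (2 * π * ‖ξ‖) : ℝ) : ℂ) * G ξ)

lemma IsData.const_mul_add {F G : E → ℂ} (hF : IsData F) (hG : IsData G) (a b : ℂ) :
    IsData fun ξ => a * F ξ + b * G ξ where
  measurable := (hF.measurable.const_mul a).add (hG.measurable.const_mul b)
  integrable := (hF.integrable.const_mul a).add (hG.integrable.const_mul b)
  radial x y hxy := by simp only [hF.radial x y hxy, hG.radial x y hxy]

lemma sobNorm_const_mul_add_le {F G : E → ℂ} (hF : Measurable F) (hG : Measurable G) (s : ℝ)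
    (a b : ℂ) :
    sobNorm s (fun ξ => a * F ξ + b * G ξ) ≤ ‖a‖ₑ * sobNorm s F + ‖b‖ₑ * sobNorm s G := by
  have split : (fun ξ => (‖ξ‖ ^ s : ℝ) • (a * F ξ + b * G ξ)) =
      a • (fun ξ => (‖ξ‖ ^ s : ℝ) • F ξ) + b • fun ξ => (‖ξ‖ ^ s : ℝ) • G ξ := by
    ext ξ
    simp only [Pi.add_apply, Pi.smul_apply, smul_eq_mul, Complex.real_smul]
    ring
  have hF' : Measurable fun ξ => (‖ξ‖ ^ s : ℝ) • F ξ := by fun_prop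
  have hG' : Measurable fun ξ => (‖ξ‖ ^ s : ℝ) • G ξ := by fun_prop
  rw [sobNorm, split, sobNorm, sobNorm, ← eLpNorm_const_smul, ← eLpNorm_const_smul]
  exact eLpNorm_add_le (hF'.const_smul a).aestronglyMeasurable
    (hG'.const_smul b).aestronglyMeasurable one_le_two

lemma sobNorm_divTwoPiNorm_le [Nontrivial E] (s : ℝ) (G : E → ℂ) :
    sobNorm s (divTwoPiNorm G) ≤ sobNorm (s - 1) G := by
  refine eLpNorm_mono_ae ?_
  filter_upwards [Measure.ae_ne volume (0 : E)] with ξ hξ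
  have hξ_pos : 0 < ‖ξ‖ := norm_pos_iff.2 hξ
  rw [divTwoPiNorm, norm_smul, norm_smul, norm_mul, Complex.norm_real, ← mul_assoc,
    norm_of_nonneg (by positivity), norm_of_nonneg (by positivity), norm_of_nonneg (by positivity),
    Real.rpow_sub_one hξ_pos.ne', div_eq_mul_one_div (‖ξ‖ ^ s)]
  gcongr
  nlinarith [pi_gt_three]

lemma sobNorm_half_mul_add_le [Nontrivial E] {F G : E → ℂ} (hF : Measurable F)
    (hG : Measurable (divTwoPiNorm G)) (s : ℝ) {c : ℂ} (hc : ‖c‖ = 1 / 2) :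
    sobNorm s (fun ξ => 1 / 2 * F ξ + c * divTwoPiNorm G ξ) ≤
      2⁻¹ * (sobNorm s F + sobNorm (s - 1) G) := by
  have enorm_half {z : ℂ} (hz : ‖z‖ = 1 / 2) : ‖z‖ₑ = 2⁻¹ := by
    rw [← ofReal_norm, hz, one_div, ENNReal.ofReal_inv_of_pos two_pos,
      ENNReal.ofReal_ofNat]
  refine (sobNorm_const_mul_add_le hF hG s (1 / 2) c).trans ?_
  rw [enorm_half hc, enorm_half (by norm_num), ← mul_add]
  gcongr
  exact sobNorm_divTwoPiNorm_le s G

lemma phase_real (t ρ : ℝ) : phase t ρ =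
    Complex.cos (2 * π * t * ρ : ℝ) + Complex.sin (2 * π * t * ρ : ℝ) * Complex.I := by
  rw [← Complex.exp_mul_I, phase, RCLike.inner_apply, conj_trivial, mul_comm ρ t, mul_assoc _ t ρ]

lemma freeWave_eq_wave_add_wave_neg {F G : E → ℂ} (hF : Integrable F)
    (hG : Integrable (divTwoPiNorm G)) (t : ℝ) :
    freeWave F G t =
      wave (fun ξ => 1 / 2 * F ξ + -Complex.I / 2 * divTwoPiNorm G ξ) t +
        wave (fun ξ => 1 / 2 * F ξ + Complex.I / 2 * divTwoPiNorm G ξ) (-t) := by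
  have hdata (c : ℂ) : Integrable fun ξ => 1 / 2 * F ξ + c * divTwoPiNorm G ξ :=
    (hF.const_mul _).add (hG.const_mul _)
  ext x
  rw [Pi.add_apply, wave, wave, ← integral_add (integrable_phase_mul (hdata _) t x)
    (integrable_phase_mul (hdata _) (-t) x)]
  refine integral_congr_ae (.of_forall fun ξ => ?_)
  have hx : Complex.exp (2 * π * ⟪x, ξ⟫ * Complex.I) = phase x ξ := by
    rw [phase]
    push_cast
    rfl
  have hneg : 2 * π * -t * ‖ξ‖ = -(2 * π * t * ‖ξ‖) := by ring
  simp only [divTwoPiNorm, hx, phase_real, hneg, Complex.ofReal_neg, Complex.cos_neg,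
    Complex.sin_neg, div_eq_mul_one_div (Real.sin _), Complex.ofReal_mul, Complex.ofReal_cos,
    Complex.ofReal_sin]
  ring_nf
  rw [Complex.I_sq]
  ring

lemma timeNorm_le_eLpNorm {q : ℝ≥0∞} (hq : q ≠ 0) {G Z : ℝ → ℝ≥0∞} (hGZ : ∀ t, G t ≤ Z t) :
    timeNorm q G ≤ eLpNorm Z q volume := by
  have timeNorm_eq : timeNorm q G = eLpNorm G q (volume.restrict (Set.Ioi 0)) := by
    unfold timeNorm
    split_ifs with hq_top
    · rw [hq_top, eLpNorm_exponent_top]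
      rfl
    · rw [eLpNorm_eq_lintegral_rpow_enorm_toReal hq hq_top]
      simp only [enorm_eq_self]
  rw [timeNorm_eq]
  exact (eLpNorm_mono_enorm hGZ).trans (eLpNorm_mono_measure _ Measure.restrict_le_self)

lemma HalfWaveBound.timeNorm_freeWave_le [Nontrivial E] {q r : ℝ≥0∞} {s : ℝ}
    (hbound : HalfWaveBound E q r s) (hq : 1 ≤ q) (hr : 1 ≤ r) :
    ∃ K : ℝ≥0∞, K ≠ ⊤ ∧ ∀ F G : E → ℂ, IsData F → IsData (divTwoPiNorm G) →
      timeNorm q (fun t => eLpNorm (freeWave F G t) r volume) ≤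
        K * (sobNorm s F + sobNorm (s - 1) G) := by
  obtain ⟨K, hK, wave_le⟩ := hbound
  refine ⟨K, hK, fun F G hF hG => ?_⟩
  set A : E → ℂ := fun ξ => 1 / 2 * F ξ + -Complex.I / 2 * divTwoPiNorm G ξ
  set B : E → ℂ := fun ξ => 1 / 2 * F ξ + Complex.I / 2 * divTwoPiNorm G ξ
  have hA : IsData A := hF.const_mul_add hG _ _
  have hB : IsData B := hF.const_mul_add hG _ _
  obtain ⟨Z, hZ, wave_le_Z, norm_Z⟩ := wave_le A hA
  obtain ⟨W, hW, wave_le_W, norm_W⟩ := wave_le B hB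
  have spatial_le (t : ℝ) : eLpNorm (freeWave F G t) r volume ≤ Z t + W (-t) := by
    rw [freeWave_eq_wave_add_wave_neg hF.integrable hG.integrable]
    exact (eLpNorm_add_le (measurable_wave_right hA.measurable t).aestronglyMeasurable
      (measurable_wave_right hB.measurable (-t)).aestronglyMeasurable hr).trans
        (add_le_add (wave_le_Z t) (wave_le_W (-t)))
  have norm_reflected : eLpNorm (fun t => W (-t)) q volume = eLpNorm W q volume :=
    eLpNorm_comp_measurePreserving hW.aestronglyMeasurable (Measure.measurePreserving_neg volume)
  calc timeNorm q (fun t => eLpNorm (freeWave F G t) r volume)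
      ≤ eLpNorm (fun t => Z t + W (-t)) q volume :=
        timeNorm_le_eLpNorm (one_pos.trans_le hq).ne' spatial_le
    _ ≤ eLpNorm Z q volume + eLpNorm W q volume :=
        (eLpNorm_add_le hZ.aestronglyMeasurable
          (hW.comp measurable_neg).aestronglyMeasurable hq).trans_eq (congrArg _ norm_reflected)
    _ ≤ K * (2⁻¹ * (sobNorm s F + sobNorm (s - 1) G)) +
          K * (2⁻¹ * (sobNorm s F + sobNorm (s - 1) G)) := by
        gcongr
        · exact norm_Z.trans (mul_le_mul_right
            (sobNorm_half_mul_add_le hF.measurable hG.measurable s (by norm_num)) K)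
        · exact norm_W.trans (mul_le_mul_right
            (sobNorm_half_mul_add_le hF.measurable hG.measurable s (by norm_num)) K)
    _ = K * (sobNorm s F + sobNorm (s - 1) G) := by
        rw [← mul_add, ← add_mul, ENNReal.inv_two_add_inv_two, one_mul]

end FreeWave

section SchwartzData

lemma exists_norm_schwartzMap_le {V : Type*} [NormedAddCommGroup V]
    [NormedSpace ℝ V] (g : SchwartzMap V ℂ) (k : ℕ) :
    ∃ C : ℝ, ∀ x, ‖g x‖ ≤ C * ((1 + ‖x‖) ^ k)⁻¹ := by
  refine ⟨2 ^ k * ((Finset.Iic (k, 0)).sup fun m => SchwartzMap.seminorm ℝ m.1 m.2) g,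
    fun x => ?_⟩
  have hdecay := SchwartzMap.one_add_le_sup_seminorm_apply (𝕜 := ℝ) (m := (k, 0)) le_rfl le_rfl g x
  rw [norm_iteratedFDeriv_zero] at hdecay
  rwa [← div_eq_mul_inv, le_div_iff₀ (by positivity), mul_comm]

variable {E : Type*} [NormedAddCommGroup E] [InnerProductSpace ℝ E] [FiniteDimensional ℝ E]
  [MeasurableSpace E] [BorelSpace E]

lemma IsRadial.fourier {f : E → ℂ} (hf : IsRadial f) : IsRadial (𝓕 f) := by
  intro x y hxy
  obtain ⟨L, rfl⟩ := exists_linearIsometryEquiv_apply_eq hxy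
  have hfL : f ∘ L = f := funext fun z => hf _ _ (L.norm_map z)
  rw [← Real.fourier_comp_linearIsometry L, hfL]

lemma IsRadial.isData_schwartz {f : SchwartzMap E ℂ} (hf : IsRadial f) : IsData f where
  measurable := f.continuous.measurable
  integrable := f.integrable
  radial := hf

lemma integrable_norm_inv_mul_one_add_norm_pow (hE : 2 ≤ finrank ℝ E) :
    Integrable fun ξ : E => ‖ξ‖⁻¹ * ((1 + ‖ξ‖) ^ finrank ℝ E)⁻¹ := by
  have : Nontrivial E := Module.nontrivial_of_finrank_pos (R := ℝ) (by omega)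
  refine (integrable_fun_norm_addHaar (volume : Measure E)
    (f := fun ρ : ℝ => ρ⁻¹ * ((1 + ρ) ^ finrank ℝ E)⁻¹)).2 ?_
  have hmaj : Integrable fun ρ : ℝ => (1 + ‖ρ‖) ^ (-(2 : ℝ)) :=
    integrable_one_add_norm (by norm_num)
  refine hmaj.integrableOn.mono' (by fun_prop) ?_
  filter_upwards [ae_restrict_mem measurableSet_Ioi] with ρ hρ
  have hρ_pos : 0 < ρ := hρ
  obtain ⟨k, hk⟩ := Nat.exists_eq_add_of_le hE
  rw [hk, norm_of_nonneg (by positivity), norm_of_nonneg hρ_pos.le, Real.rpow_neg (by positivity),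
    Real.rpow_two, smul_eq_mul, show 2 + k - 1 = k + 1 by omega]
  calc ρ ^ (k + 1) * (ρ⁻¹ * ((1 + ρ) ^ (2 + k))⁻¹) = ρ ^ k * ((1 + ρ) ^ (2 + k))⁻¹ := by
        field_simp
        ring
    _ ≤ (1 + ρ) ^ k * ((1 + ρ) ^ (2 + k))⁻¹ := by gcongr; linarith
    _ = ((1 + ρ) ^ 2)⁻¹ := by rw [pow_add]; field_simp

lemma IsRadial.isData_divTwoPiNorm (hE : 2 ≤ finrank ℝ E) {G : SchwartzMap E ℂ}
    (hG : IsRadial G) : IsData (divTwoPiNorm G) where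
  measurable := by
    have := G.continuous.measurable
    unfold divTwoPiNorm
    fun_prop
  integrable := by
    obtain ⟨C, hC⟩ := exists_norm_schwartzMap_le G (finrank ℝ E)
    have hm := G.continuous.measurable
    refine ((integrable_norm_inv_mul_one_add_norm_pow hE).const_mul C).mono'
      (Measurable.aestronglyMeasurable (by unfold divTwoPiNorm; fun_prop))
      (.of_forall fun ξ => ?_)
    have hle : 1 / (2 * π * ‖ξ‖) ≤ ‖ξ‖⁻¹ := by
      rw [one_div, mul_inv]
      refine mul_le_of_le_one_left (by positivity) (inv_le_one_of_one_le₀ ?_)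
      linarith [pi_gt_three]
    rw [divTwoPiNorm, norm_mul, Complex.norm_real, norm_of_nonneg (by positivity)]
    calc 1 / (2 * π * ‖ξ‖) * ‖G ξ‖ ≤ ‖ξ‖⁻¹ * (C * ((1 + ‖ξ‖) ^ finrank ℝ E)⁻¹) := by
          gcongr
          exact hC ξ
      _ = C * (‖ξ‖⁻¹ * ((1 + ‖ξ‖) ^ finrank ℝ E)⁻¹) := mul_left_comm _ _ _
  radial x y hxy := by rw [divTwoPiNorm, divTwoPiNorm, hxy, hG x y hxy]

lemma IsRadial.isData_fourier {f : SchwartzMap E ℂ} (hf : IsRadial f) : IsData (𝓕 ⇑f) := by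
  have hf_hat := hf.fourier
  rw [← SchwartzMap.fourier_coe] at hf_hat ⊢
  exact hf_hat.isData_schwartz

lemma IsRadial.isData_divTwoPiNorm_fourier (hE : 2 ≤ finrank ℝ E) {g : SchwartzMap E ℂ}
    (hg : IsRadial g) : IsData (divTwoPiNorm (𝓕 ⇑g)) := by
  have hg_hat := hg.fourier
  rw [← SchwartzMap.fourier_coe] at hg_hat ⊢
  exact hg_hat.isData_divTwoPiNorm hE

end SchwartzData

end RadialStrichartz

open RadialStrichartz in
theorem stmt_6_general {n : ℕ} (hn : 1 ≤ n) {q r : ℝ≥0∞} {s : ℝ} (hadm : RadWaveAdmissible n q r)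
    (hscal : 1 / q.toReal + (n : ℝ) / r.toReal = (n : ℝ) / 2 - s) :
    ∃ C : ℝ, 0 ≤ C ∧ ∀ F G : EuclideanSpace ℝ (Fin n) → ℂ, IsData F → IsData (divTwoPiNorm G) →
      timeNorm q (fun t => eLpNorm (freeWave F G t) r volume) ≤
        ENNReal.ofReal C * (sobNorm s F + sobNorm (s - 1) G) := by
  have : Nonempty (Fin n) := ⟨⟨0, hn⟩⟩
  obtain ⟨K, hK, freeWave_le⟩ :=
    (halfWaveBound_of_radWaveAdmissible hadm hscal).timeNorm_freeWave_le
      (one_le_two.trans hadm.1) (one_le_two.trans hadm.2.1)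
  exact ⟨K.toReal, ENNReal.toReal_nonneg, by rwa [ENNReal.ofReal_toReal hK]⟩

/-- **Homogeneous radial Strichartz estimate for the wave equation.**
For `n ≥ 2`, spherically symmetric Schwartz data `f, g` on `ℝⁿ`, a radially wave-admissible
pair `(q, r)` and `s` given by the scaling condition `1/q + n/r = n/2 - s`, the free wave
`u(t) = cos(t|D|) f + (sin(t|D|)/|D|) g` satisfies
`‖u‖_{L^q_t((0,∞)) L^r_x} ≲ ‖f‖_{Ḣ^s} + ‖g‖_{Ḣ^{s-1}}`. -/
theorem stmt_6 (n : ℕ) (hn : 2 ≤ n) (q r : ℝ≥0∞) (s : ℝ)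
    (hadm : RadWaveAdmissible n q r)
    (hscal : 1 / q.toReal + (n : ℝ) / r.toReal = (n : ℝ) / 2 - s) :
    ∃ C : ℝ, 0 ≤ C ∧
      ∀ f g : SchwartzMap (EuclideanSpace ℝ (Fin n)) ℂ,
        (∀ x y : EuclideanSpace ℝ (Fin n), ‖x‖ = ‖y‖ → f x = f y) →
        (∀ x y : EuclideanSpace ℝ (Fin n), ‖x‖ = ‖y‖ → g x = g y) →
        eLpNorm (fun ξ : EuclideanSpace ℝ (Fin n) => (‖ξ‖ ^ s : ℝ) • 𝓕 ⇑f ξ) 2 volume < ⊤ →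
        eLpNorm (fun ξ : EuclideanSpace ℝ (Fin n) => (‖ξ‖ ^ (s - 1) : ℝ) • 𝓕 ⇑g ξ) 2 volume < ⊤ →
        timeNorm q (fun t =>
            eLpNorm (fun x : EuclideanSpace ℝ (Fin n) =>
              ∫ ξ : EuclideanSpace ℝ (Fin n),
                Complex.exp (2 * Real.pi * ⟪x, ξ⟫ * Complex.I) *
                  ((Real.cos (2 * Real.pi * t * ‖ξ‖) : ℂ) * 𝓕 ⇑f ξ +
                    ((Real.sin (2 * Real.pi * t * ‖ξ‖) / (2 * Real.pi * ‖ξ‖) : ℝ) : ℂ) *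
                      𝓕 ⇑g ξ)) r volume)
          ≤ ENNReal.ofReal C *
            (eLpNorm (fun ξ : EuclideanSpace ℝ (Fin n) => (‖ξ‖ ^ s : ℝ) • 𝓕 ⇑f ξ) 2 volume +
              eLpNorm (fun ξ : EuclideanSpace ℝ (Fin n) =>
                (‖ξ‖ ^ (s - 1) : ℝ) • 𝓕 ⇑g ξ) 2 volume) := by
  obtain ⟨C, hC, freeWave_le⟩ := stmt_6_general (one_le_two.trans hn) hadm hscal
  exact ⟨C, hC, fun f g hf hg _ _ => freeWave_le _ _ (RadialStrichartz.IsRadial.isData_fourier hf)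
    (RadialStrichartz.IsRadial.isData_divTwoPiNorm_fourier (by simpa) hg)⟩
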